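/- Let n > 1, K ⊆ ℂⁿ compact polynomially convex, L ⊆ ℂᴺ compact polynomially convex, and f holomorphic on a neighbourhood U of L with f(L) ∩ K = ∅. Then there exist an open neighbourhood V ⊆ U of L and a holomorphic map F : V × ℂⁿ → ℂⁿ such that for every z ∈ V: F(z, 0) = f(z), the map ζ ↦ F(z, ζ) is injective, and F({z} × ℂⁿ) ∩ K = ∅. -/

import Mathlib

noncomputable section
open Set Metric MvPolynomial

/-- The polynomially convex hull of a set in `ℂⁿ`. -/
def polyHull {n : ℕ} (K : Set (EuclideanSpace ℂ (Fin n))) : Set (EuclideanSpace ℂ (Fin n)) :=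
  {z | ∀ p : MvPolynomial (Fin n) ℂ,
    ‖eval (fun i => z i) p‖ ≤ sSup ((fun w => ‖eval (fun i => w i) p‖) '' K)}

/-- A compact set in `ℂⁿ` is polynomially convex if it equals its polynomial hull. -/
def IsPolyConvex {n : ℕ} (K : Set (EuclideanSpace ℂ (Fin n))) : Prop :=
  polyHull K = K

/-- Polynomial hull for subsets of a product `ℂᴺ × ℂⁿ ≅ ℂ^{N+n}`, using polynomials in the
`N + n` coordinates. -/
def polyHull2 {N n : ℕ} (S : Set (EuclideanSpace ℂ (Fin N) × EuclideanSpace ℂ (Fin n))) :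
    Set (EuclideanSpace ℂ (Fin N) × EuclideanSpace ℂ (Fin n)) :=
  {z | ∀ p : MvPolynomial (Fin N ⊕ Fin n) ℂ,
    ‖eval (Sum.elim (fun i => z.1 i) (fun j => z.2 j)) p‖ ≤
      sSup ((fun w => ‖eval (Sum.elim (fun i => w.1 i) (fun j => w.2 j)) p‖) '' S)}

def IsPolyConvex2 {N n : ℕ} (S : Set (EuclideanSpace ℂ (Fin N) × EuclideanSpace ℂ (Fin n))) :
    Prop :=
  polyHull2 S = S

section SeveralVariables
open Filter Topology MeasureTheory

variable {E F : Type*} [NormedAddCommGroup E] [NormedSpace ℂ E]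
  [NormedAddCommGroup F] [NormedSpace ℂ F]

/-- Cauchy's estimate for the Fréchet derivative. -/
theorem norm_fderiv_le_of_forall_mem_ball {f : E → F} {x : E} {r M : ℝ} (hr : 0 < r)
    (hf : DifferentiableOn ℂ f (ball x r)) (hM : ∀ y ∈ ball x r, ‖f y‖ ≤ M) :
    ‖fderiv ℂ f x‖ ≤ 2 * M / r := by
  refine Complex.norm_fderiv_le_div_of_mapsTo_ball hf (fun y hy => ?_) hr
  rw [mem_closedBall, dist_eq_norm]
  calc ‖f y - f x‖ ≤ ‖f y‖ + ‖f x‖ := norm_sub_le _ _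
    _ ≤ 2 * M := by linarith [hM y hy, hM x (mem_ball_self hr)]

/-- A uniform limit of holomorphic maps of several variables is holomorphic. -/
theorem differentiableAt_of_tendstoUniformlyOn_ball [CompleteSpace F] {x : E} {r : ℝ}
    (hr : 0 < r) {f : ℕ → E → F} {g : E → F} (hf : ∀ n, DifferentiableOn ℂ (f n) (ball x r))
    (h : TendstoUniformlyOn f g atTop (ball x r)) : DifferentiableAt ℂ g x := by
  have hsub : ∀ y ∈ ball x (r / 2), ball y (r / 2) ⊆ ball x r := fun y hy =>
    ball_subset_ball' (by rw [mem_ball] at hy; linarith)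
  have hfd : ∀ n, ∀ y ∈ ball x r, DifferentiableAt ℂ (f n) y := fun n y hy =>
    (hf n).differentiableAt (isOpen_ball.mem_nhds hy)
  have hmem : ∀ y ∈ ball x (r / 2), y ∈ ball x r := fun y hy =>
    hsub y hy (mem_ball_self (half_pos hr))
  have hC : UniformCauchySeqOn (fun n => fderiv ℂ (f n)) atTop (ball x (r / 2)) := by
    rw [Metric.uniformCauchySeqOn_iff]
    intro ε hε
    obtain ⟨N, hN⟩ := (Metric.uniformCauchySeqOn_iff.1 h.uniformCauchySeqOn) (ε * r / 8)
      (by positivity)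
    refine ⟨N, fun m hm n hn y hy => ?_⟩
    have hyr := hmem y hy
    rw [dist_eq_norm, ← fderiv_sub (hfd m y hyr) (hfd n y hyr)]
    refine lt_of_le_of_lt (norm_fderiv_le_of_forall_mem_ball (half_pos hr) (M := ε * r / 8)
      (((hf m).sub (hf n)).mono (hsub y hy)) (fun w hw => ?_)) ?_
    · have := hN m hm n hn w (hsub y hy hw)
      rw [dist_eq_norm] at this
      exact this.le
    · rw [div_lt_iff₀ (by positivity)]
      nlinarith [mul_pos hε hr]
  choose! g' hg' using fun y (hy : y ∈ ball x (r / 2)) =>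
    cauchySeq_tendsto_of_complete (hC.cauchySeq hy)
  exact (hasFDerivAt_of_tendstoUniformlyOn isOpen_ball
    (hC.tendstoUniformlyOn_of_tendsto hg')
    (fun n y hy => (hfd n y (hmem y hy)).hasFDerivAt)
    (fun y hy => h.tendsto_at (hmem y hy)) (mem_ball_self (half_pos hr))).differentiableAt

/-- Holomorphic dependence of an integral on parameters. -/
theorem differentiableOn_intervalIntegral [FiniteDimensional ℂ E] [CompleteSpace F] {U : Set E}
    (hU : IsOpen U) {a b : ℝ} (hab : a ≤ b) {k : ℝ → E → F}
    (hk : ContinuousOn (Function.uncurry k) (Icc a b ×ˢ U))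
    (hd : ∀ t ∈ Icc a b, DifferentiableOn ℂ (k t) U) :
    DifferentiableOn ℂ (fun y => ∫ t in a..b, k t y) U := by
  have : ProperSpace E := FiniteDimensional.proper ℂ E
  intro x hx
  obtain ⟨r, hr, hrU⟩ := Metric.nhds_basis_closedBall.mem_iff.1 (hU.mem_nhds hx)
  have hcomp : IsCompact (Icc a b ×ˢ closedBall x r) :=
    isCompact_Icc.prod (isCompact_closedBall x r)
  have hk' : ContinuousOn (Function.uncurry k) (Icc a b ×ˢ closedBall x r) :=
    hk.mono (prod_mono_right hrU)
  obtain ⟨M, hM⟩ := hcomp.exists_bound_of_continuousOn hk'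
  have hsub : ∀ y ∈ ball x (r / 2), ball y (r / 2) ⊆ closedBall x r := fun y hy =>
    (ball_subset_ball' (by rw [mem_ball] at hy; linarith)).trans ball_subset_closedBall
  have hucc : uIoc a b ⊆ Icc a b := by rw [uIoc_of_le hab]; exact Ioc_subset_Icc_self
  have hcont : ∀ y ∈ U, ContinuousOn (fun t => k t y) (Icc a b) := fun y hy =>
    hk.comp (f := fun t => (t, y)) (by fun_prop) (fun t ht => ⟨ht, hy⟩)
  have hfc : ContinuousOn (fun t => fderiv ℂ (k t) x) (Icc a b) := by
    intro t₀ ht₀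
    rw [ContinuousWithinAt, Metric.tendsto_nhds]
    intro ε hε
    obtain ⟨δ, hδ, hδ'⟩ := Metric.uniformContinuousOn_iff.1
      (hcomp.uniformContinuousOn_of_continuous hk') (ε * r / 4) (by positivity)
    filter_upwards [self_mem_nhdsWithin, mem_nhdsWithin_of_mem_nhds (ball_mem_nhds t₀ hδ)]
      with t ht htδ
    have hxU : ∀ s ∈ Icc a b, DifferentiableAt ℂ (k s) x := fun s hs =>
      (hd s hs).differentiableAt (hU.mem_nhds hx)
    rw [dist_eq_norm, ← fderiv_sub (hxU t ht) (hxU t₀ ht₀)]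
    refine lt_of_le_of_lt (norm_fderiv_le_of_forall_mem_ball hr (M := ε * r / 4)
      (((hd t ht).sub (hd t₀ ht₀)).mono (ball_subset_closedBall.trans hrU)) (fun w hw => ?_)) ?_
    · have := hδ' (t, w) ⟨ht, ball_subset_closedBall hw⟩ (t₀, w) ⟨ht₀, ball_subset_closedBall hw⟩
        (by simpa [Prod.dist_eq] using htδ)
      rw [dist_eq_norm] at this
      exact this.le
    · rw [div_lt_iff₀ hr]
      nlinarith [mul_pos hε hr]
  refine (intervalIntegral.hasFDerivAt_integral_of_dominated_of_fderiv_le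
    (F' := fun y t => fderiv ℂ (k t) y) (bound := fun _ => 2 * M / (r / 2))
    (ball_mem_nhds x (half_pos hr)) ?_ ?_ ?_ ?_ ?_ ?_).differentiableAt.differentiableWithinAt
  · filter_upwards [hU.mem_nhds hx] with y hy
    exact ((hcont y hy).mono hucc).aestronglyMeasurable measurableSet_uIoc
  · exact (hcont x hx).intervalIntegrable_of_Icc hab
  · exact (hfc.mono hucc).aestronglyMeasurable measurableSet_uIoc
  · refine Eventually.of_forall fun t ht y hy => ?_
    exact norm_fderiv_le_of_forall_mem_ball (half_pos hr)
      ((hd t (hucc ht)).mono ((hsub y hy).trans hrU))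
      (fun w hw => hM (t, w) ⟨hucc ht, hsub y hy hw⟩)
  · exact intervalIntegrable_const
  · refine Eventually.of_forall fun t ht y hy => ?_
    exact ((hd t (hucc ht)).differentiableAt (hU.mem_nhds
      (hrU (hsub y hy (mem_ball_self (half_pos hr)))))).hasFDerivAt

end SeveralVariables

section RectangleCauchy
open Filter Topology MeasureTheory intervalIntegral Complex

theorem log_mul_I_sub_log {u : ℂ} (hu : 0 < u.re) : log (u * I) - log u = Real.pi / 2 * I := by
  have hu0 : u ≠ 0 := by rintro rfl; simp at hu
  have h := abs_lt.1 (abs_arg_lt_pi_div_two_iff.2 (Or.inl hu))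
  rw [(log_mul_eq_add_log_iff hu0 I_ne_zero).2 (by
    rw [arg_I]; constructor <;> linarith [h.1, h.2, Real.pi_pos]), log_I]
  ring

/-- The logarithmic integral along a segment, computed through a rotated branch of the logarithm. -/
theorem integral_inv_affine {c v m : ℂ} {s t : ℝ} (hm : m ≠ 0)
    (h : ∀ τ ∈ uIcc s t, 0 < ((c + τ * v) * m).re) :
    ∫ τ in s..t, v / (c + τ * v) = log ((c + t * v) * m) - log ((c + s * v) * m) := by
  have hne : ∀ τ ∈ uIcc s t, c + τ * v ≠ 0 := fun τ hτ h0 => by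
    have := h τ hτ
    rw [h0] at this
    simp at this
  refine integral_eq_sub_of_hasDerivAt (f := fun τ : ℝ => log ((c + τ * v) * m)) ?_ ?_
  · intro τ hτ
    have h1 : HasDerivAt (fun τ : ℝ => (c + τ * v) * m) (v * m) τ := by
      have h0 : HasDerivAt (fun τ : ℝ => (τ : ℂ)) 1 τ := ofRealCLM.hasDerivAt
      simpa using ((h0.mul_const v).const_add c).mul_const m
    have h2 := h1.clog_real (Or.inl (h τ hτ))
    rwa [mul_div_mul_right _ _ hm] at h2
  · refine ContinuousOn.intervalIntegrable ?_
    exact continuousOn_const.div (by fun_prop) hne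

variable {x₀ x₁ y₀ y₁ : ℝ} {z : ℂ}

/-- The winding number of the boundary of a rectangle about an interior point. -/
theorem integral_boundary_rect_inv_sub (hx₀ : x₀ < z.re) (hx₁ : z.re < x₁) (hy₀ : y₀ < z.im)
    (hy₁ : z.im < y₁) :
    (∫ x in x₀..x₁, 1 / ((x : ℂ) + y₀ * I - z)) - (∫ x in x₀..x₁, 1 / ((x : ℂ) + y₁ * I - z)) +
      I * (∫ y in y₀..y₁, 1 / ((x₁ : ℂ) + y * I - z)) -
      I * (∫ y in y₀..y₁, 1 / ((x₀ : ℂ) + y * I - z)) = 2 * Real.pi * I := by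
  have e1 : ∫ x in x₀..x₁, 1 / ((x : ℂ) + y₀ * I - z) =
      log ((x₁ + y₀ * I - z) * I) - log ((x₀ + y₀ * I - z) * I) := by
    have := integral_inv_affine (c := y₀ * I - z) (v := 1) (m := I) (s := x₀) (t := x₁) I_ne_zero
      (fun τ _ => by simp; linarith)
    convert this using 3 <;> ring_nf
  have e2 : ∫ x in x₀..x₁, 1 / ((x : ℂ) + y₁ * I - z) =
      log ((x₁ + y₁ * I - z) * (-I)) - log ((x₀ + y₁ * I - z) * (-I)) := by
    have := integral_inv_affine (c := y₁ * I - z) (v := 1) (m := -I) (s := x₀) (t := x₁)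
      (neg_ne_zero.2 I_ne_zero) (fun τ _ => by simp; linarith)
    convert this using 3 <;> ring_nf
  have e3 : I * ∫ y in y₀..y₁, 1 / ((x₁ : ℂ) + y * I - z) =
      log (x₁ + y₁ * I - z) - log (x₁ + y₀ * I - z) := by
    have := integral_inv_affine (c := x₁ - z) (v := I) (m := 1) (s := y₀) (t := y₁)
      one_ne_zero (fun τ _ => by simp; linarith)
    rw [← intervalIntegral.integral_const_mul]
    convert this using 3 <;> first | rfl | ring_nf
  have e4 : I * ∫ y in y₀..y₁, 1 / ((x₀ : ℂ) + y * I - z) =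
      log (-(x₀ + y₁ * I - z)) - log (-(x₀ + y₀ * I - z)) := by
    have := integral_inv_affine (c := x₀ - z) (v := I) (m := -1) (s := y₀) (t := y₁)
      (by simp) (fun τ _ => by simp; linarith)
    rw [← intervalIntegral.integral_const_mul]
    convert this using 3 <;> first | rfl | ring_nf
  rw [e1, e2, e3, e4]
  have c1 := log_mul_I_sub_log (u := x₁ + y₀ * I - z) (by simp; linarith)
  have c2 := log_mul_I_sub_log (u := (x₁ + y₁ * I - z) * (-I)) (by simp; linarith)
  have c3 := log_mul_I_sub_log (u := -(x₀ + y₁ * I - z)) (by simp; linarith)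
  have c4 := log_mul_I_sub_log (u := (x₀ + y₀ * I - z) * I) (by simp; linarith)
  have r2 : (x₁ + y₁ * I - z) * (-I) * I = x₁ + y₁ * I - z := by
    linear_combination (-(x₁ + y₁ * I - z)) * I_sq
  have r3 : -(x₀ + y₁ * I - z) * I = (x₀ + y₁ * I - z) * (-I) := by ring
  have r4 : (x₀ + y₀ * I - z) * I * I = -(x₀ + y₀ * I - z) := by
    linear_combination (x₀ + y₀ * I - z) * I_sq
  rw [r2] at c2
  rw [r3] at c3
  rw [r4] at c4
  linear_combination c1 + c2 + c3 + c4

/-- Cauchy's integral formula for a rectangle. -/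
theorem integral_boundary_rect_div_sub {g : ℂ → ℂ} (hx₀ : x₀ < z.re) (hx₁ : z.re < x₁)
    (hy₀ : y₀ < z.im) (hy₁ : z.im < y₁) (hg : DifferentiableOn ℂ g (Icc x₀ x₁ ×ℂ Icc y₀ y₁)) :
    (∫ x in x₀..x₁, g (x + y₀ * I) / ((x : ℂ) + y₀ * I - z)) -
      (∫ x in x₀..x₁, g (x + y₁ * I) / ((x : ℂ) + y₁ * I - z)) +
      I * (∫ y in y₀..y₁, g (x₁ + y * I) / ((x₁ : ℂ) + y * I - z)) -
      I * (∫ y in y₀..y₁, g (x₀ + y * I) / ((x₀ : ℂ) + y * I - z)) = 2 * Real.pi * I * g z := by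
  have hx : x₀ ≤ x₁ := by linarith
  have hy : y₀ ≤ y₁ := by linarith
  have hnhds : Icc x₀ x₁ ×ℂ Icc y₀ y₁ ∈ 𝓝 z :=
    inter_mem (continuous_re.continuousAt.preimage_mem_nhds (Icc_mem_nhds hx₀ hx₁))
      (continuous_im.continuousAt.preimage_mem_nhds (Icc_mem_nhds hy₀ hy₁))
  have key := integral_boundary_rect_eq_zero_of_differentiableOn (dslope g z)
    (x₀ + y₀ * I) (x₁ + y₁ * I) (by
      simpa [uIcc_of_le hx, uIcc_of_le hy] using (differentiableOn_dslope hnhds).2 hg)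
  have hstep : ∀ (γ : ℝ → ℂ) (s t : ℝ), s ≤ t → Continuous γ →
      (∀ τ ∈ Icc s t, γ τ ∈ Icc x₀ x₁ ×ℂ Icc y₀ y₁ ∧ γ τ ≠ z) →
      ∫ τ in s..t, dslope g z (γ τ) =
        (∫ τ in s..t, g (γ τ) / (γ τ - z)) - g z * ∫ τ in s..t, 1 / (γ τ - z) := by
    intro γ s t hst hγ h
    have hne : ∀ τ ∈ Icc s t, γ τ - z ≠ 0 := fun τ hτ => sub_ne_zero.2 (h τ hτ).2
    have hinv : ContinuousOn (fun τ => 1 / (γ τ - z)) (Icc s t) :=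
      continuousOn_const.div (by fun_prop) hne
    have hgc : ContinuousOn (fun τ => g (γ τ) / (γ τ - z)) (Icc s t) :=
      (hg.continuousOn.comp hγ.continuousOn fun τ hτ => (h τ hτ).1).div (by fun_prop) hne
    rw [← intervalIntegral.integral_const_mul, ← intervalIntegral.integral_sub
      (hgc.intervalIntegrable_of_Icc hst) ((hinv.intervalIntegrable_of_Icc hst).const_mul _)]
    refine integral_congr fun τ hτ => ?_
    rw [uIcc_of_le hst] at hτ
    have := hne τ hτ
    simp only [dslope_of_ne _ (h τ hτ).2, slope_def_field]
    field_simp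
  have him : ∀ x y : ℝ, (x + y * I : ℂ) ≠ z ↔ ¬ (x = z.re ∧ y = z.im) := fun x y => by
    rw [Ne, Complex.ext_iff]; simp
  have k1 := hstep (fun x => x + y₀ * I) x₀ x₁ hx (by fun_prop) fun τ hτ =>
    ⟨⟨by simpa using hτ, by simpa using hy⟩, (him _ _).2 fun h => hy₀.ne h.2⟩
  have k2 := hstep (fun x => x + y₁ * I) x₀ x₁ hx (by fun_prop) fun τ hτ =>
    ⟨⟨by simpa using hτ, by simpa using hy⟩, (him _ _).2 fun h => hy₁.ne' h.2⟩
  have k3 := hstep (fun y => x₁ + y * I) y₀ y₁ hy (by fun_prop) fun τ hτ =>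
    ⟨⟨by simpa using hx, by simpa using hτ⟩, (him _ _).2 fun h => hx₁.ne' h.1⟩
  have k4 := hstep (fun y => x₀ + y * I) y₀ y₁ hy (by fun_prop) fun τ hτ =>
    ⟨⟨by simpa using hx, by simpa using hτ⟩, (him _ _).2 fun h => hx₀.ne h.1⟩
  have w := integral_boundary_rect_inv_sub hx₀ hx₁ hy₀ hy₁
  simp only [add_re, ofReal_re, mul_re, I_re, mul_zero, ofReal_im, I_im, mul_one, sub_self,
    add_zero, add_im, mul_im, zero_add, smul_eq_mul] at key
  rw [k1, k2, k3, k4] at key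
  linear_combination key + g z * w

end RectangleCauchy

section OkaWeil
open Filter Topology MeasureTheory

/-- `f` is holomorphic in a neighbourhood of the set `s`. -/
def HolNear {E : Type*} [NormedAddCommGroup E] [NormedSpace ℂ E] (f : E → ℂ) (s : Set E) : Prop :=
  ∀ x ∈ s, ∀ᶠ y in 𝓝 x, DifferentiableAt ℂ f y

section HolNear

variable {E E' : Type*} [NormedAddCommGroup E] [NormedSpace ℂ E] [NormedAddCommGroup E']
  [NormedSpace ℂ E'] {f g : E → ℂ} {s t : Set E}

theorem HolNear.mono (hf : HolNear f t) (h : s ⊆ t) : HolNear f s := fun x hx => hf x (h hx)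

theorem HolNear.add (hf : HolNear f s) (hg : HolNear g s) : HolNear (fun x => f x + g x) s :=
  fun x hx => by filter_upwards [hf x hx, hg x hx] with y h₁ h₂ using h₁.add h₂

theorem HolNear.sub (hf : HolNear f s) (hg : HolNear g s) : HolNear (fun x => f x - g x) s :=
  fun x hx => by filter_upwards [hf x hx, hg x hx] with y h₁ h₂ using h₁.sub h₂

theorem HolNear.mul (hf : HolNear f s) (hg : HolNear g s) : HolNear (fun x => f x * g x) s :=
  fun x hx => by filter_upwards [hf x hx, hg x hx] with y h₁ h₂ using h₁.mul h₂

theorem Differentiable.holNear (hf : Differentiable ℂ f) : HolNear f s :=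
  fun _ _ => Eventually.of_forall fun y => hf y

theorem HolNear.const_mul (hf : HolNear f s) (c : ℂ) : HolNear (fun x => c * f x) s :=
  (differentiable_const c).holNear.mul hf

theorem HolNear.comp (hf : HolNear f s) {φ : E' → E} (hφ : Differentiable ℂ φ) {s' : Set E'}
    (h : MapsTo φ s' s) : HolNear (fun x => f (φ x)) s' := fun x hx => by
  filter_upwards [hφ.continuous.continuousAt.eventually (hf (φ x) (h hx))] with y hy
  exact hy.comp y (hφ y)

theorem HolNear.isOpen_setOf (f : E → ℂ) :
    IsOpen {x | ∀ᶠ y in 𝓝 x, DifferentiableAt ℂ f y} := isOpen_setOfPred_eventually_nhds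

theorem HolNear.continuousOn (hf : HolNear f s) : ContinuousOn f s := fun x hx =>
  (hf x hx).self_of_nhds.continuousAt.continuousWithinAt

end HolNear

variable {N : ℕ}

/-- The real coordinates on `ℂᴺ`: `(i, false)` is the real part and `(i, true)` the imaginary part
of the `i`-th complex coordinate. -/
def realCoord (k : Fin N × Bool) (z : Fin N → ℂ) : ℝ := bif k.2 then (z k.1).im else (z k.1).re

/-- A closed box in `ℂᴺ`, a product of rectangles. -/
def complexBox (a b : Fin N × Bool → ℝ) : Set (Fin N → ℂ) :=
  {z | ∀ k, a k ≤ realCoord k z ∧ realCoord k z ≤ b k}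

theorem continuous_realCoord (k : Fin N × Bool) : Continuous (realCoord k) := by
  obtain ⟨i, _ | _⟩ := k
  · exact Complex.continuous_re.comp (continuous_apply i)
  · exact Complex.continuous_im.comp (continuous_apply i)

theorem isCompact_complexBox (a b : Fin N × Bool → ℝ) : IsCompact (complexBox a b) := by
  refine Metric.isCompact_of_isClosed_isBounded ?_ ?_
  · simp only [complexBox, ofPred_forall, ofPred_and]
    exact isClosed_iInter fun k => (isClosed_le continuous_const (continuous_realCoord k)).inter
      (isClosed_le (continuous_realCoord k) continuous_const)
  · refine (isBounded_iff_forall_norm_le).2 ⟨∑ k, (|a k| + |b k|), fun z hz => ?_⟩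
    have hR : 0 ≤ ∑ k, (|a k| + |b k|) := Finset.sum_nonneg fun k _ => by positivity
    refine (pi_norm_le_iff_of_nonneg hR).2 fun i => ?_
    have hk : ∀ k, |realCoord k z| ≤ |a k| + |b k| := fun k => by
      have := hz k
      rw [abs_le]
      constructor <;> cases abs_cases (a k) <;> cases abs_cases (b k) <;> linarith
    calc ‖z i‖ ≤ |(z i).re| + |(z i).im| := Complex.norm_le_abs_re_add_abs_im _
      _ ≤ ∑ k ∈ {(i, false), (i, true)}, (|a k| + |b k|) := by
        rw [Finset.sum_pair (by simp)]
        exact add_le_add (hk (i, false)) (hk (i, true))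
      _ ≤ _ := Finset.sum_le_sum_of_subset_of_nonneg (Finset.subset_univ _)
        fun k _ _ => by positivity

theorem differentiable_update_left (i : Fin N) (c : ℂ) :
    Differentiable ℂ fun y : Fin N → ℂ => Function.update y i c := by
  refine differentiable_pi.2 fun j => ?_
  by_cases h : j = i
  · subst h; simp
  · simpa [Function.update_of_ne h] using differentiable_apply j

theorem differentiable_update_right (i : Fin N) (y : Fin N → ℂ) :
    Differentiable ℂ fun c : ℂ => Function.update y i c := fun c =>
  (hasFDerivAt_update y c).differentiableAt

/-- A Cauchy integral in one coordinate over a path. -/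
def pathCauchy (g : (Fin N → ℂ) → ℂ) (i : Fin N) (γ : ℝ → ℂ) (s t : ℝ) (y : Fin N → ℂ) : ℂ :=
  ∫ τ in s..t, g (Function.update y i (γ τ)) / (γ τ - y i)

theorem holNear_pathCauchy {g : (Fin N → ℂ) → ℂ} {i : Fin N} {γ : ℝ → ℂ} (hγ : Continuous γ)
    {s t : ℝ} (hst : s ≤ t) {S : Set (Fin N → ℂ)} (hne : ∀ x ∈ S, ∀ τ ∈ Icc s t, γ τ ≠ x i)
    (hg : ∀ x ∈ S, ∀ τ ∈ Icc s t,
      ∀ᶠ y in 𝓝 (Function.update x i (γ τ)), DifferentiableAt ℂ g y) :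
    HolNear (pathCauchy g i γ s t) S := by
  have hjoint : Continuous fun p : (Fin N → ℂ) × ℝ => Function.update p.1 i (γ p.2) :=
    continuous_fst.update i (hγ.comp continuous_snd)
  set W := {x | ∀ᶠ y in 𝓝 x, DifferentiableAt ℂ g y} with hW
  have hWo : IsOpen W := HolNear.isOpen_setOf g
  set O := {p : (Fin N → ℂ) × ℝ | γ p.2 ≠ p.1 i ∧ Function.update p.1 i (γ p.2) ∈ W} with hO
  have hOo : IsOpen O := (isOpen_ne_fun (by fun_prop) (by fun_prop)).inter (hWo.preimage hjoint)
  set U := {y : Fin N → ℂ | ∀ τ ∈ Icc s t, (y, τ) ∈ O} with hU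
  have hUo : IsOpen U := isOpen_iff_eventually.2 fun y hy =>
    isCompact_Icc.eventually_forall_of_forall_eventually fun τ hτ => hOo.mem_nhds (hy τ hτ)
  have hdiff : DifferentiableOn ℂ (pathCauchy g i γ s t) U := by
    refine differentiableOn_intervalIntegral hUo hst ?_ ?_
    · rintro ⟨τ, y⟩ ⟨hτ, hy⟩
      have h := hy τ hτ
      refine ContinuousAt.continuousWithinAt ?_
      refine ContinuousAt.div ?_ (by fun_prop) (sub_ne_zero.2 h.1)
      exact ContinuousAt.comp (f := fun p : ℝ × (Fin N → ℂ) => Function.update p.2 i (γ p.1))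
        h.2.self_of_nhds.continuousAt (hjoint.comp continuous_swap).continuousAt
    · intro τ hτ y hy
      have h := hy τ hτ
      have hd : DifferentiableAt ℂ (fun y : Fin N → ℂ => γ τ - y i) y := by fun_prop
      have hn : DifferentiableAt ℂ (fun y => g (Function.update y i (γ τ))) y :=
        h.2.self_of_nhds.comp y (differentiable_update_left i (γ τ) y)
      have h0 : γ τ - y i ≠ 0 := sub_ne_zero.2 h.1
      have hnd : DifferentiableAt ℂ
          (fun y => g (Function.update y i (γ τ)) / (γ τ - y i)) y := by
        simp only [div_eq_mul_inv]
        exact hn.mul (DifferentiableAt.fun_inv hd h0)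
      exact hnd.differentiableWithinAt
  intro x hx
  filter_upwards [hUo.mem_nhds fun τ hτ => ⟨hne x hx τ hτ, hg x hx τ hτ⟩] with y hy
  exact hdiff.differentiableAt (hUo.mem_nhds hy)

/-- The additive Cousin problem for two boxes sharing a face. -/
theorem exists_cousin_split_box {a b : Fin N × Bool → ℝ} {k : Fin N × Bool} {c : ℝ}
    (hc : a k ≤ c ∧ c ≤ b k) {g : (Fin N → ℂ) → ℂ}
    (hg : HolNear g (complexBox a b ∩ {z | realCoord k z = c})) :
    ∃ g₁ g₂ : (Fin N → ℂ) → ℂ, HolNear g₁ (complexBox a b ∩ {z | realCoord k z ≤ c}) ∧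
      HolNear g₂ (complexBox a b ∩ {z | c ≤ realCoord k z}) ∧
      ∀ x ∈ complexBox a b ∩ {z | realCoord k z = c}, ∀ᶠ y in 𝓝 x, g y = g₁ y - g₂ y := by
  rcases (complexBox a b).eq_empty_or_nonempty with hemp | ⟨z₀, hz₀⟩
  · exact ⟨0, 0, by simp [hemp, HolNear], by simp [hemp, HolNear], by simp [hemp]⟩
  set A := Function.update a k c with hA
  set B := Function.update b k c with hB
  have hAB : ∀ l, A l ≤ B l := fun l => by
    by_cases h : l = k
    · subst h; simp [hA, hB]
    · simpa [hA, hB, Function.update_of_ne h] using (hz₀ l).1.trans (hz₀ l).2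
  have hAa : ∀ l, a l ≤ A l := fun l => by
    by_cases h : l = k
    · subst h; simpa [hA] using hc.1
    · simp [hA, Function.update_of_ne h]
  have hBb : ∀ l, B l ≤ b l := fun l => by
    by_cases h : l = k
    · subst h; simpa [hB] using hc.2
    · simp [hB, Function.update_of_ne h]
  obtain ⟨i, q⟩ := k
  have hcomp : IsCompact (complexBox a b ∩ {z | realCoord (i, q) z = c}) :=
    (isCompact_complexBox a b).inter_right (isClosed_eq (continuous_realCoord _) continuous_const)
  obtain ⟨δ, hδ, hδW⟩ := hcomp.exists_thickening_subset_open (HolNear.isOpen_setOf g) hg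
  obtain ⟨η, hη, hηδ⟩ : ∃ η : ℝ, 0 < η ∧ 2 * η < δ := ⟨δ / 3, by positivity, by linarith⟩
  set x₀ := A (i, false) - η with hx₀
  set x₁ := B (i, false) + η with hx₁
  set y₀ := A (i, true) - η with hy₀
  set y₁ := B (i, true) + η with hy₁
  have hx : x₀ ≤ x₁ := by linarith [hAB (i, false)]
  have hy : y₀ ≤ y₁ := by linarith [hAB (i, true)]
  have hnear : ∀ x ∈ complexBox a b, ∀ y, dist y x < δ → ∀ ζ : ℂ, ζ ∈ Icc x₀ x₁ ×ℂ Icc y₀ y₁ →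
      ∀ᶠ w in 𝓝 (Function.update y i ζ), DifferentiableAt ℂ g w := by
    intro x hxb y hyx ζ hζ
    refine hδW (Metric.mem_thickening_iff.2 ?_)
    set ζ' : ℂ := ⟨max (A (i, false)) (min ζ.re (B (i, false))),
      max (A (i, true)) (min ζ.im (B (i, true)))⟩ with hζ'
    have h0 := hAB (i, false)
    have h1 := hAB (i, true)
    have hre : A (i, false) ≤ ζ'.re ∧ ζ'.re ≤ B (i, false) := ⟨le_max_left _ _, by simp [hζ', h0]⟩
    have him : A (i, true) ≤ ζ'.im ∧ ζ'.im ≤ B (i, true) := ⟨le_max_left _ _, by simp [hζ', h1]⟩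
    have hAB' : ∀ l, A l ≤ realCoord l (Function.update x i ζ') ∧
        realCoord l (Function.update x i ζ') ≤ B l ∨ (l.1 ≠ i) := by
      rintro ⟨j, _ | _⟩ <;> by_cases h : j = i <;> simp [h, realCoord, hre, him]
    refine ⟨Function.update x i ζ', ⟨fun l => ?_, ?_⟩, ?_⟩
    · rcases hAB' l with h | h
      · exact ⟨(hAa l).trans h.1, h.2.trans (hBb l)⟩
      · simpa [realCoord, Function.update_of_ne h] using hxb l
    · rcases hAB' (i, q) with h | h
      · simp only [hA, hB, Function.update_self] at h
        exact le_antisymm h.2 h.1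
      · exact absurd rfl h
    · refine (dist_pi_lt_iff hδ).2 fun j => ?_
      by_cases h : j = i
      · subst h
        simp only [Function.update_self]
        have e1 : |(ζ - ζ').re| ≤ η := by
          have := hζ.1
          simp only [mem_preimage, mem_Icc, hx₀, hx₁] at this
          rw [Complex.sub_re, abs_le]
          simp only [hζ']
          constructor <;> cases max_cases (A (j, false)) (min ζ.re (B (j, false))) <;>
            cases min_cases ζ.re (B (j, false)) <;> linarith
        have e2 : |(ζ - ζ').im| ≤ η := by
          have := hζ.2
          simp only [mem_preimage, mem_Icc, hy₀, hy₁] at this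
          rw [Complex.sub_im, abs_le]
          simp only [hζ']
          constructor <;> cases max_cases (A (j, true)) (min ζ.im (B (j, true))) <;>
            cases min_cases ζ.im (B (j, true)) <;> linarith
        rw [dist_eq_norm]
        linarith [Complex.norm_le_abs_re_add_abs_im (ζ - ζ')]
      · simp only [Function.update_of_ne h]
        exact (dist_le_pi_dist y x j).trans_lt hyx
  have hnear' : ∀ x ∈ complexBox a b, ∀ ζ : ℂ, ζ ∈ Icc x₀ x₁ ×ℂ Icc y₀ y₁ →
      ∀ᶠ w in 𝓝 (Function.update x i ζ), DifferentiableAt ℂ g w := fun x hxb =>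
    hnear x hxb x (by simpa using hδ)
  -- the four edges of the rectangle
  set eB := pathCauchy g i (fun x => x + y₀ * Complex.I) x₀ x₁ with heB
  set eT := pathCauchy g i (fun x => x + y₁ * Complex.I) x₀ x₁ with heT
  set eR := pathCauchy g i (fun y => x₁ + y * Complex.I) y₀ y₁ with heR
  set eL := pathCauchy g i (fun y => x₀ + y * Complex.I) y₀ y₁ with heL
  have hBot : ∀ S ⊆ complexBox a b, (∀ z ∈ S, y₀ < (z i).im) → HolNear eB S := fun S hS h =>
    holNear_pathCauchy (by fun_prop) hx
      (fun z hz τ _ he => by have := congrArg Complex.im he; simp at this; linarith [h z hz])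
      (fun z hz τ hτ => hnear' z (hS hz) _ ⟨by simpa using hτ, by simpa using hy⟩)
  have hTop : ∀ S ⊆ complexBox a b, (∀ z ∈ S, (z i).im < y₁) → HolNear eT S := fun S hS h =>
    holNear_pathCauchy (by fun_prop) hx
      (fun z hz τ _ he => by have := congrArg Complex.im he; simp at this; linarith [h z hz])
      (fun z hz τ hτ => hnear' z (hS hz) _ ⟨by simpa using hτ, by simpa using hy⟩)
  have hRight : ∀ S ⊆ complexBox a b, (∀ z ∈ S, (z i).re < x₁) → HolNear eR S := fun S hS h =>
    holNear_pathCauchy (by fun_prop) hy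
      (fun z hz τ _ he => by have := congrArg Complex.re he; simp at this; linarith [h z hz])
      (fun z hz τ hτ => hnear' z (hS hz) _ ⟨by simpa using hx, by simpa using hτ⟩)
  have hLeft : ∀ S ⊆ complexBox a b, (∀ z ∈ S, x₀ < (z i).re) → HolNear eL S := fun S hS h =>
    holNear_pathCauchy (by fun_prop) hy
      (fun z hz τ _ he => by have := congrArg Complex.re he; simp at this; linarith [h z hz])
      (fun z hz τ hτ => hnear' z (hS hz) _ ⟨by simpa using hx, by simpa using hτ⟩)
  have hformula : ∀ x ∈ complexBox a b ∩ {z | realCoord (i, q) z = c}, ∀ᶠ y in 𝓝 x,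
      g y = (2 * Real.pi * Complex.I)⁻¹ *
        (eB y - eT y + Complex.I * eR y - Complex.I * eL y) := by
    rintro x ⟨hxb, hxc⟩
    have hxA : ∀ l, A l ≤ realCoord l x ∧ realCoord l x ≤ B l := fun l => by
      by_cases h : l = (i, q)
      · subst h; simp only [hA, hB, Function.update_self]; exact ⟨hxc.ge, hxc.le⟩
      · simpa [hA, hB, Function.update_of_ne h] using hxb l
    have f1 := hxA (i, false)
    have f2 := hxA (i, true)
    simp only [realCoord, cond_false, cond_true] at f1 f2
    have cre : Continuous fun y : Fin N → ℂ => (y i).re := by fun_prop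
    have cim : Continuous fun y : Fin N → ℂ => (y i).im := by fun_prop
    filter_upwards [ball_mem_nhds x hδ, cre.continuousAt.eventually (Ioo_mem_nhds
      (show x₀ < (x i).re by linarith) (show (x i).re < x₁ by linarith)),
      cim.continuousAt.eventually (Ioo_mem_nhds
      (show y₀ < (x i).im by linarith) (show (x i).im < y₁ by linarith))] with y hyx hyre hyim
    have := integral_boundary_rect_div_sub (g := fun ζ => g (Function.update y i ζ)) (z := y i)
      hyre.1 hyre.2 hyim.1 hyim.2 (fun ζ hζ => ((hnear x hxb y hyx ζ hζ).self_of_nhds.comp ζ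
        (differentiable_update_right i y ζ)).differentiableWithinAt)
    simp only [Function.update_eq_self] at this
    rw [heB, heT, heR, heL]
    simp only [pathCauchy]
    rw [this, inv_mul_cancel_left₀ Complex.two_pi_I_ne_zero]
  have hbd : ∀ z ∈ complexBox a b, (a (i, false) ≤ (z i).re ∧ (z i).re ≤ b (i, false)) ∧
    (a (i, true) ≤ (z i).im ∧ (z i).im ≤ b (i, true)) := fun z hz => ⟨hz (i, false), hz (i, true)⟩
  rcases q with _ | _
  · simp only [hA, hB, Function.update_self, ne_eq, Prod.mk.injEq, reduceCtorEq, and_false,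
      not_false_eq_true, Function.update_of_ne] at hx₀ hx₁ hy₀ hy₁
    refine ⟨fun y => (2 * Real.pi * Complex.I)⁻¹ * (eB y - eT y + Complex.I * eR y),
      fun y => (2 * Real.pi * Complex.I)⁻¹ * (Complex.I * eL y), ?_, ?_, fun x hx => ?_⟩
    · refine HolNear.const_mul (((hBot _ inter_subset_left ?_).sub
        (hTop _ inter_subset_left ?_)).add ((hRight _ inter_subset_left ?_).const_mul _)) _
      · exact fun z hz => by linarith [(hbd z hz.1).2.1]
      · exact fun z hz => by linarith [(hbd z hz.1).2.2]
      · exact fun z hz => by have : (z i).re ≤ c := hz.2; linarith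
    · refine ((hLeft _ inter_subset_left ?_).const_mul _).const_mul _
      exact fun z hz => by have : c ≤ (z i).re := hz.2; linarith
    · filter_upwards [hformula x hx] with y hy'
      rw [hy']; ring
  · simp only [hA, hB, Function.update_self, ne_eq, Prod.mk.injEq, reduceCtorEq, and_false,
      not_false_eq_true, Function.update_of_ne] at hx₀ hx₁ hy₀ hy₁
    refine ⟨fun y => (2 * Real.pi * Complex.I)⁻¹ *
        (Complex.I * eR y - Complex.I * eL y - eT y),
      fun y => -(2 * Real.pi * Complex.I)⁻¹ * eB y, ?_, ?_, fun x hx => ?_⟩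
    · refine HolNear.const_mul ((((hRight _ inter_subset_left ?_).const_mul _).sub
        ((hLeft _ inter_subset_left ?_).const_mul _)).sub (hTop _ inter_subset_left ?_)) _
      · exact fun z hz => by linarith [(hbd z hz.1).1.2]
      · exact fun z hz => by linarith [(hbd z hz.1).1.1]
      · exact fun z hz => by have : (z i).im ≤ c := hz.2; linarith
    · refine (hBot _ inter_subset_left ?_).const_mul _
      exact fun z hz => by have : c ≤ (z i).im := hz.2; linarith
    · filter_upwards [hformula x hx] with y hy'
      rw [hy']; ring

end OkaWeil

section Division
open Filter Topology

variable {N : ℕ}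

/-- Weierstrass division by `y i - ψ y`, where `ψ` does not depend on the coordinate `i`. -/
theorem HolNear.exists_eq_mul {u : (Fin N → ℂ) → ℂ} {S : Set (Fin N → ℂ)} (hu : HolNear u S)
    {i : Fin N} {ψ : (Fin N → ℂ) → ℂ} (hψ : Differentiable ℂ ψ)
    (hψi : ∀ y c, ψ (Function.update y i c) = ψ y)
    (h0 : ∀ x ∈ S, x i = ψ x → ∀ᶠ y in 𝓝 x, y i = ψ y → u y = 0) :
    ∃ g, HolNear g S ∧ ∀ x ∈ S, ∀ᶠ y in 𝓝 x, u y = (y i - ψ y) * g y := by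
  classical
  set g : (Fin N → ℂ) → ℂ := fun y => if y i = ψ y then
    deriv (fun ζ => u (Function.update y i ζ)) (y i) else u y / (y i - ψ y) with hg
  have hapi : Continuous fun y : Fin N → ℂ => y i := continuous_apply i
  refine ⟨g, fun x hx => ?_, fun x hx => ?_⟩
  swap
  · by_cases hxi : x i = ψ x
    · filter_upwards [h0 x hx hxi] with y hy
      by_cases h : y i = ψ y
      · simp [hy h, h]
      · simp only [hg, h, if_false]
        rw [mul_div_cancel₀]
        exact sub_ne_zero.2 h
    · filter_upwards [(isOpen_ne_fun hapi hψ.continuous).mem_nhds hxi] with y hy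
      have h : ¬ y i = ψ y := hy
      simp only [hg, h, if_false]
      rw [mul_div_cancel₀]
      exact sub_ne_zero.2 h
  by_cases hxi : x i = ψ x
  swap
  · have hev : ∀ᶠ y in 𝓝 x, y i ≠ ψ y := (isOpen_ne_fun hapi hψ.continuous).mem_nhds hxi
    filter_upwards [hev.eventually_nhds, hu x hx] with y hy huy
    have hne := sub_ne_zero.2 hy.self_of_nhds
    have hd : DifferentiableAt ℂ (fun y : Fin N → ℂ => y i - ψ y) y := by fun_prop
    have : DifferentiableAt ℂ (fun y : Fin N → ℂ => u y * (y i - ψ y)⁻¹) y :=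
      huy.mul (DifferentiableAt.fun_inv hd hne)
    refine this.congr_of_eventuallyEq ?_
    filter_upwards [hy] with w hw
    simp only [hg, hw, if_false, div_eq_mul_inv]
  obtain ⟨δ, hδ, hball⟩ := Metric.eventually_nhds_iff.1 ((hu x hx).and (h0 x hx hxi))
  obtain ⟨ρ, hρ, hρδ⟩ : ∃ ρ : ℝ, 0 < ρ ∧ 2 * ρ < δ := ⟨δ / 3, by positivity, by linarith⟩
  set U : Set (Fin N → ℂ) := ball x ρ ∩ {y | ψ y ∈ ball (x i) ρ} with hU
  have hUo : IsOpen U := isOpen_ball.inter (isOpen_ball.preimage hψ.continuous)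
  have hup : ∀ y ∈ U, ∀ ζ ∈ closedBall (x i) ρ, dist (Function.update y i ζ) x < δ := by
    intro y hy ζ hζ
    refine (dist_pi_lt_iff hδ).2 fun j => ?_
    by_cases h : j = i
    · subst h
      simp only [Function.update_self]
      exact (mem_closedBall.1 hζ).trans_lt (by linarith)
    · simp only [Function.update_of_ne h]
      exact (dist_le_pi_dist y x j).trans_lt ((mem_ball.1 hy.1).trans (by linarith))
  set k : ℝ → (Fin N → ℂ) → ℂ := fun θ y => (2 * Real.pi * Complex.I)⁻¹ *
    (deriv (circleMap (x i) ρ) θ * (u (Function.update y i (circleMap (x i) ρ θ)) *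
      (circleMap (x i) ρ θ - ψ y)⁻¹ * (circleMap (x i) ρ θ - y i)⁻¹)) with hk
  have hsph : ∀ θ, circleMap (x i) ρ θ ∈ sphere (x i) ρ := fun θ => circleMap_mem_sphere _ hρ.le _
  have hne1 : ∀ y ∈ U, ∀ θ, circleMap (x i) ρ θ - ψ y ≠ 0 := fun y hy θ h => by
    have h1 := hsph θ
    rw [sub_eq_zero.1 h] at h1
    exact absurd (mem_sphere.1 h1) (mem_ball.1 hy.2).ne
  have hne2 : ∀ y ∈ U, ∀ θ, circleMap (x i) ρ θ - y i ≠ 0 := fun y hy θ h => by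
    have h1 := hsph θ
    rw [sub_eq_zero.1 h] at h1
    exact absurd (mem_sphere.1 h1) ((dist_le_pi_dist y x i).trans_lt (mem_ball.1 hy.1)).ne
  have hcm : Continuous (circleMap (x i) ρ) := continuous_circleMap _ _
  have hkint : DifferentiableOn ℂ (fun y => ∫ θ in (0 : ℝ)..2 * Real.pi, k θ y) U := by
    refine differentiableOn_intervalIntegral hUo (by positivity) ?_ ?_
    · rintro ⟨θ, y⟩ ⟨-, hy⟩
      refine ContinuousAt.continuousWithinAt ?_
      have hc1 : ContinuousAt (fun p : ℝ × (Fin N → ℂ) =>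
          u (Function.update p.2 i (circleMap (x i) ρ p.1))) (θ, y) :=
        ContinuousAt.comp
          (f := fun p : ℝ × (Fin N → ℂ) => Function.update p.2 i (circleMap (x i) ρ p.1))
          (hball (hup y hy _ (sphere_subset_closedBall (hsph θ)))).1.continuousAt
          (continuous_snd.update i (hcm.comp continuous_fst)).continuousAt
      have hc2 : ContinuousAt (fun p : ℝ × (Fin N → ℂ) => (circleMap (x i) ρ p.1 - ψ p.2)⁻¹)
          (θ, y) := ContinuousAt.inv₀ (f := fun p : ℝ × (Fin N → ℂ) =>
            circleMap (x i) ρ p.1 - ψ p.2) ((hcm.comp continuous_fst).sub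
            (hψ.continuous.comp continuous_snd)).continuousAt (hne1 y hy θ)
      have hc3 : ContinuousAt (fun p : ℝ × (Fin N → ℂ) => (circleMap (x i) ρ p.1 - p.2 i)⁻¹)
          (θ, y) := ContinuousAt.inv₀ (f := fun p : ℝ × (Fin N → ℂ) =>
            circleMap (x i) ρ p.1 - p.2 i) ((hcm.comp continuous_fst).sub
            (hapi.comp continuous_snd)).continuousAt (hne2 y hy θ)
      have hc4 : Continuous (fun p : ℝ × (Fin N → ℂ) => deriv (circleMap (x i) ρ) p.1) := by
        simp only [deriv_circleMap]
        fun_prop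
      exact continuousAt_const.mul (hc4.continuousAt.mul ((hc1.mul hc2).mul hc3))
    · intro θ _ y hy
      have hc1 : DifferentiableAt ℂ (fun y => u (Function.update y i (circleMap (x i) ρ θ))) y :=
        (hball (hup y hy _ (sphere_subset_closedBall (hsph θ)))).1.comp y
          (differentiable_update_left i _ y)
      have hd2 : DifferentiableAt ℂ (fun y => circleMap (x i) ρ θ - ψ y) y := by fun_prop
      have hd3 : DifferentiableAt ℂ (fun y => circleMap (x i) ρ θ - y i) y := by fun_prop
      exact ((((hc1.mul (DifferentiableAt.fun_inv hd2 (hne1 y hy θ))).mul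
        (DifferentiableAt.fun_inv hd3 (hne2 y hy θ))).const_mul _).const_mul
          _).differentiableWithinAt
  have heq : ∀ y ∈ U, ∫ θ in (0 : ℝ)..2 * Real.pi, k θ y = g y := by
    intro y hy
    have hψb : ψ y ∈ ball (x i) ρ := hy.2
    have hyb : y i ∈ ball (x i) ρ := (dist_le_pi_dist y x i).trans_lt (mem_ball.1 hy.1)
    set v : ℂ → ℂ := fun ζ => u (Function.update y i ζ) with hv
    have hvd : DifferentiableOn ℂ v (closedBall (x i) ρ) := fun ζ hζ =>
      ((hball (hup y hy ζ hζ)).1.comp ζ (differentiable_update_right i y ζ)).differentiableWithinAt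
    have hvψ : v (ψ y) = 0 := (hball (hup y hy _ (ball_subset_closedBall hψb))).2 (by simp [hψi])
    have hds : DifferentiableOn ℂ (dslope v (ψ y)) (closedBall (x i) ρ) :=
      (Complex.differentiableOn_dslope
        (mem_of_superset (isOpen_ball.mem_nhds hψb) ball_subset_closedBall)).2 hvd
    have hC := hds.circleIntegral_sub_inv_smul hyb
    have hgy : g y = dslope v (ψ y) (y i) := by
      by_cases h : y i = ψ y
      · simp only [hg, h, if_true, dslope_same]; rfl
      · rw [dslope_of_ne _ h, slope_def_field, hvψ]
        simp [hg, h, hv]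
    rw [hgy, intervalIntegral.integral_const_mul, inv_mul_eq_iff_eq_mul₀ Complex.two_pi_I_ne_zero,
      ← smul_eq_mul (_ * _ * _), ← hC, circleIntegral]
    refine intervalIntegral.integral_congr fun θ _ => ?_
    have : circleMap (x i) ρ θ ≠ ψ y := sub_ne_zero.1 (hne1 y hy θ)
    simp only [smul_eq_mul]
    rw [dslope_of_ne _ this, slope_def_field, hvψ, sub_zero]
    simp only [hv]
    ring
  have hxU : x ∈ U := ⟨mem_ball_self hρ, by simpa [← hxi] using hρ⟩
  filter_upwards [hUo.mem_nhds hxU] with y hy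
  refine (hkint.differentiableAt (hUo.mem_nhds hy)).congr_of_eventuallyEq ?_
  filter_upwards [hUo.mem_nhds hy] with w hw using (heq w hw).symm

end Division

section Cousin
open Filter Topology

variable {N : ℕ}

/-- The additive Cousin problem is solvable on `P` for any two boxes sharing a face. -/
def CousinSet (P : Set (Fin N → ℂ)) : Prop :=
  ∀ (a b : Fin N × Bool → ℝ) (k : Fin N × Bool) (c : ℝ), a k ≤ c → c ≤ b k →
    ∀ g : (Fin N → ℂ) → ℂ, HolNear g (P ∩ (complexBox a b ∩ {z | realCoord k z = c})) →
    ∃ g₁ g₂ : (Fin N → ℂ) → ℂ, HolNear g₁ (P ∩ (complexBox a b ∩ {z | realCoord k z ≤ c})) ∧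
      HolNear g₂ (P ∩ (complexBox a b ∩ {z | c ≤ realCoord k z})) ∧
      ∀ x ∈ P ∩ (complexBox a b ∩ {z | realCoord k z = c}), ∀ᶠ y in 𝓝 x, g y = g₁ y - g₂ y

/-- A holomorphic extension of `f` from the graph `y i = ψ y`, over the part of `P` in a box. -/
def ExtendsOver (P : Set (Fin N → ℂ)) (i : Fin N) (ψ f : (Fin N → ℂ) → ℂ)
    (a b : Fin N × Bool → ℝ) : Prop :=
  ∃ F, HolNear F (P ∩ complexBox a b) ∧ ∀ x ∈ P ∩ complexBox a b, x i = ψ x →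
    ∀ᶠ y in 𝓝 x, y i = ψ y → F y = f y

theorem complexBox_inter_le {a b : Fin N × Bool → ℝ} {k : Fin N × Bool} {c : ℝ} (h : c ≤ b k) :
    complexBox a b ∩ {z | realCoord k z ≤ c} = complexBox a (Function.update b k c) := by
  ext z
  simp only [complexBox, mem_inter_iff, mem_ofPred_eq]
  constructor
  · rintro ⟨h₁, h₂⟩ l
    by_cases hl : l = k
    · subst hl; simpa using ⟨(h₁ l).1, h₂⟩
    · simpa [Function.update_of_ne hl] using h₁ l
  · refine fun H => ⟨fun l => ?_, by simpa using (H k).2⟩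
    by_cases hl : l = k
    · subst hl
      have := H l
      simp only [Function.update_self] at this
      exact ⟨this.1, this.2.trans h⟩
    · simpa [Function.update_of_ne hl] using H l

theorem complexBox_inter_ge {a b : Fin N × Bool → ℝ} {k : Fin N × Bool} {c : ℝ} (h : a k ≤ c) :
    complexBox a b ∩ {z | c ≤ realCoord k z} = complexBox (Function.update a k c) b := by
  ext z
  simp only [complexBox, mem_inter_iff, mem_ofPred_eq]
  constructor
  · rintro ⟨h₁, h₂⟩ l
    by_cases hl : l = k
    · subst hl; simpa using ⟨h₂, (h₁ l).2⟩
    · simpa [Function.update_of_ne hl] using h₁ l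
  · refine fun H => ⟨fun l => ?_, by simpa using (H k).1⟩
    by_cases hl : l = k
    · subst hl
      have := H l
      simp only [Function.update_self] at this
      exact ⟨h.trans this.1, this.2⟩
    · simpa [Function.update_of_ne hl] using H l

theorem complexBox_inter_eq {a b : Fin N × Bool → ℝ} {k : Fin N × Bool} {c : ℝ} (h : a k ≤ c)
    (h' : c ≤ b k) : complexBox a b ∩ {z | realCoord k z = c} =
      complexBox (Function.update a k c) (Function.update b k c) := by
  rw [← complexBox_inter_ge (by simpa using h), ← complexBox_inter_le h', inter_assoc]
  congr 1
  ext z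
  exact ⟨fun h => ⟨le_of_eq h, ge_of_eq h⟩, fun h => le_antisymm h.1 h.2⟩

theorem ExtendsOver.merge {P : Set (Fin N → ℂ)} (hP : CousinSet P) {i : Fin N}
    {ψ f : (Fin N → ℂ) → ℂ} (hψ : Differentiable ℂ ψ)
    (hψi : ∀ y c, ψ (Function.update y i c) = ψ y) {a b : Fin N × Bool → ℝ}
    {k : Fin N × Bool} {c : ℝ} (hac : a k ≤ c) (hcb : c ≤ b k)
    (h₁ : ExtendsOver P i ψ f a (Function.update b k c))
    (h₂ : ExtendsOver P i ψ f (Function.update a k c) b) : ExtendsOver P i ψ f a b := by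
  classical
  obtain ⟨F₁, hF₁, e₁⟩ := h₁
  obtain ⟨F₂, hF₂, e₂⟩ := h₂
  rw [← complexBox_inter_le hcb] at hF₁ e₁
  rw [← complexBox_inter_ge hac] at hF₂ e₂
  set S := P ∩ (complexBox a b ∩ {z | realCoord k z = c}) with hS
  have hS₁ : S ⊆ P ∩ (complexBox a b ∩ {z | realCoord k z ≤ c}) :=
    inter_subset_inter_right _ (inter_subset_inter_right _ fun z hz => le_of_eq hz)
  have hS₂ : S ⊆ P ∩ (complexBox a b ∩ {z | c ≤ realCoord k z}) :=
    inter_subset_inter_right _ (inter_subset_inter_right _ fun z hz => ge_of_eq hz)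
  obtain ⟨g, hg, hgu⟩ := ((hF₁.mono hS₁).sub (hF₂.mono hS₂)).exists_eq_mul hψ hψi (by
    intro x hx hxi
    filter_upwards [e₁ x (hS₁ hx) hxi, e₂ x (hS₂ hx) hxi] with y h1 h2 hy
    rw [h1 hy, h2 hy, sub_self])
  obtain ⟨g₁, g₂, hg₁, hg₂, hgg⟩ := hP a b k c hac hcb g hg
  have hφ : Differentiable ℂ fun y : Fin N → ℂ => y i - ψ y := by fun_prop
  set G₁ := fun y => F₁ y - (y i - ψ y) * g₁ y with hG₁
  set G₂ := fun y => F₂ y - (y i - ψ y) * g₂ y with hG₂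
  have hG₁n : HolNear G₁ _ := hF₁.sub (hφ.holNear.mul hg₁)
  have hG₂n : HolNear G₂ _ := hF₂.sub (hφ.holNear.mul hg₂)
  set F := fun y => if realCoord k y ≤ c then G₁ y else G₂ y with hF
  have hGG : ∀ x ∈ S, ∀ᶠ y in 𝓝 x, F y = G₁ y := by
    intro x hx
    filter_upwards [hgu x hx, hgg x hx] with y h1 h2
    simp only [hF]
    split_ifs
    · rfl
    · simp only [hG₁, hG₂]
      rw [h2] at h1
      linear_combination -h1
  have hlt : ∀ x, realCoord k x < c → ∀ᶠ y in 𝓝 x, F y = G₁ y := fun x hx => by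
    filter_upwards [(isOpen_lt (continuous_realCoord k) continuous_const).mem_nhds hx] with y hy
    exact if_pos (le_of_lt hy)
  have hgt : ∀ x, c < realCoord k x → ∀ᶠ y in 𝓝 x, F y = G₂ y := fun x hx => by
    filter_upwards [(isOpen_lt continuous_const (continuous_realCoord k)).mem_nhds hx] with y hy
    exact if_neg (not_le_of_gt hy)
  have key : ∀ x ∈ P ∩ complexBox a b, (x ∈ P ∩ (complexBox a b ∩ {z | realCoord k z ≤ c}) ∧
      ∀ᶠ y in 𝓝 x, F y = G₁ y) ∨ (x ∈ P ∩ (complexBox a b ∩ {z | c ≤ realCoord k z}) ∧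
      ∀ᶠ y in 𝓝 x, F y = G₂ y) := by
    intro x hx
    rcases lt_trichotomy (realCoord k x) c with h | h | h
    · exact Or.inl ⟨⟨hx.1, hx.2, le_of_lt h⟩, hlt x h⟩
    · exact Or.inl ⟨⟨hx.1, hx.2, le_of_eq h⟩, hGG x ⟨hx.1, hx.2, h⟩⟩
    · exact Or.inr ⟨⟨hx.1, hx.2, le_of_lt h⟩, hgt x h⟩
  refine ⟨F, fun x hx => ?_, fun x hx hxi => ?_⟩
  · rcases key x hx with ⟨hm, he⟩ | ⟨hm, he⟩
    · filter_upwards [hG₁n x hm, he.eventually_nhds] with y h1 h2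
      exact h1.congr_of_eventuallyEq h2
    · filter_upwards [hG₂n x hm, he.eventually_nhds] with y h1 h2
      exact h1.congr_of_eventuallyEq h2
  · rcases key x hx with ⟨hm, he⟩ | ⟨hm, he⟩
    · filter_upwards [e₁ x hm hxi, he] with y h1 h2 hy
      rw [h2, ← h1 hy]; simp [hG₁, hy]
    · filter_upwards [e₂ x hm hxi, he] with y h1 h2 hy
      rw [h2, ← h1 hy]; simp [hG₂, hy]

theorem CousinSet.extendsOver {P : Set (Fin N → ℂ)} (hP : CousinSet P) (hPc : IsClosed P)
    {i : Fin N} {ψ f : (Fin N → ℂ) → ℂ} (hψ : Differentiable ℂ ψ)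
    (hψi : ∀ y c, ψ (Function.update y i c) = ψ y) {a b : Fin N × Bool → ℝ}
    (hf : HolNear f (P ∩ complexBox a b ∩ {y | y i = ψ y})) : ExtendsOver P i ψ f a b := by
  classical
  have hcomp : IsCompact (P ∩ complexBox a b) := (isCompact_complexBox a b).inter_left hPc
  set c : Bool → Set (Fin N → ℂ) := fun q => bif q then
    {x | ∀ᶠ y in 𝓝 x, DifferentiableAt ℂ f y} else {y | y i ≠ ψ y} with hcdef
  obtain ⟨ε, hε, hεc⟩ := lebesgue_number_lemma_of_metric (c := c) hcomp
    (by
      rintro (_ | _)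
      · exact isOpen_ne_fun (continuous_apply i) hψ.continuous
      · exact HolNear.isOpen_setOf f)
    (fun x hx => by
      by_cases hxi : x i = ψ x
      · exact mem_iUnion.2 ⟨true, hf x ⟨hx, hxi⟩⟩
      · exact mem_iUnion.2 ⟨false, hxi⟩)
  obtain ⟨δ, hδ, hδε⟩ : ∃ δ : ℝ, 0 < δ ∧ 2 * δ < ε := ⟨ε / 3, by positivity, by linarith⟩
  have main : ∀ T : Finset (Fin N × Bool), ∀ a' b' : Fin N × Bool → ℝ,
      complexBox a' b' ⊆ complexBox a b → (∀ k ∉ T, b' k - a' k ≤ δ) →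
      ExtendsOver P i ψ f a' b' := by
    intro T
    induction T using Finset.induction_on with
    | empty =>
      intro a' b' hsub hsize
      rcases (P ∩ complexBox a' b').eq_empty_or_nonempty with he | ⟨x, hxP, hx⟩
      · exact ⟨0, by simp [he, HolNear], by simp [he]⟩
      have hball : complexBox a' b' ⊆ ball x ε := by
        intro y hy
        refine (dist_pi_lt_iff hε).2 fun j => ?_
        have h1 : |(y j - x j).re| ≤ δ := by
          have h1 := hx (j, false)
          have h2 := hy (j, false)
          have h3 := hsize (j, false) (by simp)
          simp only [realCoord, cond_false] at h1 h2
          rw [Complex.sub_re, abs_le]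
          constructor <;> linarith
        have h2 : |(y j - x j).im| ≤ δ := by
          have h1 := hx (j, true)
          have h2 := hy (j, true)
          have h3 := hsize (j, true) (by simp)
          simp only [realCoord, cond_true] at h1 h2
          rw [Complex.sub_im, abs_le]
          constructor <;> linarith
        rw [dist_eq_norm]
        linarith [Complex.norm_le_abs_re_add_abs_im (y j - x j)]
      obtain ⟨q, hq⟩ := hεc x ⟨hxP, hsub hx⟩
      rcases q with _ | _
      · exact ⟨0, (differentiable_const 0).holNear,
          fun y hy hyi => absurd hyi (hq (hball hy.2))⟩
      · exact ⟨f, fun y hy => hq (hball hy.2),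
          fun y hy hyi => Eventually.of_forall fun _ _ => rfl⟩
    | insert k T _ ih =>
      have inner : ∀ n : ℕ, ∀ a' b' : Fin N × Bool → ℝ, complexBox a' b' ⊆ complexBox a b →
          (∀ l ∉ insert k T, b' l - a' l ≤ δ) → b' k - a' k ≤ (n + 1) * δ →
          ExtendsOver P i ψ f a' b' := by
        intro n
        induction n with
        | zero =>
          intro a' b' hsub hsize hk
          refine ih a' b' hsub fun l hl => ?_
          by_cases h : l = k
          · subst h; simpa using hk
          · exact hsize l (by simp [h, hl])
        | succ n ihn =>
          intro a' b' hsub hsize hk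
          by_cases hkδ : b' k - a' k ≤ δ
          · refine ihn a' b' hsub hsize (hkδ.trans ?_)
            nlinarith [(Nat.cast_nonneg n : (0 : ℝ) ≤ n)]
          push Not at hkδ
          have hac : a' k ≤ a' k + δ := by linarith
          have hcb : a' k + δ ≤ b' k := by linarith
          refine ExtendsOver.merge hP hψ hψi hac hcb (ih _ _ ?_ ?_) (ihn _ _ ?_ ?_ ?_)
          · rw [← complexBox_inter_le hcb]
            exact inter_subset_left.trans hsub
          · intro l hl
            by_cases h : l = k
            · subst h; simp
            · simpa [Function.update_of_ne h] using hsize l (by simp [h, hl])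
          · rw [← complexBox_inter_ge hac]
            exact inter_subset_left.trans hsub
          · intro l hl
            have h : l ≠ k := fun h => hl (by simp [h])
            simpa [Function.update_of_ne h] using hsize l hl
          · push_cast at hk
            simp only [Function.update_self]
            linarith
      intro a' b' hsub hsize
      obtain ⟨n, hn⟩ := exists_nat_gt ((b' k - a' k) / δ)
      refine inner n a' b' hsub hsize ?_
      rw [div_lt_iff₀ hδ] at hn
      nlinarith
  exact main Finset.univ a b subset_rfl (by simp)

/-- The closed square in `ℂ` with centre `0` and side `2 * R`. -/
def closedSquare (R : ℝ) : Set ℂ := {w | |w.re| ≤ R ∧ |w.im| ≤ R}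

/-- The polyhedron where the given functions take values in a square. -/
def polyhedron (R : ℝ) (ps : List ((Fin N → ℂ) → ℂ)) : Set (Fin N → ℂ) :=
  {z | ∀ p ∈ ps, p z ∈ closedSquare R}

theorem isClosed_closedSquare (R : ℝ) : IsClosed (closedSquare R) :=
  (isClosed_le Complex.continuous_re.abs continuous_const).inter
    (isClosed_le Complex.continuous_im.abs continuous_const)

theorem isClosed_polyhedron {R : ℝ} {ps : List ((Fin N → ℂ) → ℂ)}
    (hps : ∀ p ∈ ps, Differentiable ℂ p) : IsClosed (polyhedron R ps) := by
  have : polyhedron R ps = ⋂ p ∈ ps, p ⁻¹' closedSquare R := by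
    ext z; simp [polyhedron]
  rw [this]
  exact isClosed_biInter fun p hp => (isClosed_closedSquare R).preimage (hps p hp).continuous

/-- Adds the coordinate value `s` in front of the real coordinates `a`. -/
def boxCons (s : ℝ) (a : Fin N × Bool → ℝ) : Fin (N + 1) × Bool → ℝ :=
  fun k => Fin.cases s (fun j => a (j, k.2)) k.1

theorem mem_complexBox_boxCons {R : ℝ} {a b : Fin N × Bool → ℝ} {y : Fin (N + 1) → ℂ} :
    y ∈ complexBox (boxCons (-R) a) (boxCons R b) ↔
      y 0 ∈ closedSquare R ∧ Fin.tail y ∈ complexBox a b := by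
  simp only [complexBox, mem_ofPred_eq, Prod.forall, Fin.forall_fin_succ, closedSquare, abs_le,
    Bool.forall_bool]
  rfl

theorem update_boxCons (s : ℝ) (a : Fin N × Bool → ℝ) (k : Fin N × Bool) (c : ℝ) :
    Function.update (boxCons s a) (k.1.succ, k.2) c = boxCons s (Function.update a k c) := by
  ext ⟨j, q⟩
  refine Fin.cases ?_ (fun j => ?_) j
  · rw [Function.update_of_ne (by simp [Prod.ext_iff, eq_comm])]
    rfl
  · obtain ⟨k₁, k₂⟩ := k
    by_cases h : j = k₁ ∧ q = k₂
    · obtain ⟨rfl, rfl⟩ := h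
      simp [boxCons]
    · rw [Function.update_of_ne (by simpa [Prod.ext_iff] using h)]
      simp only [boxCons, Fin.cases_succ]
      rw [Function.update_of_ne (by simpa [Prod.ext_iff] using h)]

theorem differentiable_tail : Differentiable ℂ (Fin.tail : (Fin (N + 1) → ℂ) → Fin N → ℂ) :=
  differentiable_pi.2 fun j => differentiable_apply j.succ

theorem differentiable_graph {p : (Fin N → ℂ) → ℂ} (hp : Differentiable ℂ p) :
    Differentiable ℂ fun z => (Fin.cons (p z) z : Fin (N + 1) → ℂ) :=
  differentiable_pi.2 fun j => by
    refine Fin.cases ?_ (fun j => ?_) j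
    · simpa using hp
    · simpa using differentiable_apply j

theorem polyhedron_map_tail {R : ℝ} {ps : List ((Fin N → ℂ) → ℂ)} {y : Fin (N + 1) → ℂ} :
    y ∈ polyhedron R (ps.map fun p y => p (Fin.tail y)) ↔ Fin.tail y ∈ polyhedron R ps := by
  simp [polyhedron]

theorem mem_polyhedron_cons {R : ℝ} {p : (Fin N → ℂ) → ℂ} {ps : List ((Fin N → ℂ) → ℂ)}
    {z : Fin N → ℂ} :
    z ∈ polyhedron R (p :: ps) ↔ p z ∈ closedSquare R ∧ z ∈ polyhedron R ps := by
  simp [polyhedron]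

/-- Extension of a holomorphic function on a polyhedron from a graph in one more variable. -/
theorem exists_extension_graph {R : ℝ} {p : (Fin N → ℂ) → ℂ} (hp : Differentiable ℂ p)
    {ps : List ((Fin N → ℂ) → ℂ)} (hps : ∀ p ∈ ps, Differentiable ℂ p)
    (hC : CousinSet (polyhedron R (ps.map fun p (y : Fin (N + 1) → ℂ) => p (Fin.tail y))))
    {a b : Fin N × Bool → ℝ} {g : (Fin N → ℂ) → ℂ}
    (hg : HolNear g (polyhedron R (p :: ps) ∩ complexBox a b)) :
    ∃ F : (Fin (N + 1) → ℂ) → ℂ,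
      HolNear F (polyhedron R (ps.map fun p (y : Fin (N + 1) → ℂ) => p (Fin.tail y)) ∩
        complexBox (boxCons (-R) a) (boxCons R b)) ∧
      ∀ x ∈ polyhedron R (p :: ps) ∩ complexBox a b, ∀ᶠ z in 𝓝 x, g z = F (Fin.cons (p z) z) := by
  have hcl := isClosed_polyhedron (R := R)
    (ps := ps.map fun p (y : Fin (N + 1) → ℂ) => p (Fin.tail y)) (by
      simp only [List.mem_map, forall_exists_index, and_imp, forall_apply_eq_imp_iff₂]
      exact fun q hq => (hps q hq).comp differentiable_tail)
  obtain ⟨F, hF, hFe⟩ := hC.extendsOver hcl (i := 0) (ψ := fun y => p (Fin.tail y))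
    (f := fun y => g (Fin.tail y)) (hp.comp differentiable_tail) (fun y c => by simp)
    (a := boxCons (-R) a) (b := boxCons R b) (hg.comp differentiable_tail (by
      rintro y ⟨⟨h₁, h₂⟩, h₃⟩
      rw [mem_complexBox_boxCons] at h₂
      have h₃ : y 0 = p (Fin.tail y) := h₃
      exact ⟨mem_polyhedron_cons.2 ⟨h₃ ▸ h₂.1, polyhedron_map_tail.1 h₁⟩, h₂.2⟩))
  refine ⟨F, hF, fun x hx => ?_⟩
  have hx' := mem_polyhedron_cons.1 hx.1
  have := hFe (Fin.cons (p x) x) ⟨polyhedron_map_tail.2 (by simpa using hx'.2),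
    mem_complexBox_boxCons.2 ⟨by simpa using hx'.1, by simpa using hx.2⟩⟩ (by simp)
  filter_upwards [(differentiable_graph hp).continuous.continuousAt.eventually this] with z hz
  simpa using (hz (by simp)).symm

theorem cousinSet_polyhedron (R : ℝ) (m : ℕ) : ∀ (N : ℕ) (ps : List ((Fin N → ℂ) → ℂ)),
    ps.length = m → (∀ p ∈ ps, Differentiable ℂ p) → CousinSet (polyhedron R ps) := by
  induction m with
  | zero =>
    intro N ps hlen _ a b k c hac hcb g hg
    have : polyhedron R ps = univ := by
      rw [List.length_eq_zero_iff.1 hlen]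
      ext; simp [polyhedron]
    simp only [this, univ_inter] at hg ⊢
    exact exists_cousin_split_box ⟨hac, hcb⟩ hg
  | succ m ih =>
    intro N ps hlen hps a b k c hac hcb g hg
    obtain ⟨p, ps, rfl⟩ := List.exists_cons_of_length_eq_add_one hlen
    simp only [List.length_cons, add_left_inj] at hlen
    simp only [List.mem_cons, forall_eq_or_imp] at hps
    have hC := ih (N + 1) (ps.map fun p (y : Fin (N + 1) → ℂ) => p (Fin.tail y)) (by simpa)
      (by
        simp only [List.mem_map, forall_exists_index, and_imp, forall_apply_eq_imp_iff₂]
        exact fun q hq => (hps.2 q hq).comp differentiable_tail)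
    rw [complexBox_inter_eq hac hcb] at hg
    obtain ⟨F, hF, hFe⟩ := exists_extension_graph hps.1 hps.2 hC hg
    rw [← update_boxCons, ← update_boxCons, ← complexBox_inter_eq (by exact hac) (by exact hcb)]
      at hF
    obtain ⟨F₁, F₂, hF₁, hF₂, hFF⟩ := hC _ _ _ _ (by exact hac) (by exact hcb) F hF
    have hgr := differentiable_graph hps.1
    have hmem : ∀ z ∈ polyhedron R (p :: ps) ∩ complexBox a b,
        (Fin.cons (p z) z : Fin (N + 1) → ℂ) ∈
        polyhedron R (ps.map fun p (y : Fin (N + 1) → ℂ) => p (Fin.tail y)) ∧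
        (Fin.cons (p z) z : Fin (N + 1) → ℂ) ∈ complexBox (boxCons (-R) a) (boxCons R b) := by
      intro z hz
      have := mem_polyhedron_cons.1 hz.1
      exact ⟨polyhedron_map_tail.2 (by simpa using this.2),
        mem_complexBox_boxCons.2 ⟨by simpa using this.1, by simpa using hz.2⟩⟩
    refine ⟨_, _, hF₁.comp hgr ?_, hF₂.comp hgr ?_, fun x hx => ?_⟩
    · rintro z ⟨h₁, h₂, h₃⟩
      have := hmem z ⟨h₁, h₂⟩
      exact ⟨this.1, this.2, h₃⟩
    · rintro z ⟨h₁, h₂, h₃⟩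
      have := hmem z ⟨h₁, h₂⟩
      exact ⟨this.1, this.2, h₃⟩
    · have h1 := hFe x (by rwa [complexBox_inter_eq hac hcb] at hx)
      have hx' := hmem x ⟨hx.1, hx.2.1⟩
      have h2 := hFF _ ⟨hx'.1, hx'.2, hx.2.2⟩
      filter_upwards [h1, hgr.continuous.continuousAt.eventually h2] with z e1 e2
      rw [e1, e2]

end Cousin

section FunctionalCalculus
open Filter Topology

variable {Y : Type*} [TopologicalSpace Y] [CompactSpace Y]

theorem mem_complexBox_of_norm_le {N : ℕ} {R : ℝ} {z : Fin N → ℂ} (h : ∀ i, ‖z i‖ ≤ R) :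
    z ∈ complexBox (fun _ => -R) (fun _ => R) := fun k => by
  obtain ⟨i, _ | _⟩ := k
  · exact abs_le.1 ((Complex.abs_re_le_norm (z i)).trans (h i))
  · exact abs_le.1 ((Complex.abs_im_le_norm (z i)).trans (h i))

/-- The Cauchy kernel of an element of norm `< ρ` belongs to the closed algebra. -/
theorem exists_mem_inverse {A : Subalgebra ℂ C(Y, ℂ)} (hA : IsClosed (A : Set C(Y, ℂ)))
    {x : C(Y, ℂ)} (hx : x ∈ A) {r ρ : ℝ} (hrρ : r < ρ) (hr : ∀ y, ‖x y‖ ≤ r) {ζ : ℂ}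
    (hζ : ‖ζ‖ = ρ) {k : C(Y, ℂ)} (hk : ∀ y, k y = (ζ - x y)⁻¹) : k ∈ A := by
  rcases isEmpty_or_nonempty Y with hY | ⟨⟨y₀⟩⟩
  · rw [show k = 0 from ContinuousMap.ext fun y => hY.elim y]
    exact A.zero_mem
  have hρ : 0 < ρ := ((norm_nonneg _).trans (hr y₀)).trans_lt hrρ
  have hζ0 : ζ ≠ 0 := norm_pos_iff.1 (hζ ▸ hρ)
  have : CompleteSpace A := hA.completeSpace_coe
  set t : A := ⟨ζ⁻¹ • x, A.smul_mem hx _⟩ with ht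
  have hnt : ‖t‖ < 1 := by
    change ‖ζ⁻¹ • x‖ < 1
    rw [norm_smul, norm_inv, hζ, inv_mul_lt_one₀ hρ]
    exact lt_of_le_of_lt ((ContinuousMap.norm_le _ ((norm_nonneg _).trans (hr y₀))).2 hr) hrρ
  obtain ⟨v, hv⟩ := (isUnit_one_sub_of_norm_lt_one hnt).exists_right_inv
  have hk' : k = ζ⁻¹ • (v : C(Y, ℂ)) := by
    ext y
    have h1 : (1 - ζ⁻¹ * x y) * (v : C(Y, ℂ)) y = 1 :=
      congrArg (fun w : A => (w : C(Y, ℂ)) y) hv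
    have hne : ζ - x y ≠ 0 := fun h => by
      have := hr y
      rw [← sub_eq_zero.1 h, hζ] at this
      linarith
    rw [hk, ContinuousMap.smul_apply, smul_eq_mul]
    field_simp at h1 ⊢
    linear_combination -h1
  rw [hk']
  exact A.smul_mem v.2 _

/-- The integral of a continuous family of elements of a closed subalgebra belongs to it. -/
theorem exists_mem_intervalIntegral {A : Subalgebra ℂ C(Y, ℂ)}
    (hA : IsClosed (A : Set C(Y, ℂ))) {φ : ℝ → C(Y, ℂ)} (hφ : Continuous φ) (hφA : ∀ t, φ t ∈ A)
    (s t : ℝ) : ∃ F ∈ A, ∀ y, F y = ∫ τ in s..t, φ τ y := by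
  have : CompleteSpace A := hA.completeSpace_coe
  set ψ : ℝ → A := fun t => ⟨φ t, hφA t⟩ with hψ
  have hψc : Continuous ψ := hφ.subtype_mk hφA
  refine ⟨(∫ τ in s..t, ψ τ : A), (∫ τ in s..t, ψ τ : A).2, fun y => ?_⟩
  let L : A →L[ℂ] ℂ := (ContinuousMap.evalCLM ℂ y).comp (Submodule.subtypeL A.toSubmodule)
  exact (L.intervalIntegral_comp_comm (hψc.intervalIntegrable s t)).symm

/-- Holomorphic functional calculus in a closed algebra of functions, on a polydisc. -/
theorem exists_mem_comp_box {N : ℕ} {R r : ℝ} (hr0 : 0 ≤ r) (hrR : r < R) {f : (Fin N → ℂ) → ℂ}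
    (hf : HolNear f (complexBox (fun _ => -R) (fun _ => R))) {A : Subalgebra ℂ C(Y, ℂ)}
    (hA : IsClosed (A : Set C(Y, ℂ))) (T : Finset (Fin N)) :
    ∀ a : Fin N → C(Y, ℂ), (∀ i, a i ∈ A) → (∀ i ∈ T, ∀ y, ‖a i y‖ ≤ r) →
      (∀ i ∉ T, ∃ c : ℂ, ‖c‖ ≤ R ∧ ∀ y, a i y = c) →
      ∃ F ∈ A, ∀ y, F y = f (fun i => a i y) := by
  classical
  induction T using Finset.induction_on with
  | empty =>
    intro a _ _ hc
    choose c hc using fun i => hc i (by simp)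
    refine ⟨algebraMap ℂ _ (f c), A.algebraMap_mem _, fun y => ?_⟩
    simp [show (fun i => a i y) = c from funext fun i => (hc i).2 y]
  | insert j T hjT ih =>
    intro a haA har hac
    have hjr : ∀ y, ‖a j y‖ ≤ r := har j (by simp)
    have hR : 0 < R := hr0.trans_lt hrR
    have hbd : ∀ i y, i ≠ j → ‖a i y‖ ≤ R := fun i y hij => by
      by_cases hi : i ∈ T
      · exact (har i (by simp [hi]) y).trans hrR.le
      · obtain ⟨c, hc, hcy⟩ := hac i (by simp [hi, hij])
        rw [hcy]; exact hc
    have hbox : ∀ y, ∀ ζ ∈ closedBall (0 : ℂ) R, Function.update (fun i => a i y) j ζ ∈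
        complexBox (fun _ => -R) (fun _ => R) := fun y ζ hζ => by
      refine mem_complexBox_of_norm_le fun i => ?_
      by_cases h : i = j
      · subst h; simpa using hζ
      · simpa [Function.update_of_ne h] using hbd i y h
    have hcm : Continuous (circleMap 0 R) := continuous_circleMap _ _
    have hmem : ∀ θ, circleMap 0 R θ ∈ closedBall (0 : ℂ) R := fun θ =>
      circleMap_mem_closedBall _ hR.le θ
    have hnorm : ∀ θ, ‖circleMap 0 R θ‖ = R := fun θ => by
      simpa using circleMap_mem_sphere 0 hR.le θ
    have hne : ∀ θ y, circleMap 0 R θ - a j y ≠ 0 := fun θ y h => by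
      have := hjr y
      rw [← sub_eq_zero.1 h, hnorm] at this
      linarith
    have hc1 : Continuous fun q : ℝ × Y =>
        f (Function.update (fun i => a i q.2) j (circleMap 0 R q.1)) :=
      hf.continuousOn.comp_continuous ((continuous_pi fun i => (a i).continuous.comp
        continuous_snd).update j (hcm.comp continuous_fst)) fun q => hbox q.2 _ (hmem q.1)
    have hc2 : Continuous fun q : ℝ × Y => (circleMap 0 R q.1 - a j q.2)⁻¹ :=
      Continuous.inv₀ ((hcm.comp continuous_fst).sub ((a j).continuous.comp continuous_snd))
        fun q => hne q.1 q.2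
    set φ₁ : ℝ → C(Y, ℂ) := fun θ => ⟨fun y => f (Function.update (fun i => a i y) j
      (circleMap 0 R θ)), hc1.comp (Continuous.prodMk_right θ)⟩ with hφ₁
    set φ₂ : ℝ → C(Y, ℂ) := fun θ => ⟨fun y => (circleMap 0 R θ - a j y)⁻¹,
      Continuous.inv₀ (continuous_const.sub (a j).continuous) (hne θ)⟩ with hφ₂
    have hφ₁c : Continuous φ₁ := ContinuousMap.continuous_of_continuous_uncurry _ hc1
    have hφ₂c : Continuous φ₂ := ContinuousMap.continuous_of_continuous_uncurry _ hc2
    have hdc : Continuous fun θ => (2 * Real.pi * Complex.I)⁻¹ * deriv (circleMap 0 R) θ := by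
      simp only [deriv_circleMap]
      exact continuous_const.mul (hcm.mul continuous_const)
    have hφ₁A : ∀ θ, φ₁ θ ∈ A := fun θ => by
      obtain ⟨F, hFA, hF⟩ := ih (Function.update a j (algebraMap ℂ _ (circleMap 0 R θ)))
        (fun i => by
          by_cases h : i = j
          · subst h; simp
          · simpa [Function.update_of_ne h] using haA i)
        (fun i hi y => by
          have h : i ≠ j := fun h => hjT (h ▸ hi)
          simpa [Function.update_of_ne h] using har i (by simp [hi]) y)
        (fun i hi => by
          by_cases h : i = j
          · subst h
            exact ⟨circleMap 0 R θ, (hnorm θ).le, fun y => by simp⟩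
          · simpa [Function.update_of_ne h] using hac i (by simp [hi, h]))
      have : φ₁ θ = F := by
        ext y
        rw [hF]
        simp only [hφ₁, ContinuousMap.coe_mk]
        congr 1
        ext i
        by_cases h : i = j
        · subst h; simp
        · simp [Function.update_of_ne h]
      exact this ▸ hFA
    have hφ₂A : ∀ θ, φ₂ θ ∈ A := fun θ =>
      exists_mem_inverse hA (haA j) hrR hjr (hnorm θ) fun y => rfl
    obtain ⟨F, hFA, hF⟩ := exists_mem_intervalIntegral hA (hdc.smul (hφ₁c.mul hφ₂c))
      (fun θ => A.smul_mem (A.mul_mem (hφ₁A θ) (hφ₂A θ)) _) 0 (2 * Real.pi)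
    refine ⟨F, hFA, fun y => ?_⟩
    have hd : DifferentiableOn ℂ (fun ζ => f (Function.update (fun i => a i y) j ζ))
        (closedBall 0 R) := fun ζ hζ => ((hf _ (hbox y ζ hζ)).self_of_nhds.comp ζ
          (differentiable_update_right j _ ζ)).differentiableWithinAt
    have hC := hd.circleIntegral_sub_inv_smul (w := a j y)
      (by simpa using (hjr y).trans_lt hrR)
    rw [Function.update_eq_self_iff.2 rfl, smul_eq_mul, circleIntegral] at hC
    rw [hF, ← mul_right_inj' Complex.two_pi_I_ne_zero, ← hC,
      ← intervalIntegral.integral_const_mul]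
    refine intervalIntegral.integral_congr fun θ _ => ?_
    change 2 * Real.pi * Complex.I * ((2 * Real.pi * Complex.I)⁻¹ * deriv (circleMap 0 R) θ *
      (f (Function.update (fun i => a i y) j (circleMap 0 R θ)) * (circleMap 0 R θ - a j y)⁻¹)) =
      deriv (circleMap 0 R) θ * ((circleMap 0 R θ - a j y)⁻¹ *
        f (Function.update (fun i => a i y) j (circleMap 0 R θ)))
    rw [mul_assoc _⁻¹, mul_inv_cancel_left₀ Complex.two_pi_I_ne_zero, mul_comm (f _)]

/-- Holomorphic functional calculus in a closed algebra of functions, on a polyhedron. -/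
theorem exists_mem_comp_polyhedron {R r : ℝ} (hr0 : 0 ≤ r) (hrR : r < R)
    {A : Subalgebra ℂ C(Y, ℂ)} (hA : IsClosed (A : Set C(Y, ℂ))) (m : ℕ) :
    ∀ (N : ℕ) (ps : List ((Fin N → ℂ) → ℂ)), ps.length = m → (∀ p ∈ ps, Differentiable ℂ p) →
    ∀ f : (Fin N → ℂ) → ℂ,
      HolNear f (polyhedron R ps ∩ complexBox (fun _ => -R) (fun _ => R)) →
    ∀ a : Fin N → C(Y, ℂ), (∀ i, a i ∈ A) → (∀ i y, ‖a i y‖ ≤ r) →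
      (∀ p ∈ ps, ∃ q ∈ A, ∀ y, q y = p (fun i => a i y) ∧ ‖q y‖ ≤ r) →
      ∃ F ∈ A, ∀ y, F y = f (fun i => a i y) := by
  induction m with
  | zero =>
    intro N ps hlen _ f hf a haA har _
    have : polyhedron R ps = univ := by
      rw [List.length_eq_zero_iff.1 hlen]
      ext; simp [polyhedron]
    rw [this, univ_inter] at hf
    exact exists_mem_comp_box hr0 hrR hf hA Finset.univ a haA (fun i _ => har i) (by simp)
  | succ m ih =>
    intro N ps hlen hps f hf a haA har hq
    have hfull := hq
    obtain ⟨p, ps, rfl⟩ := List.exists_cons_of_length_eq_add_one hlen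
    simp only [List.length_cons, add_left_inj] at hlen
    simp only [List.mem_cons, forall_eq_or_imp] at hps hq
    have hps' : ∀ q ∈ ps.map (fun p (y : Fin (N + 1) → ℂ) => p (Fin.tail y)),
        Differentiable ℂ q := by
      simp only [List.mem_map, forall_exists_index, and_imp, forall_apply_eq_imp_iff₂]
      exact fun q hq => (hps.2 q hq).comp differentiable_tail
    have hC := cousinSet_polyhedron R m (N + 1) _ (by simpa) hps'
    obtain ⟨F, hF, hFe⟩ := exists_extension_graph hps.1 hps.2 hC hf
    have hbc : ∀ s : ℝ, boxCons s (fun _ : Fin N × Bool => s) = fun _ => s := fun s => by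
      ext ⟨j, q⟩
      refine Fin.cases rfl (fun j => rfl) j
    rw [hbc, hbc] at hF
    obtain ⟨⟨q, hqA, hqp⟩, hqs⟩ := hq
    obtain ⟨G, hGA, hG⟩ := ih (N + 1) _ (by simpa) hps' F hF (Fin.cons q a)
      (fun i => by refine Fin.cases ?_ (fun i => ?_) i <;> simp [hqA, haA])
      (fun i y => by
        refine Fin.cases ?_ (fun i => ?_) i
        · simpa using (hqp y).2
        · simpa using har i y)
      (by
        simp only [List.mem_map, forall_exists_index, and_imp, forall_apply_eq_imp_iff₂]
        intro p' hp'
        obtain ⟨q', hq'A, hq'⟩ := hqs p' hp'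
        exact ⟨q', hq'A, fun y => ⟨(hq' y).1, (hq' y).2⟩⟩)
    refine ⟨G, hGA, fun y => ?_⟩
    have hy : (fun i => a i y) ∈ polyhedron R (p :: ps) ∩
        complexBox (fun _ => -R) (fun _ => R) := by
      refine ⟨fun p' hp' => ?_, mem_complexBox_of_norm_le fun i => (har i y).trans hrR.le⟩
      obtain ⟨q', -, hq'⟩ := hfull p' hp'
      rw [← (hq' y).1]
      exact ⟨(Complex.abs_re_le_norm _).trans ((hq' y).2.trans hrR.le),
        (Complex.abs_im_le_norm _).trans ((hq' y).2.trans hrR.le)⟩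
    rw [(hFe _ hy).self_of_nhds, hG]
    congr 1
    ext i
    refine Fin.cases ?_ (fun i => ?_) i
    · simpa using (hqp y).1
    · simp

end FunctionalCalculus

section Separation
open Filter Topology

theorem differentiable_mvPolynomial_eval {N : ℕ} (p : MvPolynomial (Fin N) ℂ) :
    Differentiable ℂ fun z : Fin N → ℂ => eval z p := by
  induction p using MvPolynomial.induction_on with
  | C c => simp
  | add p q hp hq => simp only [map_add]; exact hp.add hq
  | mul_X p i hp => simp only [map_mul, eval_X]; exact hp.mul (differentiable_apply i)

theorem MvPolynomial.aeval_continuousMap_apply {Y σ : Type*} [TopologicalSpace Y]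
    (a : σ → C(Y, ℂ)) (p : MvPolynomial σ ℂ) (y : Y) :
    (aeval a p) y = eval (fun i => a i y) p := by
  induction p using MvPolynomial.induction_on with
  | C c => simp
  | add p q hp hq => simp [hp, hq]
  | mul_X p i hp => simp [hp]

theorem MvPolynomial.aeval_mem_subalgebra {σ B : Type*} [CommRing B] [Algebra ℂ B]
    {A : Subalgebra ℂ B} {a : σ → B} (ha : ∀ i, a i ∈ A) (p : MvPolynomial σ ℂ) :
    aeval a p ∈ A := by
  induction p using MvPolynomial.induction_on with
  | C c => simp
  | add p q hp hq => simpa using A.add_mem hp hq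
  | mul_X p i hp => simpa using A.mul_mem hp (ha i)

/-- The Oka–Weil theorem, in the form of a functional calculus: functions holomorphic near a
polynomially convex compact set operate on closed algebras of functions. -/
theorem exists_mem_comp_of_polyConvex {N : ℕ} {L : Set (Fin N → ℂ)} (hL : IsCompact L)
    (hLpc : ∀ z : Fin N → ℂ, (∀ p : MvPolynomial (Fin N) ℂ,
      ‖eval z p‖ ≤ sSup ((fun w => ‖eval w p‖) '' L)) → z ∈ L)
    {f : (Fin N → ℂ) → ℂ} (hf : HolNear f L) {Y : Type*} [TopologicalSpace Y] [CompactSpace Y]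
    {A : Subalgebra ℂ C(Y, ℂ)} (hA : IsClosed (A : Set C(Y, ℂ))) {a : Fin N → C(Y, ℂ)}
    (haA : ∀ i, a i ∈ A) (haL : ∀ y, (fun i => a i y) ∈ L) :
    ∃ F ∈ A, ∀ y, F y = f (fun i => a i y) := by
  classical
  rcases isEmpty_or_nonempty Y with hY | ⟨⟨y₀⟩⟩
  · exact ⟨0, A.zero_mem, fun y => hY.elim y⟩
  obtain ⟨M, hM⟩ := hL.isBounded.exists_norm_le
  have hM0 : 0 ≤ M := (norm_nonneg _).trans (hM _ (haL y₀))
  set r := M + 1 with hr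
  set R := r + 1 with hR
  set U := {x | ∀ᶠ y in 𝓝 x, DifferentiableAt ℂ f y} with hU
  have hUo : IsOpen U := HolNear.isOpen_setOf f
  have hC : IsCompact (complexBox (fun _ : Fin N × Bool => -R) (fun _ => R) \ U) :=
    (isCompact_complexBox _ _).diff hUo
  have hpt : ∀ x : Fin N → ℂ, x ∉ U → ∃ q : MvPolynomial (Fin N) ℂ,
      (∀ z ∈ L, ‖eval z q‖ ≤ r) ∧ 2 * R < ‖eval x q‖ := by
    intro x hx
    have hxL : x ∉ L := fun h => hx (hf x h)
    obtain ⟨p, hp⟩ := not_forall.1 (fun h => hxL (hLpc x h))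
    rw [not_le] at hp
    obtain ⟨t, ht1, ht2⟩ := exists_between hp
    have hbdd : BddAbove ((fun w => ‖eval w p‖) '' L) :=
      (hL.image (differentiable_mvPolynomial_eval p).continuous.norm).bddAbove
    have hpt : ∀ z ∈ L, ‖eval z p‖ ≤ t := fun z hz =>
      (le_csSup hbdd (mem_image_of_mem _ hz)).trans ht1.le
    have ht0 : 0 < t := lt_of_le_of_lt
      ((norm_nonneg _).trans (le_csSup hbdd (mem_image_of_mem _ (haL y₀)))) ht1
    obtain ⟨k, hk⟩ := pow_unbounded_of_one_lt (2 * R) ((one_lt_div ht0).2 ht2)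
    refine ⟨(C (t : ℂ)⁻¹ * p) ^ k, fun z hz => ?_, ?_⟩
    · simp only [map_pow, map_mul, eval_C, norm_pow, norm_mul, norm_inv, Complex.norm_real,
        Real.norm_eq_abs, abs_of_pos ht0]
      refine (pow_le_one₀ (by positivity) ?_).trans (by linarith)
      rw [inv_mul_le_one₀ ht0]
      exact hpt z hz
    · simp only [map_pow, map_mul, eval_C, norm_pow, norm_mul, norm_inv, Complex.norm_real,
        Real.norm_eq_abs, abs_of_pos ht0]
      rwa [inv_mul_eq_div]
  choose! q hq1 hq2 using hpt
  have hqc : ∀ x, Continuous fun z : Fin N → ℂ => ‖eval z (q x)‖ := fun x =>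
    (differentiable_mvPolynomial_eval (q x)).continuous.norm
  obtain ⟨t, htC, hcover⟩ := hC.elim_nhds_subcover (fun x => {z | 2 * R < ‖eval z (q x)‖})
    (fun x hx => (isOpen_lt continuous_const (hqc x)).mem_nhds (hq2 x hx.2))
  have hsub : polyhedron R (t.toList.map fun x z => eval z (q x)) ∩
      complexBox (fun _ => -R) (fun _ => R) ⊆ U := by
    rintro z ⟨h₁, h₂⟩
    by_contra hz
    obtain ⟨x, hx, hzx⟩ := mem_iUnion₂.1 (hcover ⟨h₂, hz⟩)
    have h3 : eval z (q x) ∈ closedSquare R := h₁ _ (List.mem_map.2 ⟨x, by simpa using hx, rfl⟩)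
    have h4 : 2 * R < ‖eval z (q x)‖ := hzx
    linarith [Complex.norm_le_abs_re_add_abs_im (eval z (q x)), h3.1, h3.2]
  refine exists_mem_comp_polyhedron (r := r) (R := R) (by linarith) (by linarith) hA _ N
    (t.toList.map fun x z => eval z (q x)) rfl ?_ f (fun x hx => hsub hx) a haA ?_ ?_
  · intro p hp
    obtain ⟨x, -, rfl⟩ := List.mem_map.1 hp
    exact differentiable_mvPolynomial_eval (q x)
  · intro i y
    have := (norm_le_pi_norm (fun i => a i y) i).trans (hM _ (haL y))
    linarith
  · intro p hp
    obtain ⟨x, hx, rfl⟩ := List.mem_map.1 hp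
    refine ⟨aeval a (q x), MvPolynomial.aeval_mem_subalgebra haA _, fun y => ⟨?_, ?_⟩⟩
    · exact MvPolynomial.aeval_continuousMap_apply _ _ _
    · rw [MvPolynomial.aeval_continuousMap_apply]
      exact hq1 x (htC x (by simpa using hx)).2 _ (haL y)

/-- A closed algebra of functions generated by the coordinates of a product of polynomially convex
compact sets contains a solution of the corona problem. -/
theorem exists_approx_one {N n : ℕ} {L : Set (Fin N → ℂ)} (hL : IsCompact L)
    (hLpc : ∀ z : Fin N → ℂ, (∀ p : MvPolynomial (Fin N) ℂ,
      ‖eval z p‖ ≤ sSup ((fun w => ‖eval w p‖) '' L)) → z ∈ L)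
    {K : Set (Fin n → ℂ)} (hK : IsCompact K)
    (hKpc : ∀ z : Fin n → ℂ, (∀ p : MvPolynomial (Fin n) ℂ,
      ‖eval z p‖ ≤ sSup ((fun w => ‖eval w p‖) '' K)) → z ∈ K)
    {f : Fin n → (Fin N → ℂ) → ℂ} (hf : ∀ j, HolNear (f j) L)
    (hfK : ∀ z ∈ L, (fun j => f j z) ∉ K) {ρ : ℝ} (hρ : 0 < ρ) :
    ∃ G : Fin n → MvPolynomial (Fin N ⊕ Fin n) ℂ, ∀ z ∈ L, ∀ w ∈ K,
      ‖1 - ∑ j, eval (Sum.elim z w) (G j) * (w j - f j z)‖ ≤ ρ := by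
  classical
  have : CompactSpace (L ×ˢ K : Set ((Fin N → ℂ) × (Fin n → ℂ))) :=
    isCompact_iff_compactSpace.1 (hL.prod hK)
  set Y : Type := ↥(L ×ˢ K : Set ((Fin N → ℂ) × (Fin n → ℂ))) with hY
  let crd : Fin N ⊕ Fin n → C(Y, ℂ) := Sum.elim
    (fun i => ⟨fun y => y.1.1 i, by fun_prop⟩) (fun j => ⟨fun y => y.1.2 j, by fun_prop⟩)
  have hcrd : ∀ y : Y, (fun i => crd i y) = Sum.elim y.1.1 y.1.2 := fun y => by
    ext i; rcases i with i | j <;> rfl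
  set A : Subalgebra ℂ C(Y, ℂ) := (aeval (R := ℂ) crd).range.topologicalClosure with hA
  have hAc : IsClosed (A : Set C(Y, ℂ)) := Subalgebra.isClosed_topologicalClosure _
  have hpolA : ∀ p, aeval (R := ℂ) crd p ∈ A := fun p =>
    Subalgebra.le_topologicalClosure _ ⟨p, rfl⟩
  have hcrdA : ∀ i, crd i ∈ A := fun i => by simpa using hpolA (X i)
  choose Fj hFjA hFj using fun j => exists_mem_comp_of_polyConvex hL hLpc (hf j) hAc
    (a := fun i => crd (Sum.inl i)) (fun i => hcrdA _) (fun y => y.2.1)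
  have hFj' : ∀ j (y : Y), Fj j y = f j y.1.1 := fun j y => hFj j y
  set u : Fin n → A := fun j => ⟨crd (Sum.inr j) - Fj j, A.sub_mem (hcrdA _) (hFjA j)⟩ with hu
  have : CompleteSpace A := hAc.completeSpace_coe
  have htop : Ideal.span (range u) = ⊤ := by
    by_contra hne
    obtain ⟨I, hI, hle⟩ := Ideal.exists_le_maximal _ hne
    set φ : A →ₐ[ℂ] ℂ := WeakDual.CharacterSpace.equivAlgHom I.toCharacterSpace with hφ
    have hφ0 : ∀ j, φ (u j) = 0 := fun j =>
      I.toCharacterSpace_apply_eq_zero_of_mem (hle (Ideal.subset_span (mem_range_self j)))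
    have hone : ‖(1 : A)‖ ≤ 1 := by
      change ‖(1 : C(Y, ℂ))‖ ≤ 1
      exact (ContinuousMap.norm_le _ zero_le_one).2 (by simp)
    have hφn : ∀ x, ‖φ x‖ ≤ ‖x‖ := fun x =>
      (AlgHom.norm_apply_le_self_mul_norm_one φ x).trans
        (mul_le_of_le_one_right (norm_nonneg _) hone)
    have hφp : ∀ p, φ ⟨aeval crd p, hpolA p⟩ = eval (fun i => φ ⟨crd i, hcrdA i⟩) p := by
      intro p
      induction p using MvPolynomial.induction_on with
      | C c =>
        exact (congrArg φ (Subtype.ext (by simp)) :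
          φ ⟨aeval crd (C c), hpolA _⟩ = φ (algebraMap ℂ A c)).trans
            ((φ.commutes c).trans (by simp))
      | add p q hp hq =>
        have h : (⟨aeval crd (p + q), hpolA _⟩ : A) = ⟨aeval crd p, hpolA p⟩ +
          ⟨aeval crd q, hpolA q⟩ := Subtype.ext (map_add _ _ _)
        rw [h, map_add φ, hp, hq, map_add]
      | mul_X p i hp =>
        have h : (⟨aeval crd (p * X i), hpolA _⟩ : A) = ⟨aeval crd p, hpolA p⟩ *
          ⟨crd i, hcrdA i⟩ := Subtype.ext (by simp)
        rw [h, map_mul φ, hp, map_mul, eval_X]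
    set z₀ : Fin N → ℂ := fun i => φ ⟨crd (Sum.inl i), hcrdA _⟩ with hz₀
    set w₀ : Fin n → ℂ := fun j => φ ⟨crd (Sum.inr j), hcrdA _⟩ with hw₀
    have hz₀L : z₀ ∈ L := hLpc z₀ fun p => by
      have h1 := hφp (rename Sum.inl p)
      rw [eval_rename] at h1
      rw [show z₀ = (fun i => φ ⟨crd i, hcrdA i⟩) ∘ Sum.inl from rfl, ← h1]
      refine (hφn _).trans ?_
      change ‖aeval crd (rename Sum.inl p)‖ ≤ _
      refine (ContinuousMap.norm_le _ (Real.sSup_nonneg ?_)).2 fun y => ?_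
      · rintro _ ⟨w, -, rfl⟩; exact norm_nonneg _
      · rw [MvPolynomial.aeval_continuousMap_apply, eval_rename]
        exact le_csSup (hL.image (differentiable_mvPolynomial_eval p).continuous.norm).bddAbove
          ⟨y.1.1, y.2.1, rfl⟩
    have hw₀K : w₀ ∈ K := hKpc w₀ fun p => by
      have h1 := hφp (rename Sum.inr p)
      rw [eval_rename] at h1
      rw [show w₀ = (fun i => φ ⟨crd i, hcrdA i⟩) ∘ Sum.inr from rfl, ← h1]
      refine (hφn _).trans ?_
      change ‖aeval crd (rename Sum.inr p)‖ ≤ _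
      refine (ContinuousMap.norm_le _ (Real.sSup_nonneg ?_)).2 fun y => ?_
      · rintro _ ⟨w, -, rfl⟩; exact norm_nonneg _
      · rw [MvPolynomial.aeval_continuousMap_apply, eval_rename]
        exact le_csSup (hK.image (differentiable_mvPolynomial_eval p).continuous.norm).bddAbove
          ⟨y.1.2, y.2.2, rfl⟩
    set y₀ : Y := ⟨(z₀, w₀), hz₀L, hw₀K⟩ with hy₀
    have hφy : ∀ x : A, φ x = (x : C(Y, ℂ)) y₀ := by
      intro x
      refine eq_of_forall_dist_le fun ε hε => ?_
      obtain ⟨_, ⟨p, rfl⟩, hp⟩ := Metric.mem_closure_iff.1 (show (x : C(Y, ℂ)) ∈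
        closure ((aeval (R := ℂ) crd).range : Set C(Y, ℂ)) from x.2) (ε / 2) (half_pos hε)
      have h1 : φ ⟨aeval crd p, hpolA p⟩ = (aeval crd p) y₀ := by
        rw [hφp, MvPolynomial.aeval_continuousMap_apply]
        congr 2
        ext i; rcases i with i | j <;> rfl
      have h2 : dist (φ x) (φ ⟨aeval crd p, hpolA p⟩) ≤ ε / 2 := by
        rw [dist_eq_norm, ← map_sub]
        refine (hφn _).trans ?_
        rw [dist_eq_norm] at hp
        exact hp.le
      have h3 : dist ((aeval crd p) y₀) ((x : C(Y, ℂ)) y₀) ≤ ε / 2 := by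
        rw [dist_comm]
        exact (ContinuousMap.dist_apply_le_dist y₀).trans hp.le
      rw [h1] at h2
      linarith [dist_triangle (φ x) ((aeval crd p) y₀) ((x : C(Y, ℂ)) y₀)]
    refine hfK z₀ hz₀L ?_
    have : (fun j => f j z₀) = w₀ := by
      ext j
      have h1 := hφ0 j
      rw [hφy] at h1
      have h2 : w₀ j - Fj j y₀ = 0 := h1
      rw [hFj', sub_eq_zero] at h2
      exact h2.symm
    rw [this]
    exact hw₀K
  obtain ⟨g, hg⟩ := (Ideal.mem_span_range_iff_exists_fun).1
    (htop ▸ Submodule.mem_top : (1 : A) ∈ Ideal.span (range u))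
  set S := ∑ j, ‖u j‖ with hS
  have hS0 : 0 ≤ S := Finset.sum_nonneg fun j _ => norm_nonneg _
  have hε : 0 < ρ / (S + 1) := by positivity
  have happ : ∀ j, ∃ p : MvPolynomial (Fin N ⊕ Fin n) ℂ,
      dist (g j : C(Y, ℂ)) (aeval crd p) < ρ / (S + 1) := fun j => by
    obtain ⟨_, ⟨p, rfl⟩, hp⟩ := Metric.mem_closure_iff.1 (show (g j : C(Y, ℂ)) ∈
      closure ((aeval (R := ℂ) crd).range : Set C(Y, ℂ)) from (g j).2) _ hε
    exact ⟨p, hp⟩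
  choose G hG using happ
  refine ⟨G, fun z hz w hw => ?_⟩
  set y : Y := ⟨(z, w), hz, hw⟩ with hy
  have h1 : ∑ j, (g j : C(Y, ℂ)) y * (w j - f j z) = 1 := by
    have h := congrArg (fun x : A => (x : C(Y, ℂ)) y) hg
    simp only [AddSubmonoidClass.coe_finsetSum, ContinuousMap.coe_sum, Finset.sum_apply] at h
    rw [← show ((1 : A) : C(Y, ℂ)) y = 1 from rfl, ← h]
    refine Finset.sum_congr rfl fun j _ => ?_
    rw [← hFj' j y]
    rfl
  rw [← h1, ← Finset.sum_sub_distrib]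
  calc _ ≤ ∑ j, ρ / (S + 1) * ‖u j‖ := by
        refine norm_sum_le_of_le _ fun j _ => ?_
        rw [← sub_mul, norm_mul]
        refine mul_le_mul ?_ ?_ (norm_nonneg _) hε.le
        · rw [← dist_eq_norm, ← hcrd y, ← MvPolynomial.aeval_continuousMap_apply]
          exact (ContinuousMap.dist_apply_le_dist y).trans (hG j).le
        · rw [← hFj' j y]
          exact ContinuousMap.norm_coe_le_norm (u j : C(Y, ℂ)) y
    _ = ρ * (S / (S + 1)) := by rw [← Finset.mul_sum]; ring
    _ ≤ ρ := mul_le_of_le_one_right hρ.le (div_le_one_of_le₀ (by linarith) (by linarith))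

end Separation

section Renormalization
open Filter Topology

variable {E : Type*}

/-- The composition `θ k ∘ ⋯ ∘ θ (k + i - 1)`. -/
def compFrom (θ : ℕ → E → E) : ℕ → ℕ → E → E
  | 0, _, u => u
  | i + 1, k, u => θ k (compFrom θ i (k + 1) u)

theorem compFrom_add (θ : ℕ → E → E) (i j k : ℕ) (u : E) :
    compFrom θ (i + j) k u = compFrom θ i k (compFrom θ j (k + i) u) := by
  induction i generalizing k with
  | zero => simp [compFrom]
  | succ i ih =>
    rw [Nat.add_right_comm]
    simp only [compFrom]
    rw [ih, Nat.add_right_comm, Nat.add_assoc]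

theorem compFrom_injective {θ : ℕ → E → E} (h : ∀ k, Function.Injective (θ k)) (i k : ℕ) :
    Function.Injective (compFrom θ i k) := by
  induction i generalizing k with
  | zero => exact fun _ _ h => h
  | succ i ih => exact (h k).comp (ih (k + 1))

theorem compFrom_zero [Zero E] {θ : ℕ → E → E} (h : ∀ k, θ k 0 = 0) (i k : ℕ) :
    compFrom θ i k 0 = 0 := by
  induction i generalizing k with
  | zero => rfl
  | succ i ih => rw [compFrom, ih, h]

variable [NormedAddCommGroup E] [NormedSpace ℂ E]

/-- The renormalized composition `θ k ∘ ⋯ ∘ θ (k + j - 1) (2⁻ʲ ξ)`. -/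
def renormFrom (θ : ℕ → E → E) (j k : ℕ) (ξ : E) : E :=
  compFrom θ j k ((1 / 2 : ℂ) ^ j • ξ)

theorem renormFrom_succ (θ : ℕ → E → E) (j k : ℕ) (ξ : E) :
    renormFrom θ (j + 1) k ξ = θ k (renormFrom θ j (k + 1) ((1 / 2 : ℂ) • ξ)) := by
  simp only [renormFrom, compFrom, pow_succ, mul_smul]

theorem renormFrom_add (θ : ℕ → E → E) (i j k : ℕ) (ξ : E) :
    renormFrom θ (i + j) k ξ =
      compFrom θ i k (renormFrom θ j (k + i) ((1 / 2 : ℂ) ^ i • ξ)) := by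
  simp only [renormFrom, compFrom_add, smul_smul, pow_add, mul_comm]

theorem norm_half_smul (ξ : E) : ‖(1 / 2 : ℂ) • ξ‖ = ‖ξ‖ / 2 := by
  rw [norm_smul]; norm_num; ring

variable {θ : ℕ → E → E} {r : ℝ}

theorem norm_renormFrom_sub_sub_le (h0 : ∀ k, θ k 0 = 0)
    (hlip : ∀ k, ∀ u ∈ ball (0 : E) r, ∀ v ∈ ball (0 : E) r,
      ‖θ k u - θ k v - (2 : ℂ) • (u - v)‖ ≤ (1 / 2) ^ (k + 2) * ‖u - v‖) (j k : ℕ)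
    {ξ ξ' : E} (hξ : ξ ∈ ball (0 : E) r) (hξ' : ξ' ∈ ball (0 : E) r) :
    ‖renormFrom θ j k ξ - renormFrom θ j k ξ' - (ξ - ξ')‖ ≤ (1 / 2) ^ (k + 1) * ‖ξ - ξ'‖ := by
  induction j generalizing k ξ ξ' with
  | zero =>
    simp only [renormFrom, compFrom, pow_zero, one_smul, sub_self, norm_zero]
    positivity
  | succ j ih =>
    have hball : ∀ x ∈ ball (0 : E) r, (1 / 2 : ℂ) • x ∈ ball (0 : E) r ∧
        renormFrom θ j (k + 1) ((1 / 2 : ℂ) • x) ∈ ball (0 : E) r := fun x hx => by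
      rw [mem_ball_zero_iff] at hx
      have h1 : (1 / 2 : ℂ) • x ∈ ball (0 : E) r := by
        rw [mem_ball_zero_iff, norm_half_smul]
        linarith [norm_nonneg x]
      refine ⟨h1, ?_⟩
      have h2 := ih (k + 1) h1 (mem_ball_self ((norm_nonneg _).trans_lt hx))
      rw [renormFrom, renormFrom, smul_zero, compFrom_zero h0, sub_zero, sub_zero,
        norm_half_smul] at h2
      rw [mem_ball_zero_iff]
      have h3 : ((1 : ℝ) / 2) ^ (k + 1 + 1) ≤ 1 := pow_le_one₀ (by norm_num) (by norm_num)
      have h4 := norm_le_insert' (compFrom θ j (k + 1) ((1 / 2 : ℂ) ^ j • (1 / 2 : ℂ) • x))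
        ((1 / 2 : ℂ) • x)
      rw [norm_half_smul] at h4
      rw [renormFrom]
      nlinarith [norm_nonneg x]
    rw [renormFrom_succ, renormFrom_succ]
    set p := renormFrom θ j (k + 1) ((1 / 2 : ℂ) • ξ)
    set p' := renormFrom θ j (k + 1) ((1 / 2 : ℂ) • ξ')
    have h1 := hlip k p (hball ξ hξ).2 p' (hball ξ' hξ').2
    have h2 := ih (k + 1) (hball ξ hξ).1 (hball ξ' hξ').1
    rw [← smul_sub, norm_half_smul] at h2
    have h3 : ‖p - p'‖ ≤ ‖ξ - ξ'‖ := by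
      have h3 : ((1 : ℝ) / 2) ^ (k + 1 + 1) ≤ 1 := pow_le_one₀ (by norm_num) (by norm_num)
      have h4 := norm_le_insert' (p - p') ((1 / 2 : ℂ) • (ξ - ξ'))
      rw [norm_half_smul] at h4
      nlinarith [norm_nonneg (ξ - ξ')]
    have h5 : θ k p - θ k p' - (ξ - ξ') = (θ k p - θ k p' - (2 : ℂ) • (p - p')) +
        (2 : ℂ) • (p - p' - (1 / 2 : ℂ) • (ξ - ξ')) := by
      rw [smul_sub (2 : ℂ) (p - p'), smul_smul]; norm_num
    rw [h5]
    refine (norm_add_le _ _).trans ?_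
    rw [norm_smul]
    have h6 : ((1 : ℝ) / 2) ^ (k + 2) * ‖p - p'‖ ≤ (1 / 2) ^ (k + 2) * ‖ξ - ξ'‖ := by gcongr
    have h7 : ((1 : ℝ) / 2) ^ (k + 1) = 2 * (1 / 2) ^ (k + 2) := by ring
    rw [h7]
    simp only [Complex.norm_ofNat]
    have : k + 1 + 1 = k + 2 := rfl
    rw [this] at h2
    nlinarith

theorem norm_renormFrom_le (h0 : ∀ k, θ k 0 = 0)
    (hlip : ∀ k, ∀ u ∈ ball (0 : E) r, ∀ v ∈ ball (0 : E) r,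
      ‖θ k u - θ k v - (2 : ℂ) • (u - v)‖ ≤ (1 / 2) ^ (k + 2) * ‖u - v‖) (j k : ℕ)
    {ξ : E} (hξ : ξ ∈ ball (0 : E) r) : ‖renormFrom θ j k ξ‖ ≤ 3 / 2 * ‖ξ‖ := by
  have h2 := norm_renormFrom_sub_sub_le h0 hlip j k hξ
    (mem_ball_self ((norm_nonneg _).trans_lt (mem_ball_zero_iff.1 hξ)))
  rw [renormFrom, renormFrom, smul_zero, compFrom_zero h0, sub_zero, sub_zero] at h2
  have h3 : ((1 : ℝ) / 2) ^ (k + 1) ≤ 1 / 2 := by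
    rw [pow_succ]
    linarith [pow_le_one₀ (n := k) (by norm_num : (0 : ℝ) ≤ 1 / 2) (by norm_num)]
  have h4 := norm_le_insert' (compFrom θ j k ((1 / 2 : ℂ) ^ j • ξ)) ξ
  rw [renormFrom]
  nlinarith [norm_nonneg ξ]

theorem norm_renormFrom_succ_sub_le (h0 : ∀ k, θ k 0 = 0)
    (hlip : ∀ k, ∀ u ∈ ball (0 : E) r, ∀ v ∈ ball (0 : E) r,
      ‖θ k u - θ k v - (2 : ℂ) • (u - v)‖ ≤ (1 / 2) ^ (k + 2) * ‖u - v‖) (j k : ℕ)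
    {ξ : E} (hξ : ξ ∈ ball (0 : E) r) :
    ‖renormFrom θ (j + 1) k ξ - renormFrom θ j k ξ‖ ≤
      (1 + (1 / 2) ^ (k + 1)) * (1 / 2) ^ (k + j + 2) * ‖ξ‖ := by
  have hr := (norm_nonneg _).trans_lt (mem_ball_zero_iff.1 hξ)
  induction j generalizing k ξ with
  | zero =>
    have hξ2 : (1 / 2 : ℂ) • ξ ∈ ball (0 : E) r := by
      rw [mem_ball_zero_iff] at hξ ⊢
      rw [norm_half_smul]
      linarith [norm_nonneg ξ]
    have h1 := hlip k _ hξ2 0 (mem_ball_self hr)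
    rw [h0, sub_zero, sub_zero, smul_smul, norm_half_smul] at h1
    norm_num at h1
    simp only [renormFrom, compFrom, pow_zero, one_smul]
    norm_num
    refine h1.trans ?_
    have := pow_pos (by norm_num : (0 : ℝ) < 1 / 2) (k + 1)
    have := pow_pos (by norm_num : (0 : ℝ) < 1 / 2) (k + 2)
    have h3 : (1 : ℝ) / 2 * (1 / 2) ^ (k + 2) ≤ (1 + (1 / 2) ^ (k + 1)) * (1 / 2) ^ (k + 2) := by
      gcongr; linarith
    nlinarith [norm_nonneg ξ]
  | succ j ih =>
    have hξ2 : (1 / 2 : ℂ) • ξ ∈ ball (0 : E) r := by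
      rw [mem_ball_zero_iff] at hξ ⊢
      rw [norm_half_smul]
      linarith [norm_nonneg ξ]
    have hb : ∀ j, renormFrom θ j (k + 1) ((1 / 2 : ℂ) • ξ) ∈ ball (0 : E) r := fun j => by
      rw [mem_ball_zero_iff]
      refine (norm_renormFrom_le h0 hlip j (k + 1) hξ2).trans_lt ?_
      rw [mem_ball_zero_iff] at hξ
      rw [norm_half_smul]
      linarith [norm_nonneg ξ]
    rw [renormFrom_succ θ (j + 1), renormFrom_succ θ j k]
    have h1 := hlip k _ (hb (j + 1)) _ (hb j)
    have h2 := ih (k + 1) hξ2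
    set p := renormFrom θ (j + 1) (k + 1) ((1 / 2 : ℂ) • ξ)
    set p' := renormFrom θ j (k + 1) ((1 / 2 : ℂ) • ξ)
    rw [norm_half_smul] at h2
    have h3 : ‖θ k p - θ k p'‖ ≤ (2 + (1 / 2) ^ (k + 2)) * ‖p - p'‖ := by
      have := norm_le_insert' (θ k p - θ k p') ((2 : ℂ) • (p - p'))
      rw [norm_smul] at this
      simp only [Complex.norm_ofNat] at this
      linarith
    refine h3.trans ?_
    have h4 : (2 + (1 / 2 : ℝ) ^ (k + 2)) * ‖p - p'‖ ≤ (2 + (1 / 2 : ℝ) ^ (k + 2)) *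
      ((1 + (1 / 2) ^ (k + 1 + 1)) * (1 / 2) ^ (k + 1 + j + 2) * (‖ξ‖ / 2)) := by gcongr
    refine h4.trans ?_
    have h5 : k + (j + 1) + 2 = k + 1 + j + 2 := by ring
    rw [h5]
    have h6 : ((1 : ℝ) / 2) ^ (k + 1) = 2 * (1 / 2) ^ (k + 2) := by ring
    rw [h6]
    set a : ℝ := (1 / 2) ^ (k + 2)
    have ha : 0 < a := by positivity
    have ha1 : a ≤ 1 := pow_le_one₀ (by norm_num) (by norm_num)
    set b : ℝ := (1 / 2) ^ (k + 1 + j + 2)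
    have hb0 : 0 < b := by positivity
    change (2 + a) * ((1 + a) * b * (‖ξ‖ / 2)) ≤ _
    have h7 : (2 + a) * (1 + a) / 2 ≤ 1 + 2 * a := by nlinarith
    calc _ = (2 + a) * (1 + a) / 2 * (b * ‖ξ‖) := by ring
      _ ≤ (1 + 2 * a) * (b * ‖ξ‖) := by gcongr
      _ = _ := by ring

end Renormalization

section FatouBieberbach
open Filter Topology

variable {Z E : Type*} [NormedAddCommGroup Z] [NormedSpace ℂ Z]
  [NormedAddCommGroup E] [NormedSpace ℂ E]

theorem differentiableOn_compFrom {V : Set Z} {θ : ℕ → Z → E → E}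
    (hθ : ∀ k, DifferentiableOn ℂ (fun p : Z × E => θ k p.1 p.2) (V ×ˢ univ)) (i k : ℕ) :
    DifferentiableOn ℂ (fun p : Z × E => compFrom (fun k => θ k p.1) i k p.2) (V ×ˢ univ) := by
  induction i generalizing k with
  | zero => exact differentiableOn_snd
  | succ i ih =>
    exact (hθ k).comp (differentiableOn_fst.prodMk (ih (k + 1))) fun p hp => ⟨hp.1, mem_univ _⟩

theorem differentiableOn_renormFrom {V : Set Z} {θ : ℕ → Z → E → E}
    (hθ : ∀ k, DifferentiableOn ℂ (fun p : Z × E => θ k p.1 p.2) (V ×ˢ univ)) (j k : ℕ) :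
    DifferentiableOn ℂ (fun p : Z × E => renormFrom (fun k => θ k p.1) j k p.2) (V ×ˢ univ) :=
  (differentiableOn_compFrom hθ j k).comp
    (differentiableOn_fst.prodMk (differentiableOn_snd.const_smul _)) fun _ hp => ⟨hp.1, mem_univ _⟩

theorem exists_near_of_compFrom_mem {E : Type*} [NormedAddCommGroup E] {θ Φ : ℕ → E → E}
    (hinv : ∀ k w, Φ k (θ k w) = w)
    {B : Set E} {δ : ℝ} (hδ : 0 ≤ δ)
    (hΦ : ∀ k, ∀ b ∈ B, ∀ w, ‖w - b‖ ≤ δ → ‖Φ k w - w‖ ≤ δ * (1 / 2) ^ (k + 1)) (i : ℕ) {u : E}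
    (hu : compFrom θ i 0 u ∈ B) : ∃ b ∈ B, ‖u - b‖ ≤ δ := by
  have key : ∀ i u, compFrom θ i 0 u ∈ B →
      ‖u - compFrom θ i 0 u‖ ≤ δ * (1 - (1 / 2) ^ i) := by
    intro i
    induction i with
    | zero => intro u _; simp [compFrom]
    | succ i ih =>
      intro u hu
      rw [compFrom_add, zero_add] at hu ⊢
      have h1 := ih _ hu
      set b := compFrom θ i 0 (compFrom θ 1 i u)
      have h2 : ‖compFrom θ 1 i u - b‖ ≤ δ :=
        h1.trans (mul_le_of_le_one_right hδ (by simp))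
      have h3 := hΦ i b hu _ h2
      rw [show Φ i (compFrom θ 1 i u) = u from hinv i u] at h3
      calc _ ≤ ‖u - compFrom θ 1 i u‖ + ‖compFrom θ 1 i u - b‖ :=
            norm_sub_le_norm_sub_add_norm_sub ..
        _ ≤ δ * (1 / 2) ^ (i + 1) + δ * (1 - (1 / 2) ^ i) := add_le_add h3 h1
        _ = _ := by ring
  exact ⟨_, hu, (key i u hu).trans (mul_le_of_le_one_right hδ (by simp))⟩

/-- The renormalized limit of compositions of automorphisms which are close to `2 • id` near the
origin and close to the identity near `B z` maps `E` injectively into the complement of `B z`. -/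
theorem exists_injective_limit [CompleteSpace E] {V : Set Z} (hV : IsOpen V) {θ Φ : ℕ → Z → E → E}
    (hθ : ∀ k, DifferentiableOn ℂ (fun p : Z × E => θ k p.1 p.2) (V ×ˢ univ))
    (hinv : ∀ k, ∀ z ∈ V, ∀ w, Φ k z (θ k z w) = w) (h0 : ∀ k, ∀ z ∈ V, θ k z 0 = 0)
    {r δ : ℝ} (hr : 0 < r) (hδ : 0 ≤ δ) {B : Z → Set E}
    (hlip : ∀ k, ∀ z ∈ V, ∀ u ∈ ball (0 : E) r, ∀ v ∈ ball (0 : E) r,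
      ‖θ k z u - θ k z v - (2 : ℂ) • (u - v)‖ ≤ (1 / 2) ^ (k + 2) * ‖u - v‖)
    (hΦ : ∀ k, ∀ z ∈ V, ∀ b ∈ B z, ∀ w, ‖w - b‖ ≤ δ → ‖Φ k z w - w‖ ≤ δ * (1 / 2) ^ (k + 1))
    (hsep : ∀ z ∈ V, ∀ b ∈ B z, ∀ w, ‖w - b‖ ≤ δ → r ≤ ‖w‖) :
    ∃ F : Z × E → E, DifferentiableOn ℂ F (V ×ˢ univ) ∧ ∀ z ∈ V, F (z, 0) = 0 ∧
      Function.Injective (fun ζ => F (z, ζ)) ∧ ∀ ζ, F (z, ζ) ∉ B z := by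
  have hhalf : Tendsto (fun n : ℕ => ((1 : ℝ) / 2) ^ n) atTop (𝓝 0) :=
    tendsto_pow_atTop_nhds_zero_of_lt_one (by norm_num) (by norm_num)
  -- the local limits
  have hunif : ∀ k, UniformCauchySeqOn (fun j (p : Z × E) => renormFrom (fun k => θ k p.1) j k p.2)
      atTop (V ×ˢ ball 0 r) := by
    intro k
    rw [Metric.uniformCauchySeqOn_iff]
    intro ε hε
    obtain ⟨M, hM⟩ := ((hhalf.const_mul (2 * r)).eventually
      (gt_mem_nhds (by simpa using hε))).exists_forall_of_atTop
    have hstep : ∀ p ∈ V ×ˢ ball (0 : E) r, ∀ j, dist (renormFrom (fun k => θ k p.1) j k p.2)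
        (renormFrom (fun k => θ k p.1) (j + 1) k p.2) ≤ r / 2 / 2 ^ j := by
      intro p hp j
      rw [dist_comm, dist_eq_norm]
      refine (norm_renormFrom_succ_sub_le (fun k => h0 k _ hp.1) (fun k => hlip k _ hp.1)
        j k hp.2).trans ?_
      have h1 : ‖p.2‖ ≤ r := (mem_ball_zero_iff.1 hp.2).le
      have h2 : ((1 : ℝ) / 2) ^ k ≤ 1 := pow_le_one₀ (by norm_num) (by norm_num)
      calc _ ≤ (1 + 1) * ((1 : ℝ) / 2) ^ (k + j + 2) * r := by
            gcongr
            rw [pow_succ]; linarith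
        _ = (1 / 2) ^ k * (r / 2 * (1 / 2) ^ j) := by ring
        _ ≤ 1 * (r / 2 * (1 / 2) ^ j) := by gcongr
        _ = _ := by rw [one_div_pow]; ring
    have hdist : ∀ p ∈ V ×ˢ ball (0 : E) r, ∀ m n, m ≤ n →
        dist (renormFrom (fun k => θ k p.1) m k p.2) (renormFrom (fun k => θ k p.1) n k p.2) ≤
          r * (1 / 2) ^ m := by
      intro p hp m n hmn
      have hsum : ∀ N, ∑ i ∈ Finset.range N, r / 2 / 2 ^ (m + i) ≤ r * (1 / 2) ^ m := fun N => by
        have : ∑ i ∈ Finset.range N, r / 2 / 2 ^ (m + i) = r * (1 / 2) ^ m * (1 - (1 / 2) ^ N) := by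
          induction N with
          | zero => simp
          | succ N ih =>
            rw [Finset.sum_range_succ, ih, one_div_pow, one_div_pow, one_div_pow]
            field_simp
            ring
        rw [this]
        exact mul_le_of_le_one_right (by positivity) (by simp)
      obtain ⟨N, rfl⟩ := Nat.exists_eq_add_of_le hmn
      refine le_trans ?_ (hsum N)
      have := dist_le_range_sum_of_dist_le
        (f := fun i => renormFrom (fun k => θ k p.1) (m + i) k p.2)
        N (fun {i} _ => hstep p hp (m + i))
      simpa using this
    refine ⟨M, fun m hm n hn p hp => ?_⟩
    have h1 := hdist p hp M m hm
    have h2 := hdist p hp M n hn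
    have h3 := hM M le_rfl
    rw [dist_comm] at h1
    linarith [dist_triangle (renormFrom (fun k => θ k p.1) m k p.2)
      (renormFrom (fun k => θ k p.1) M k p.2) (renormFrom (fun k => θ k p.1) n k p.2)]
  have hlim : ∀ k, ∃ S : Z × E → E, ∀ p ∈ V ×ˢ ball (0 : E) r,
      Tendsto (fun j => renormFrom (fun k => θ k p.1) j k p.2) atTop (𝓝 (S p)) := fun k => by
    have : ∀ p : Z × E, ∃ x, p ∈ V ×ˢ ball (0 : E) r →
        Tendsto (fun j => renormFrom (fun k => θ k p.1) j k p.2) atTop (𝓝 x) := fun p => by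
      by_cases hp : p ∈ V ×ˢ ball (0 : E) r
      · obtain ⟨x, hx⟩ := cauchySeq_tendsto_of_complete ((hunif k).cauchySeq hp)
        exact ⟨x, fun _ => hx⟩
      · exact ⟨0, fun h => absurd h hp⟩
    choose S hS using this
    exact ⟨S, hS⟩
  choose S hS using hlim
  have hSd : ∀ k, ∀ p ∈ V ×ˢ ball (0 : E) r, DifferentiableAt ℂ (S k) p := by
    intro k p hp
    have ho : IsOpen (V ×ˢ ball (0 : E) r) := hV.prod isOpen_ball
    obtain ⟨ε, hε, hsub⟩ := Metric.isOpen_iff.1 ho p hp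
    refine differentiableAt_of_tendstoUniformlyOn_ball hε
      (fun j => (differentiableOn_renormFrom hθ j k).mono
        (hsub.trans (prod_mono_right (subset_univ _)))) ?_
    exact ((hunif k).tendstoUniformlyOn_of_tendsto (hS k)).mono hsub
  have hSlip : ∀ k, ∀ z ∈ V, ∀ u ∈ ball (0 : E) r, ∀ v ∈ ball (0 : E) r,
      ‖S k (z, u) - S k (z, v) - (u - v)‖ ≤ 1 / 2 * ‖u - v‖ := by
    intro k z hz u hu v hv
    refine le_of_tendsto ((((hS k (z, u) ⟨hz, hu⟩).sub (hS k (z, v) ⟨hz, hv⟩)).sub_const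
      (u - v)).norm) (Eventually.of_forall fun j => ?_)
    refine (norm_renormFrom_sub_sub_le (fun k => h0 k _ hz) (fun k => hlip k _ hz)
        j k hu hv).trans ?_
    gcongr
    rw [pow_succ]
    linarith [pow_le_one₀ (n := k) (by norm_num : (0 : ℝ) ≤ 1 / 2) (by norm_num)]
  have hS0 : ∀ k, ∀ z ∈ V, S k (z, 0) = 0 := fun k z hz => by
    refine tendsto_nhds_unique (hS k (z, 0) ⟨hz, mem_ball_self hr⟩) ?_
    simp only [renormFrom, smul_zero]
    simp only [compFrom_zero (fun k => h0 k z hz), tendsto_const_nhds]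
  have hscale : ∀ ζ : E, Tendsto (fun i : ℕ => ‖((1 : ℂ) / 2) ^ i • ζ‖) atTop (𝓝 0) := fun ζ => by
    have : ∀ i : ℕ, ‖((1 : ℂ) / 2) ^ i • ζ‖ = (1 / 2) ^ i * ‖ζ‖ := fun i => by
      rw [norm_smul, norm_pow]; norm_num
    simp only [this]
    simpa using hhalf.mul_const ‖ζ‖
  -- the global limit
  have hcont : ∀ i, ∀ z ∈ V, Continuous (compFrom (fun k => θ k z) i 0) := fun i z hz => by
    have := (differentiableOn_compFrom hθ i 0).continuousOn
    exact continuousOn_univ.1 (this.comp (f := fun w => (z, w)) (by fun_prop)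
      fun w _ => ⟨hz, mem_univ _⟩)
  have hF : ∀ i, ∀ z ∈ V, ∀ ζ, ((1 : ℂ) / 2) ^ i • ζ ∈ ball (0 : E) r →
      limUnder atTop (fun j => renormFrom (fun k => θ k z) j 0 ζ) =
        compFrom (fun k => θ k z) i 0 (S i (z, ((1 : ℂ) / 2) ^ i • ζ)) := by
    intro i z hz ζ hζ
    refine Tendsto.limUnder_eq ?_
    rw [← tendsto_add_atTop_iff_nat i]
    have h1 := ((hcont i z hz).tendsto _).comp (hS i (z, ((1 : ℂ) / 2) ^ i • ζ) ⟨hz, hζ⟩)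
    refine h1.congr fun j => ?_
    rw [add_comm j i, renormFrom_add, zero_add]
    rfl
  have hinj : ∀ z ∈ V, ∀ i, Function.Injective (compFrom (fun k => θ k z) i 0) := fun z hz i =>
    compFrom_injective (fun k => Function.LeftInverse.injective (hinv k z hz)) i 0
  have hev : ∀ ζ : E, ∀ ε > 0, ∀ᶠ i in atTop, ‖((1 : ℂ) / 2) ^ i • ζ‖ < ε := fun ζ ε hε =>
    (hscale ζ).eventually (gt_mem_nhds hε)
  refine ⟨fun p => limUnder atTop (fun j => renormFrom (fun k => θ k p.1) j 0 p.2), ?_, ?_⟩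
  · rintro ⟨z, ζ⟩ ⟨hz, -⟩
    obtain ⟨i, hi⟩ := (hev ζ r hr).exists
    have hmem : ∀ᶠ p : Z × E in 𝓝 (z, ζ), p.1 ∈ V ∧ ((1 : ℂ) / 2) ^ i • p.2 ∈ ball (0 : E) r := by
      refine (continuous_fst.continuousAt.eventually (hV.mem_nhds hz)).and ?_
      have hc : Continuous fun p : Z × E => ((1 : ℂ) / 2) ^ i • p.2 := by fun_prop
      exact hc.continuousAt.eventually (isOpen_ball.mem_nhds (mem_ball_zero_iff.2 hi))
    have heq : (fun p : Z × E => limUnder atTop (fun j => renormFrom (fun k => θ k p.1) j 0 p.2))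
        =ᶠ[𝓝 (z, ζ)] fun p => compFrom (fun k => θ k p.1) i 0
          (S i (p.1, ((1 : ℂ) / 2) ^ i • p.2)) := by
      filter_upwards [hmem] with p hp using hF i p.1 hp.1 p.2 hp.2
    refine (DifferentiableAt.congr_of_eventuallyEq ?_ heq).differentiableWithinAt
    have h1 : DifferentiableAt ℂ (fun p : Z × E => S i (p.1, ((1 : ℂ) / 2) ^ i • p.2)) (z, ζ) :=
      DifferentiableAt.comp (g := S i) (f := fun p : Z × E => (p.1, ((1 : ℂ) / 2) ^ i • p.2)) (z, ζ)
        (hSd i _ ⟨hz, mem_ball_zero_iff.2 hi⟩) (by fun_prop)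
    have h2 : DifferentiableAt ℂ (fun p : Z × E => compFrom (fun k => θ k p.1) i 0 p.2)
        (z, S i (z, ((1 : ℂ) / 2) ^ i • ζ)) :=
      (differentiableOn_compFrom hθ i 0).differentiableAt
        ((hV.prod isOpen_univ).mem_nhds ⟨hz, mem_univ _⟩)
    exact DifferentiableAt.comp (g := fun p : Z × E => compFrom (fun k => θ k p.1) i 0 p.2)
      (f := fun p : Z × E => (p.1, S i (p.1, ((1 : ℂ) / 2) ^ i • p.2))) (z, ζ) h2
      (differentiableAt_fst.prodMk h1)
  · intro z hz
    refine ⟨?_, ?_, ?_⟩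
    · change limUnder atTop (fun j => renormFrom (fun k => θ k z) j 0 0) = 0
      rw [hF 0 z hz 0 (by simpa using hr), smul_zero, hS0 0 z hz]
      rfl
    · intro ζ ζ' h
      obtain ⟨i, hi, hi'⟩ := ((hev ζ r hr).and (hev ζ' r hr)).exists
      have hm := mem_ball_zero_iff.2 hi
      have hm' := mem_ball_zero_iff.2 hi'
      change limUnder atTop (fun j => renormFrom (fun k => θ k z) j 0 ζ) =
        limUnder atTop (fun j => renormFrom (fun k => θ k z) j 0 ζ') at h
      rw [hF i z hz ζ hm, hF i z hz ζ' hm'] at h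
      have h1 := hSlip i z hz _ hm _ hm'
      rw [hinj z hz i h, sub_self, zero_sub, norm_neg] at h1
      have h2 : ‖((1 : ℂ) / 2) ^ i • ζ - ((1 : ℂ) / 2) ^ i • ζ'‖ = 0 := by
        linarith [norm_nonneg (((1 : ℂ) / 2) ^ i • ζ - ((1 : ℂ) / 2) ^ i • ζ')]
      rw [norm_sub_eq_zero_iff] at h2
      exact smul_right_injective E (pow_ne_zero i (by norm_num : (1 : ℂ) / 2 ≠ 0)) h2
    · intro ζ h
      obtain ⟨i, hi⟩ := (hev ζ (r / 2) (half_pos hr)).exists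
      have hm : ((1 : ℂ) / 2) ^ i • ζ ∈ ball (0 : E) r := mem_ball_zero_iff.2 (by linarith)
      change limUnder atTop (fun j => renormFrom (fun k => θ k z) j 0 ζ) ∈ B z at h
      rw [hF i z hz ζ hm] at h
      obtain ⟨b, hb, hub⟩ := exists_near_of_compFrom_mem (fun k w => hinv k z hz w) hδ
        (fun k => hΦ k z hz) i h
      have h1 := hsep z hz b hb _ hub
      have h2 := hSlip i z hz _ hm 0 (mem_ball_self hr)
      rw [hS0 i z hz, sub_zero, sub_zero] at h2
      linarith [norm_le_insert' (S i (z, ((1 : ℂ) / 2) ^ i • ζ)) (((1 : ℂ) / 2) ^ i • ζ)]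

end FatouBieberbach

section Flows
open Filter Topology

variable {Z E : Type*} [NormedAddCommGroup Z] [NormedSpace ℂ Z]
  [NormedAddCommGroup E] [NormedSpace ℂ E]

/-- A fibrewise vector field `X` over `V` is integrable to first order by a holomorphic family of
fibrewise automorphisms fixing the origin. -/
def Integrates (V : Set Z) (X : Z → E → E) : Prop :=
  ∃ Φ Ψ : ℂ → Z → E → E,
    DifferentiableOn ℂ (fun p : ℂ × Z × E => Φ p.1 p.2.1 p.2.2) (univ ×ˢ V ×ˢ univ) ∧
    DifferentiableOn ℂ (fun p : ℂ × Z × E => Ψ p.1 p.2.1 p.2.2) (univ ×ˢ V ×ˢ univ) ∧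
    ∀ z ∈ V, (∀ t w, Ψ t z (Φ t z w) = w) ∧ (∀ t w, Φ t z (Ψ t z w) = w) ∧ (∀ t, Φ t z 0 = 0) ∧
      (∀ w, Φ 0 z w = w) ∧ ∀ w, HasDerivAt (fun t => Φ t z w) (X z w) 0

theorem hasDerivAt_comp_flow {V : Set Z} (hV : IsOpen V) {Φ : ℂ → Z → E → E}
    (hΦ : DifferentiableOn ℂ (fun p : ℂ × Z × E => Φ p.1 p.2.1 p.2.2) (univ ×ˢ V ×ˢ univ))
    {z : Z} (hz : z ∈ V) (hid : ∀ w, Φ 0 z w = w) {g : ℂ → E} {g' X : E} (hg : HasDerivAt g g' 0)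
    (hX : HasDerivAt (fun t => Φ t z (g 0)) X 0) :
    HasDerivAt (fun t => Φ t z (g t)) (X + g') 0 := by
  have hd : HasFDerivAt (fun p : ℂ × Z × E => Φ p.1 p.2.1 p.2.2) _ ((0 : ℂ), z, g 0) :=
    (hΦ.differentiableAt ((isOpen_univ.prod (hV.prod isOpen_univ)).mem_nhds
      ⟨mem_univ _, hz, mem_univ _⟩)).hasFDerivAt
  set D := fderiv ℂ (fun p : ℂ × Z × E => Φ p.1 p.2.1 p.2.2) ((0 : ℂ), z, g 0)
  have h1 : HasDerivAt (fun t => Φ t z (g t)) (D (1, 0, g')) 0 :=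
    hd.comp_hasDerivAt (0 : ℂ) (f := fun t => (t, z, g t))
      ((hasDerivAt_id (0 : ℂ)).prodMk ((hasDerivAt_const (0 : ℂ) z).prodMk hg))
  have h2 : HasDerivAt (fun t => Φ t z (g 0)) (D (1, 0, 0)) 0 :=
    hd.comp_hasDerivAt (0 : ℂ) (f := fun t => (t, z, g 0))
      ((hasDerivAt_id (0 : ℂ)).prodMk ((hasDerivAt_const (0 : ℂ) z).prodMk (hasDerivAt_const _ _)))
  have h3 : HasDerivAt (fun t => Φ 0 z (g t)) (D (0, 0, g')) 0 :=
    hd.comp_hasDerivAt (0 : ℂ) (f := fun t => ((0 : ℂ), z, g t))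
      ((hasDerivAt_const (0 : ℂ) (0 : ℂ)).prodMk ((hasDerivAt_const (0 : ℂ) z).prodMk hg))
  simp only [hid] at h3
  rw [hX.unique h2, hg.unique h3, ← map_add]
  simpa using h1

theorem differentiableOn_comp_flow {V : Set Z} {Φ Ψ : ℂ → Z → E → E}
    (hΦ : DifferentiableOn ℂ (fun p : ℂ × Z × E => Φ p.1 p.2.1 p.2.2) (univ ×ˢ V ×ˢ univ))
    (hΨ : DifferentiableOn ℂ (fun p : ℂ × Z × E => Ψ p.1 p.2.1 p.2.2) (univ ×ˢ V ×ˢ univ)) :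
    DifferentiableOn ℂ (fun p : ℂ × Z × E => Φ p.1 p.2.1 (Ψ p.1 p.2.1 p.2.2))
      (univ ×ˢ V ×ˢ univ) :=
  hΦ.comp (f := fun p : ℂ × Z × E => (p.1, p.2.1, Ψ p.1 p.2.1 p.2.2))
    (differentiableOn_fst.prodMk
      ((differentiable_fst.comp differentiable_snd).differentiableOn.prodMk hΨ))
    fun _ hp => ⟨mem_univ _, hp.2.1, mem_univ _⟩

theorem Integrates.add {V : Set Z} (hV : IsOpen V) {X Y : Z → E → E} (hX : Integrates V X)
    (hY : Integrates V Y) : Integrates V (fun z w => X z w + Y z w) := by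
  obtain ⟨Φ, Ψ, hΦ, hΨ, h⟩ := hX
  obtain ⟨Φ', Ψ', hΦ', hΨ', h'⟩ := hY
  refine ⟨fun t z w => Φ t z (Φ' t z w), fun t z w => Ψ' t z (Ψ t z w),
    differentiableOn_comp_flow hΦ hΦ', differentiableOn_comp_flow hΨ' hΨ, fun z hz => ?_⟩
  obtain ⟨h1, h2, h3, h4, h5⟩ := h z hz
  obtain ⟨h1', h2', h3', h4', h5'⟩ := h' z hz
  refine ⟨fun t w => by simp only [h1, h1'], fun t w => by simp only [h2', h2],
    fun t => by simp only [h3', h3],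
    fun w => by simp only [h4', h4], fun w => ?_⟩
  exact hasDerivAt_comp_flow hV hΦ hz h4 (h5' w) (by rw [h4']; exact h5 w)

theorem Integrates.zero (V : Set Z) : Integrates V (fun _ _ => (0 : E)) :=
  ⟨fun _ _ w => w, fun _ _ w => w, by fun_prop, by fun_prop, fun z _ => ⟨fun _ _ => rfl,
    fun _ _ => rfl, fun _ => rfl, fun _ => rfl, fun _ => hasDerivAt_const _ _⟩⟩

/-- The vector fields all of whose multiples by holomorphic functions of the parameter are
integrable to first order. -/
def integrableFields {V : Set Z} (hV : IsOpen V) : Submodule ℂ (Z → E → E) where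
  carrier := {X | ∀ c : Z → ℂ, DifferentiableOn ℂ c V → Integrates V (fun z w => c z • X z w)}
  zero_mem' c _ := by simpa using Integrates.zero V
  add_mem' hX hY c hc := by simpa using (hX c hc).add hV (hY c hc)
  smul_mem' a X hX c hc := by
    simpa [smul_smul] using hX (fun z => c z * a) (hc.mul_const a)

variable {V : Set Z} {hV : IsOpen V}

theorem mul_mem_integrableFields {X : Z → E → E} (hX : X ∈ integrableFields hV) {c : Z → ℂ}
    (hc : DifferentiableOn ℂ c V) : (fun z w => c z • X z w) ∈ integrableFields hV := fun b hb => by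
  simpa [smul_smul] using hX (fun z => b z * c z) (hb.mul hc)

theorem exists_differentiableOn_pullback {c : Z → ℂ} (hc : DifferentiableOn ℂ c V) :
    ∃ k : ℂ × Z × E → ℂ, DifferentiableOn ℂ k (univ ×ˢ V ×ˢ univ) ∧ ∀ p, k p = c p.2.1 :=
  ⟨fun p => c p.2.1, hc.comp (f := fun p : ℂ × Z × E => p.2.1) (by fun_prop) fun _ hp => hp.2.1,
    fun _ => rfl⟩

theorem shear_mem_integrableFields {q : E → ℂ} (hq : Differentiable ℂ q) {v : E}
    (hqv : ∀ (w : E) (s : ℂ), q (w + s • v) = q w) (hq0 : q 0 = 0) :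
    (fun (_ : Z) w => q w • v) ∈ integrableFields hV := by
  intro c hc
  have hd : ∀ a : ℂ, DifferentiableOn ℂ (fun p : ℂ × Z × E => p.2.2 + (a * p.1 * c p.2.1 *
      q p.2.2) • v) (univ ×ˢ V ×ˢ univ) := fun a => by
    obtain ⟨k, hk, hkc⟩ := exists_differentiableOn_pullback (E := E) hc
    simp only [← hkc]
    fun_prop
  refine ⟨fun t z w => w + (1 * t * c z * q w) • v, fun t z w => w + (-1 * t * c z * q w) • v,
    hd 1, hd (-1), fun z _ => ⟨fun t w => ?_, fun t w => ?_, fun t => ?_, fun w => ?_,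
    fun w => ?_⟩⟩
  · simp only [hqv]; rw [add_assoc, ← add_smul]; simp
  · simp only [hqv]; rw [add_assoc, ← add_smul]; simp
  · simp [hq0]
  · simp
  · have h1 : HasDerivAt (fun t : ℂ => 1 * t * c z * q w) (c z * q w) 0 := by
      simpa [mul_assoc] using (hasDerivAt_id (0 : ℂ)).mul_const (c z * q w)
    simpa [smul_smul] using (h1.smul_const v).const_add w

theorem overshear_mem_integrableFields {q : E → ℂ} (hq : Differentiable ℂ q) {v : E}
    (hqv : ∀ (w : E) (s : ℂ), q (w + s • v) = q w) (μ : E →L[ℂ] ℂ) :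
    (fun (_ : Z) w => (q w * μ w) • v) ∈ integrableFields hV := by
  by_cases hμ : μ v = 0
  · exact shear_mem_integrableFields (q := fun w => q w * μ w) (by fun_prop)
      (fun w s => by simp [hqv, hμ]) (by simp)
  intro c hc
  set ν : ℂ := (μ v)⁻¹ with hν
  have hνμ : ν * μ v = 1 := inv_mul_cancel₀ hμ
  have hd : ∀ a : ℂ, DifferentiableOn ℂ (fun p : ℂ × Z × E => p.2.2 + ((Complex.exp (a * p.1 *
      (c p.2.1 * μ v * q p.2.2)) - 1) * μ p.2.2 * ν) • v) (univ ×ˢ V ×ˢ univ) := fun a => by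
    obtain ⟨k, hk, hkc⟩ := exists_differentiableOn_pullback (E := E) hc
    simp only [← hkc]
    fun_prop
  have hinv : ∀ (a b : ℂ) (w : E), a * b = 1 →
      w + ((a - 1) * μ w * ν) • v + ((b - 1) * μ (w + ((a - 1) * μ w * ν) • v) * ν) • v = w := by
    intro a b w hab
    rw [add_assoc, ← add_smul, map_add, map_smul, smul_eq_mul]
    have : (a - 1) * μ w * ν + (b - 1) * (μ w + (a - 1) * μ w * ν * μ v) * ν = 0 := by
      rw [mul_assoc _ ν (μ v), hνμ]
      linear_combination (μ w * ν) * hab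
    rw [this, zero_smul, add_zero]
  refine ⟨fun t z w => w + ((Complex.exp (1 * t * (c z * μ v * q w)) - 1) * μ w * ν) • v,
    fun t z w => w + ((Complex.exp (-1 * t * (c z * μ v * q w)) - 1) * μ w * ν) • v,
    hd 1, hd (-1), fun z _ => ⟨fun t w => ?_, fun t w => ?_, fun t => ?_, fun w => ?_,
    fun w => ?_⟩⟩
  · simp only [hqv]
    exact hinv _ _ w (by rw [← Complex.exp_add]; simp)
  · simp only [hqv]
    exact hinv _ _ w (by rw [← Complex.exp_add]; simp)
  · simp
  · simp
  · have h1 : HasDerivAt (fun t : ℂ => Complex.exp (1 * t * (c z * μ v * q w)))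
        (c z * μ v * q w) 0 := by
      have h2 : HasDerivAt (fun t : ℂ => 1 * t * (c z * μ v * q w)) (c z * μ v * q w) 0 := by
        simpa using (hasDerivAt_id (0 : ℂ)).mul_const (c z * μ v * q w)
      simpa using h2.cexp
    have h3 := ((((h1.sub_const 1).mul_const (μ w)).mul_const ν).smul_const v).const_add w
    convert h3 using 1
    simp only [smul_smul]
    congr 1
    linear_combination (-(c z * q w * μ w)) * hνμ

/-- The coefficients of a polynomial curve in a subspace belong to the subspace. -/
theorem Submodule.coeff_mem_of_forall_sum_mem {M : Type*} [AddCommGroup M] [Module ℂ M]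
    (W : Submodule ℂ M) (d : ℕ) (a : ℕ → M)
    (h : ∀ s : ℂ, ∑ j ∈ Finset.range d, s ^ j • a j ∈ W) {j : ℕ} (hj : j < d) : a j ∈ W := by
  rw [← Submodule.Quotient.mk_eq_zero, ← Module.forall_dual_apply_eq_zero_iff ℂ]
  intro l
  set p : Polynomial ℂ := ∑ j ∈ Finset.range d,
    Polynomial.monomial j (l (Submodule.Quotient.mk (a j))) with hp
  have h0 : p = 0 := Polynomial.funext fun s => by
    have h1 := (Submodule.Quotient.mk_eq_zero W).2 (h s)
    have h2 := congrArg l h1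
    rw [← Submodule.mkQ_apply, map_sum, map_sum, map_zero] at h2
    simp only [map_smul, smul_eq_mul, Submodule.mkQ_apply] at h2
    rw [hp, Polynomial.eval_finsetSum, Polynomial.eval_zero, ← h2]
    exact Finset.sum_congr rfl fun i _ => by rw [Polynomial.eval_monomial, mul_comm]
  have h3 := congrArg (fun p => Polynomial.coeff p j) h0
  simpa [hp, Polynomial.finsetSum_coeff, Polynomial.coeff_monomial, hj] using h3

end Flows

section PolynomialFields
open Filter Topology

variable {Z E : Type*} [NormedAddCommGroup Z] [NormedSpace ℂ Z]
  [NormedAddCommGroup E] [NormedSpace ℂ E] {V : Set Z} {hV : IsOpen V}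

theorem pow_mul_smul_mem_integrableFields {l : E →L[ℂ] ℂ} {v : E} (hl : l v = 0) (μ : E →L[ℂ] ℂ)
    (d : ℕ) : (fun (_ : Z) w => (l w ^ d * μ w) • v) ∈ integrableFields hV :=
  overshear_mem_integrableFields (q := fun w => l w ^ d) (by fun_prop) (fun w s => by simp [hl]) μ

theorem pow_smul_apply_mem_integrableFields [FiniteDimensional ℂ E] {l : E →L[ℂ] ℂ} {P : E →ₗ[ℂ] E}
    (hP : ∀ w, l (P w) = 0) (d : ℕ) :
    (fun (_ : Z) w => l w ^ d • P w) ∈ integrableFields hV := by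
  set b := Module.finBasis ℂ E
  have h : (fun (_ : Z) w => l w ^ d • P w) = ∑ i, fun (_ : Z) w =>
      (l w ^ d * LinearMap.toContinuousLinearMap (b.coord i) w) • P (b i) := by
    ext z w
    simp only [Finset.sum_apply, LinearMap.coe_toContinuousLinearMap', Module.Basis.coord_apply,
      mul_smul, ← Finset.smul_sum, ← map_smul, ← map_sum, b.sum_repr]
  rw [h]
  exact Submodule.sum_mem _ fun i _ => pow_mul_smul_mem_integrableFields (hP _) _ d

theorem sum_range_add_pow_smul {M : Type*} [AddCommGroup M] [Module ℂ M] (x y s : ℂ) (m : ℕ)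
    (v : M) :
    (x + s * y) ^ m • v =
      ∑ j ∈ Finset.range (m + 1), s ^ j • ((x ^ (m - j) * y ^ j * (m.choose j : ℂ)) • v) := by
  rw [add_comm, add_pow, Finset.sum_smul]
  refine Finset.sum_congr rfl fun j _ => ?_
  rw [smul_smul, mul_pow]
  congr 1
  ring

theorem exists_linear_forms [FiniteDimensional ℂ E] (hE : 2 ≤ Module.finrank ℂ E) {l : E →L[ℂ] ℂ}
    {v : E} (hv : l v = 1) : ∃ (u : E) (μ : E →L[ℂ] ℂ), l u = 0 ∧ μ u = 1 ∧ μ v = 0 := by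
  have hker : 1 ≤ Module.finrank ℂ (LinearMap.ker (l : E →ₗ[ℂ] ℂ)) := by
    have h1 := LinearMap.finrank_range_add_finrank_ker (l : E →ₗ[ℂ] ℂ)
    have h2 := Submodule.finrank_le (LinearMap.range (l : E →ₗ[ℂ] ℂ))
    rw [Module.finrank_self] at h2
    omega
  have : Nontrivial (LinearMap.ker (l : E →ₗ[ℂ] ℂ)) := Module.nontrivial_of_finrank_pos hker
  obtain ⟨u, hu⟩ := exists_ne (0 : LinearMap.ker (l : E →ₗ[ℂ] ℂ))
  have hu0 : (u : E) ≠ 0 := fun h => hu (Subtype.ext h)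
  have hlu : l u = 0 := u.2
  obtain ⟨m, hm⟩ := SeparatingDual.exists_eq_one (R := ℂ) hu0
  exact ⟨u, m - m v • l, hlu, by simp [hlu, hm], by simp [hv]⟩

theorem pow_succ_smul_mem_integrableFields [FiniteDimensional ℂ E] (hE : 2 ≤ Module.finrank ℂ E)
    {l : E →L[ℂ] ℂ} {v : E} (hv : l v = 1) (d : ℕ) :
    (fun (_ : Z) w => l w ^ (d + 1) • v) ∈ integrableFields hV := by
  obtain ⟨u, μ, hlu, hμu, hμv⟩ := exists_linear_forms hE hv
  have hs : ∀ s : ℂ, (fun (_ : Z) w => (l w + s * μ w) ^ (d + 1) • (s • v - u)) ∈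
      integrableFields hV := fun s =>
    shear_mem_integrableFields (q := fun w => (l w + s * μ w) ^ (d + 1)) (by fun_prop)
      (fun w a => by simp [hv, hlu, hμu, hμv]; ring) (by simp)
  -- the coefficient of `s` in the family of shears
  set A : ℕ → E → ℂ := fun j w => l w ^ (d + 1 - j) * μ w ^ j * ((d + 1).choose j : ℂ) with hA
  set a : ℕ → Z → E → E := fun j _ w =>
    (if j = 0 then 0 else A (j - 1) w • v) - (if j = d + 2 then 0 else A j w • u) with ha
  have hsum : ∀ s : ℂ, ∑ j ∈ Finset.range (d + 3), s ^ j • a j ∈ integrableFields (E := E) hV := by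
    intro s
    convert hs s using 1
    ext z w
    rw [smul_sub, sum_range_add_pow_smul, sum_range_add_pow_smul]
    simp only [Finset.sum_apply, Pi.smul_apply, ha, smul_sub, Finset.sum_sub_distrib]
    congr 1
    · rw [Finset.sum_range_succ']
      simp only [Nat.add_eq_zero_iff, one_ne_zero, and_false, if_false, Nat.add_sub_cancel, if_true,
        smul_zero, add_zero, hA]
      refine Finset.sum_congr rfl fun j _ => ?_
      simp only [smul_smul]
      congr 1
      ring
    · rw [Finset.sum_range_succ, if_pos rfl, smul_zero, add_zero]
      refine Finset.sum_congr rfl fun j hj => ?_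
      rw [if_neg (by have := Finset.mem_range.1 hj; omega)]
  have h1 := Submodule.coeff_mem_of_forall_sum_mem _ _ a hsum (j := 1) (by omega)
  have h2 := Submodule.smul_mem (integrableFields hV) ((d : ℂ) + 1)
    (pow_mul_smul_mem_integrableFields (hV := hV) hlu μ d)
  convert Submodule.add_mem _ h1 h2 using 1
  ext z w
  simp only [ha, hA, Pi.add_apply, Pi.smul_apply, smul_smul]
  rw [if_neg one_ne_zero, if_neg (by omega), sub_add, ← sub_smul]
  simp only [Nat.sub_self, Nat.sub_zero, pow_zero, mul_one, Nat.choose_zero_right, Nat.cast_one,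
    Nat.add_sub_cancel, pow_one, Nat.choose_one_right, Nat.cast_add]
  rw [mul_comm ((d : ℂ) + 1), sub_self, zero_smul, sub_zero]

theorem pow_smul_id_mem_integrableFields [FiniteDimensional ℂ E] (hE : 2 ≤ Module.finrank ℂ E)
    (l : E →L[ℂ] ℂ) (d : ℕ) : (fun (_ : Z) w => l w ^ d • w) ∈ integrableFields hV := by
  by_cases hl : l = 0
  · exact pow_smul_apply_mem_integrableFields (P := LinearMap.id) (by simp [hl]) d
  obtain ⟨x, hx⟩ : ∃ x, l x ≠ 0 := by
    by_contra! h
    exact hl (ContinuousLinearMap.ext h)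
  set v := (l x)⁻¹ • x with hv
  have hv1 : l v = 1 := by simp [hv, hx]
  have h1 := pow_smul_apply_mem_integrableFields (hV := hV) (l := l)
    (P := LinearMap.id - (l : E →ₗ[ℂ] ℂ).smulRight v) (by simp [hv1]) d
  convert Submodule.add_mem _ h1 (pow_succ_smul_mem_integrableFields hE hv1 d) using 1
  ext z w
  simp [smul_sub, smul_smul, pow_succ]

/-- Polynomials in the fibre variable whose coefficients are holomorphic functions of the
parameter. -/
def fibrePolynomials (E : Type*) [NormedAddCommGroup E] [NormedSpace ℂ E] (V : Set Z) :
    Subalgebra ℂ (Z → E → ℂ) :=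
  Algebra.adjoin ℂ ({P | ∃ c : Z → ℂ, DifferentiableOn ℂ c V ∧ P = fun z _ => c z} ∪
    {P | ∃ l : E →L[ℂ] ℂ, P = fun _ w => l w})

theorem smul_id_mem_integrableFields [FiniteDimensional ℂ E] (hE : 2 ≤ Module.finrank ℂ E)
    {P : Z → E → ℂ} (hP : P ∈ fibrePolynomials E V) :
    (fun z w => P z w • w) ∈ integrableFields hV := by
  set H : Submodule ℂ (Z → E → ℂ) := Submodule.span ℂ {Q | ∃ c : Z → ℂ, DifferentiableOn ℂ c V ∧
    ∃ (l : E →L[ℂ] ℂ) (d : ℕ), Q = fun z w => c z * l w ^ d} with hH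
  have hmul : ∀ P ∈ fibrePolynomials E V, ∀ Q ∈ H, P * Q ∈ H := by
    intro P hP
    induction hP using Algebra.adjoin_induction with
    | mem P hP =>
      intro Q hQ
      induction hQ using Submodule.span_induction with
      | mem Q hQ =>
        obtain ⟨c, hc, l, d, rfl⟩ := hQ
        rcases hP with ⟨c', hc', rfl⟩ | ⟨l', rfl⟩
        · exact Submodule.subset_span ⟨fun z => c' z * c z, hc'.mul hc, l, d, by
            ext z w; simp [mul_assoc]⟩
        · set a : ℕ → Z → E → ℂ := fun j z w => (l w ^ (d + 1 - j) * l' w ^ j *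
            ((d + 1).choose j : ℂ)) • c z with ha
          have h1 := Submodule.coeff_mem_of_forall_sum_mem H (d + 2) a (fun s => by
            refine Submodule.subset_span ⟨c, hc, l + s • l', d + 1, ?_⟩
            ext z w
            have := sum_range_add_pow_smul (l w) (l' w) s (d + 1) (c z)
            simp only [smul_eq_mul] at this
            simp [ha, mul_comm (c z), this]) (j := 1) (by omega)
          have h2 := H.smul_mem ((d : ℂ) + 1)⁻¹ h1
          convert h2 using 1
          ext z w
          have : (d : ℂ) + 1 ≠ 0 := Nat.cast_add_one_ne_zero d
          simp [ha]
          field_simp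
      | zero => simp
      | add Q Q' _ _ h h' => rw [mul_add]; exact H.add_mem h h'
      | smul a Q _ h => rw [mul_smul_comm]; exact H.smul_mem a h
    | algebraMap a => intro Q hQ; rw [← Algebra.smul_def]; exact H.smul_mem a hQ
    | add P P' _ _ h h' => intro Q hQ; rw [add_mul]; exact H.add_mem (h Q hQ) (h' Q hQ)
    | mul P P' _ _ h h' => intro Q hQ; rw [mul_assoc]; exact h _ (h' Q hQ)
  have hPH : P ∈ H := by
    have h1 := hmul P hP 1 (Submodule.subset_span ⟨1, differentiableOn_const 1, 0, 0, by
      ext z w; simp⟩)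
    rwa [mul_one] at h1
  clear hP hmul
  induction hPH using Submodule.span_induction with
  | mem Q hQ =>
    obtain ⟨c, hc, l, d, rfl⟩ := hQ
    simpa [mul_smul] using
      mul_mem_integrableFields (pow_smul_id_mem_integrableFields (hV := hV) hE l d) hc
  | zero =>
    convert Submodule.zero_mem (integrableFields (E := E) hV) using 1
    ext z w
    simp
  | add Q Q' _ _ h h' => simpa [add_smul] using! Submodule.add_mem _ h h'
  | smul a Q _ h =>
    convert Submodule.smul_mem _ a h using 1
    ext z w
    simp [smul_smul]

end PolynomialFields

section Stage
open Filter Topology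

variable {Z E : Type*} [NormedAddCommGroup Z] [NormedSpace ℂ Z]
  [NormedAddCommGroup E] [NormedSpace ℂ E] {V : Set Z}

theorem norm_sub_sub_smul_le_sq [CompleteSpace E] {g : ℂ → E} (hg : Differentiable ℂ g) {M : ℝ}
    (hM : ∀ t ∈ closedBall (0 : ℂ) 1, ‖g t‖ ≤ M) {t : ℂ} (ht : ‖t‖ ≤ 1 / 4) :
    ‖g t - g 0 - t • deriv g 0‖ ≤ 8 * M * ‖t‖ ^ 2 := by
  have hg' : Differentiable ℂ (deriv g) := hg.deriv
  have h1 : ∀ s ∈ closedBall (0 : ℂ) (1 / 2), ‖deriv g s‖ ≤ 2 * M := fun s hs => by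
    have := Complex.norm_deriv_le_of_forall_mem_sphere_norm_le (c := s) (R := 1 / 2) (by norm_num)
      hg.diffContOnCl (C := M) fun x hx => hM x ?_
    · linarith
    · rw [mem_closedBall_zero_iff] at hs ⊢
      rw [mem_sphere, dist_eq_norm] at hx
      linarith [norm_le_insert' x s]
  have h2 : ∀ s ∈ closedBall (0 : ℂ) (1 / 4), ‖deriv (deriv g) s‖ ≤ 8 * M := fun s hs => by
    have := Complex.norm_deriv_le_of_forall_mem_sphere_norm_le (c := s) (R := 1 / 4) (by norm_num)
      hg'.diffContOnCl (C := 2 * M) fun x hx => h1 x ?_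
    · linarith
    · rw [mem_closedBall_zero_iff] at hs ⊢
      rw [mem_sphere, dist_eq_norm] at hx
      linarith [norm_le_insert' x s]
  have h3 : ∀ s ∈ closedBall (0 : ℂ) (1 / 4), ‖deriv g s - deriv g 0‖ ≤ 8 * M * ‖s‖ :=
    fun s hs => by
    simpa using (convex_closedBall (0 : ℂ) (1 / 4)).norm_image_sub_le_of_norm_deriv_le
      (fun x _ => hg' x) h2 (mem_closedBall_self (by norm_num)) hs
  have hM0 : 0 ≤ M := (norm_nonneg _).trans (hM 0 (mem_closedBall_self zero_le_one))
  have h4 := (convex_closedBall (0 : ℂ) ‖t‖).norm_image_sub_le_of_norm_hasDerivWithin_le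
    (f := fun s => g s - s • deriv g 0) (f' := fun s => deriv g s - deriv g 0) (C := 8 * M * ‖t‖)
    (fun s _ => (((hg s).hasDerivAt).sub
      (by simpa using (hasDerivAt_id s).smul_const (deriv g 0))).hasDerivWithinAt)
    (fun s hs => by
      rw [mem_closedBall_zero_iff] at hs
      exact (h3 s (mem_closedBall_zero_iff.2 (hs.trans ht))).trans (by gcongr))
    (mem_closedBall_self (norm_nonneg t)) (mem_closedBall_zero_iff.2 le_rfl)
  simp only [zero_smul, sub_zero] at h4
  rw [sub_right_comm]
  exact h4.trans_eq (by ring)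

theorem exists_uniform_taylor [FiniteDimensional ℂ E] {Φ : ℂ → Z → E → E}
    (hΦ : DifferentiableOn ℂ (fun p : ℂ × Z × E => Φ p.1 p.2.1 p.2.2) (univ ×ˢ V ×ˢ univ))
    {X : Z → E → E} (hid : ∀ z ∈ V, ∀ w, Φ 0 z w = w)
    (hX : ∀ z ∈ V, ∀ w, HasDerivAt (fun t => Φ t z w) (X z w) 0)
    {C : Set Z} (hC : IsCompact C) (hCV : C ⊆ V) (R : ℝ) {ε : ℝ} (hε : 0 < ε) :
    ∃ T > 0, ∀ t : ℝ, 0 < t → t ≤ T → ∀ z ∈ C, ∀ w, ‖w‖ ≤ R →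
      ‖Φ t z w - w - (t : ℂ) • X z w‖ ≤ ε * t := by
  have : ProperSpace E := FiniteDimensional.proper ℂ E
  have : CompleteSpace E := FiniteDimensional.complete ℂ E
  obtain ⟨M, hM⟩ := ((isCompact_closedBall (0 : ℂ) 1).prod
    (hC.prod (isCompact_closedBall (0 : E) R))).exists_bound_of_continuousOn
      (hΦ.continuousOn.mono (prod_mono (subset_univ _) (prod_mono hCV (subset_univ _))))
  refine ⟨min (1 / 4) (ε / (8 * |M| + 1)), by positivity, fun t ht htT z hz w hw => ?_⟩
  have hg : Differentiable ℂ (fun t => Φ t z w) := fun t => by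
    have h1 : DifferentiableOn ℂ (fun t => Φ t z w) univ :=
      hΦ.comp (f := fun t : ℂ => (t, z, w)) (by fun_prop) fun t _ =>
        ⟨mem_univ _, hCV hz, mem_univ _⟩
    exact h1.differentiableAt univ_mem
  have hnt : ‖(t : ℂ)‖ = t := by rw [Complex.norm_real, Real.norm_of_nonneg ht.le]
  have h1 := norm_sub_sub_smul_le_sq hg (M := M) (fun s hs => hM (s, z, w)
    ⟨hs, hz, mem_closedBall_zero_iff.2 hw⟩) (t := t)
    (by rw [hnt]; exact htT.trans (min_le_left _ _))
  rw [hid z (hCV hz), (hX z (hCV hz) w).deriv, hnt] at h1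
  refine h1.trans ?_
  have h2 : t * (8 * |M| + 1) ≤ ε := by
    rw [← le_div_iff₀ (by positivity)]
    exact htT.trans (min_le_right _ _)
  nlinarith [le_abs_self M]

theorem Integrates.exists_uniform_step [FiniteDimensional ℂ E] (hV : IsOpen V) {X : Z → E → E}
    (hX : Integrates V X) {C : Set Z} (hC : IsCompact C) (hCV : C ⊆ V) (R : ℝ) {ε : ℝ}
    (hε : 0 < ε) :
    ∃ T > 0, ∀ t : ℝ, 0 < t → t ≤ T → ∃ φ ψ : Z → E → E,
      DifferentiableOn ℂ (fun p : Z × E => φ p.1 p.2) (V ×ˢ univ) ∧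
      (∀ z ∈ V, (∀ w, ψ z (φ z w) = w) ∧ φ z 0 = 0) ∧
      ∀ z ∈ C, ∀ w, ‖w‖ ≤ R → ‖φ z w - w - (t : ℂ) • X z w‖ ≤ ε * t ∧
        ‖ψ z w - w + (t : ℂ) • X z w‖ ≤ ε * t := by
  obtain ⟨Φ, Ψ, hΦ, hΨ, h⟩ := hX
  have hid : ∀ z ∈ V, ∀ w, Ψ 0 z w = w := fun z hz w => by
    rw [← (h z hz).2.2.2.1 (Ψ 0 z w), (h z hz).2.1]
  have hd : ∀ z ∈ V, ∀ w, HasDerivAt (fun t => Ψ t z w) (-X z w) 0 := fun z hz w => by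
    have h1 : DifferentiableOn ℂ (fun t => Ψ t z w) univ :=
      hΨ.comp (f := fun t : ℂ => (t, z, w)) (by fun_prop) fun t _ =>
        ⟨mem_univ _, hz, mem_univ _⟩
    have h2 := (h1.differentiableAt (x := 0) univ_mem).hasDerivAt
    have h3 := hasDerivAt_comp_flow hV hΦ hz (h z hz).2.2.2.1 h2
      ((h z hz).2.2.2.2 _)
    simp only [(h z hz).2.1, hid z hz] at h3
    have h4 := h3.unique (hasDerivAt_const 0 w)
    rw [← eq_neg_of_add_eq_zero_right h4]
    exact h2
  obtain ⟨T, hT, h1⟩ := exists_uniform_taylor hΦ (fun z hz => (h z hz).2.2.2.1)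
    (fun z hz => (h z hz).2.2.2.2) hC hCV R hε
  obtain ⟨T', hT', h2⟩ := exists_uniform_taylor hΨ hid hd hC hCV R hε
  refine ⟨min T T', lt_min hT hT', fun t ht htT => ⟨Φ t, Ψ t, ?_, fun z hz =>
    ⟨(h z hz).1 t, (h z hz).2.2.1 t⟩, fun z hz w hw =>
    ⟨h1 t ht (htT.trans (min_le_left _ _)) z hz w hw, ?_⟩⟩⟩
  · exact hΦ.comp (f := fun p : Z × E => ((t : ℂ), p.1, p.2)) (by fun_prop)
      fun p hp => ⟨mem_univ _, hp.1, mem_univ _⟩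
  · simpa using h2 t ht (htT.trans (min_le_right _ _)) z hz w hw

theorem norm_iterate_sub_two_smul_le {φ : E → E} {R r ε t : ℝ} {m : ℕ} (hε : 0 ≤ ε) (ht : 0 ≤ t)
    (hφ : ∀ w, ‖w‖ ≤ R → ‖φ w - (1 + t : ℂ) • w‖ ≤ 2 * ε * t) (hm : (1 + t) ^ m = 2)
    (hmt : m * t ≤ 1) (hR : 2 * r + 4 * ε ≤ R) {u : E} (hu : ‖u‖ ≤ r) :
    ‖φ^[m] u - (2 : ℂ) • u‖ ≤ 4 * ε := by
  have hn : ‖(1 + t : ℂ)‖ = 1 + t := by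
    rw [← Complex.ofReal_one, ← Complex.ofReal_add, Complex.norm_real,
      Real.norm_of_nonneg (by linarith)]
  have hpow : ∀ k ≤ m, (1 + t) ^ k ≤ 2 := fun k hk =>
    (pow_le_pow_right₀ (by linarith) hk).trans_eq hm
  have hbound : ∀ k ≤ m, (1 + t) ^ k * (2 * ε * t * k) ≤ 4 * ε := fun k hk => by
    have h1 : k * t ≤ 1 := le_trans (by gcongr) hmt
    calc (1 + t) ^ k * (2 * ε * t * k) ≤ 2 * (2 * ε * t * k) := by gcongr; exact hpow k hk
      _ = 4 * ε * (k * t) := by ring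
      _ ≤ 4 * ε := mul_le_of_le_one_right (by linarith) h1
  have key : ∀ k ≤ m, ‖φ^[k] u - (1 + t : ℂ) ^ k • u‖ ≤ (1 + t) ^ k * (2 * ε * t * k) := by
    intro k
    induction k with
    | zero => intro _; simp
    | succ k ih =>
      intro hk
      have h1 := ih (by omega)
      have h2 : ‖φ^[k] u‖ ≤ R := by
        have h3 := norm_le_insert' (φ^[k] u) ((1 + t : ℂ) ^ k • u)
        rw [norm_smul, norm_pow, hn] at h3
        have h4 := hbound k (by omega)
        have h5 : (1 + t) ^ k * ‖u‖ ≤ 2 * r := by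
          have := hpow k (by omega)
          gcongr
        linarith
      rw [Function.iterate_succ_apply']
      have h3 : φ (φ^[k] u) - (1 + t : ℂ) ^ (k + 1) • u =
          (φ (φ^[k] u) - (1 + t : ℂ) • φ^[k] u) +
            (1 + t : ℂ) • (φ^[k] u - (1 + t : ℂ) ^ k • u) := by
        rw [smul_sub, smul_smul, pow_succ']; abel
      rw [h3]
      refine (norm_add_le _ _).trans ?_
      rw [norm_smul, hn]
      have h4 : 1 ≤ (1 + t) ^ (k + 1) := one_le_pow₀ (by linarith)
      have h5 : (1 + t) * ‖φ^[k] u - (1 + t : ℂ) ^ k • u‖ ≤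
        (1 + t) * ((1 + t) ^ k * (2 * ε * t * k)) := by gcongr
      have h6 : 2 * ε * t ≤ 2 * ε * t * (1 + t) ^ (k + 1) :=
        le_mul_of_one_le_right (by positivity) h4
      have h7 := hφ _ h2
      push_cast
      calc _ ≤ 2 * ε * t * (1 + t) ^ (k + 1) + (1 + t) * ((1 + t) ^ k * (2 * ε * t * k)) :=
            add_le_add (h7.trans h6) h5
        _ = _ := by ring
  have h1 := (key m le_rfl).trans (hbound m le_rfl)
  rwa [show (1 + t : ℂ) ^ m = 2 by exact_mod_cast congrArg (fun x : ℝ => (x : ℂ)) hm] at h1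

theorem norm_iterate_sub_le {E : Type*} [NormedAddCommGroup E] {ψ : E → E} {ε δ t : ℝ} {m : ℕ}
    {b : E} (ht : 0 ≤ t) (hε : 0 ≤ ε)
    (hψ : ∀ w, ‖w - b‖ ≤ 2 * δ → ‖ψ w - w‖ ≤ 2 * ε * t) (hmt : m * t ≤ 1) (hεδ : 2 * ε ≤ δ)
    {w : E} (hw : ‖w - b‖ ≤ δ) : ‖ψ^[m] w - w‖ ≤ 2 * ε := by
  have hbound : ∀ k ≤ m, 2 * ε * t * k ≤ 2 * ε := fun k hk => by
    have h1 : k * t ≤ 1 := le_trans (by gcongr) hmt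
    calc 2 * ε * t * k = 2 * ε * (k * t) := by ring
      _ ≤ 2 * ε := mul_le_of_le_one_right (by linarith) h1
  have key : ∀ k ≤ m, ‖ψ^[k] w - w‖ ≤ 2 * ε * t * k := by
    intro k
    induction k with
    | zero => intro _; simp
    | succ k ih =>
      intro hk
      have h1 := ih (by omega)
      have h2 : ‖ψ^[k] w - b‖ ≤ 2 * δ := by
        linarith [norm_sub_le_norm_sub_add_norm_sub (ψ^[k] w) w b, hbound k (by omega)]
      rw [Function.iterate_succ_apply']
      push_cast
      linarith [norm_sub_le_norm_sub_add_norm_sub (ψ (ψ^[k] w)) (ψ^[k] w) w, hψ _ h2]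
  exact (key m le_rfl).trans (hbound m le_rfl)

theorem differentiableOn_iterate_fibre {φ : Z → E → E}
    (hφ : DifferentiableOn ℂ (fun p : Z × E => φ p.1 p.2) (V ×ˢ univ)) (m : ℕ) :
    DifferentiableOn ℂ (fun p : Z × E => (φ p.1)^[m] p.2) (V ×ˢ univ) := by
  induction m with
  | zero => exact differentiableOn_snd
  | succ m ih =>
    simp only [Function.iterate_succ_apply']
    exact hφ.comp (differentiableOn_fst.prodMk ih) fun p hp => ⟨hp.1, mem_univ _⟩

/-- A vector field close to the radial field near the origin and small near `B z` yields an
automorphism close to `2 • id` near the origin with inverse close to the identity near `B z`. -/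
theorem Integrates.exists_automorphism [FiniteDimensional ℂ E] (hV : IsOpen V) {X : Z → E → E}
    (hX : Integrates V X) {C : Set Z} (hC : IsCompact C) (hCV : C ⊆ V) {B : Z → Set E}
    {R r ε δ D : ℝ} (hε : 0 < ε) (hR : 2 * r + 4 * ε ≤ R) (hεδ : 2 * ε ≤ δ)
    (hD : ∀ z ∈ C, ∀ b ∈ B z, ‖b‖ ≤ D)
    (hX1 : ∀ z ∈ C, ∀ w, ‖w‖ ≤ R → ‖X z w - w‖ ≤ ε)
    (hX0 : ∀ z ∈ C, ∀ b ∈ B z, ∀ w, ‖w - b‖ ≤ 2 * δ → ‖X z w‖ ≤ ε) :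
    ∃ θ Φ : Z → E → E, DifferentiableOn ℂ (fun p : Z × E => θ p.1 p.2) (V ×ˢ univ) ∧
      (∀ z ∈ V, (∀ w, Φ z (θ z w) = w) ∧ θ z 0 = 0) ∧
      ∀ z ∈ C, (∀ u, ‖u‖ ≤ r → ‖θ z u - (2 : ℂ) • u‖ ≤ 4 * ε) ∧
        ∀ b ∈ B z, ∀ w, ‖w - b‖ ≤ δ → ‖Φ z w - w‖ ≤ 2 * ε := by
  obtain ⟨T, hT, h⟩ := hX.exists_uniform_step hV hC hCV (max R (D + 2 * δ)) hε
  obtain ⟨m, hm⟩ := exists_nat_one_div_lt hT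
  set t : ℝ := (2 : ℝ) ^ (((m + 1 : ℕ) : ℝ)⁻¹) - 1 with ht
  have ht0 : 0 < t := by
    rw [ht, sub_pos]
    exact Real.one_lt_rpow (by norm_num) (by positivity)
  have htm : (1 + t) ^ (m + 1) = 2 := by
    rw [ht, add_sub_cancel, Real.rpow_inv_natCast_pow (by norm_num) (Nat.succ_ne_zero m)]
  have hmt : ((m + 1 : ℕ) : ℝ) * t ≤ 1 := by
    have := one_add_mul_le_pow (a := t) (by linarith) (m + 1)
    rw [htm] at this
    linarith
  have htT : t ≤ T := by
    refine le_trans ?_ hm.le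
    rw [le_div_iff₀ (by positivity)]
    push_cast at hmt
    linarith
  obtain ⟨φ, ψ, hφ, hinv, hest⟩ := h t ht0 htT
  have hnt : ‖(t : ℂ)‖ = t := by rw [Complex.norm_real, Real.norm_of_nonneg ht0.le]
  refine ⟨fun z => (φ z)^[m + 1], fun z => (ψ z)^[m + 1],
    differentiableOn_iterate_fibre hφ (m + 1), fun z hz => ⟨?_, ?_⟩, fun z hz => ⟨?_, ?_⟩⟩
  · exact Function.LeftInverse.iterate (hinv z hz).1 (m + 1)
  · exact Function.iterate_fixed (hinv z hz).2 (m + 1)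
  · intro u hu
    refine norm_iterate_sub_two_smul_le hε.le ht0.le (fun w hw => ?_) htm hmt hR hu
    have h1 := (hest z hz w (hw.trans (le_max_left _ _))).1
    have h2 := hX1 z hz w hw
    rw [show φ z w - (1 + t : ℂ) • w = (φ z w - w - (t : ℂ) • X z w) + (t : ℂ) • (X z w - w) by
      rw [add_smul, one_smul, smul_sub]; abel]
    refine (norm_add_le _ _).trans ?_
    rw [norm_smul, hnt]
    nlinarith
  · intro b hb w hw
    refine norm_iterate_sub_le ht0.le hε.le (fun w hw => ?_) hmt hεδ hw
    have h3 : ‖w‖ ≤ D + 2 * δ := by linarith [norm_le_insert' w b, hD z hz b hb]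
    have h1 := (hest z hz w (h3.trans (le_max_right _ _))).2
    have h2 := hX0 z hz b hb w hw
    rw [show ψ z w - w = (ψ z w - w + (t : ℂ) • X z w) - (t : ℂ) • X z w by abel]
    refine (norm_sub_le _ _).trans ?_
    rw [norm_smul, hnt]
    nlinarith

end Stage

section Assembly
open Filter Topology

/-- The cubic polynomial with superattracting fixed points at `0` and `1`. -/
def smoothStep {A : Type*} [CommRing A] (x : A) : A := x ^ 2 * (3 - 2 * x)

theorem norm_smoothStep_iterate_le {x : ℂ} (hx : ‖x‖ ≤ 1 / 8) (M : ℕ) :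
    ‖smoothStep^[M] x‖ ≤ (1 / 2) ^ M := by
  have hstep : ∀ y : ℂ, ‖y‖ ≤ 1 / 8 → ‖smoothStep y‖ ≤ 1 / 2 * ‖y‖ := fun y hy => by
    have h1 : ‖3 - 2 * y‖ ≤ 4 := by
      refine (norm_sub_le _ _).trans ?_
      rw [norm_mul]
      simp only [Complex.norm_ofNat]
      linarith
    rw [smoothStep, norm_mul, norm_pow]
    nlinarith [norm_nonneg y, norm_nonneg (3 - 2 * y), mul_nonneg (norm_nonneg y) (norm_nonneg y)]
  have key : ∀ M, ‖smoothStep^[M] x‖ ≤ (1 / 2) ^ M * (1 / 8) := fun M => by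
    induction M with
    | zero => simpa using hx
    | succ M ih =>
      rw [Function.iterate_succ_apply']
      have h1 : ((1 : ℝ) / 2) ^ M ≤ 1 := pow_le_one₀ (by norm_num) (by norm_num)
      refine (hstep _ (by linarith)).trans ?_
      rw [pow_succ]
      linarith
  linarith [key M, pow_pos (by norm_num : (0 : ℝ) < 1 / 2) M]

theorem one_sub_smoothStep_iterate (x : ℂ) (M : ℕ) :
    1 - smoothStep^[M] x = smoothStep^[M] (1 - x) := by
  induction M with
  | zero => rfl
  | succ M ih =>
    rw [Function.iterate_succ_apply', Function.iterate_succ_apply', ← ih, smoothStep, smoothStep]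
    ring

theorem smoothStep_iterate_mem {Z E : Type*} {S : Subalgebra ℂ (Z → E → ℂ)} {h : Z → E → ℂ}
    (hh : h ∈ S) (M : ℕ) :
    (fun z w => smoothStep^[M] (h z w)) ∈ S := by
  induction M with
  | zero => exact hh
  | succ M ih =>
    simp only [Function.iterate_succ_apply']
    exact S.mul_mem (S.pow_mem ih 2)
      (S.sub_mem (S.algebraMap_mem 3) (S.mul_mem (S.algebraMap_mem 2) ih))

variable {Z E : Type*} [NormedAddCommGroup Z] [NormedSpace ℂ Z]
  [NormedAddCommGroup E] [NormedSpace ℂ E]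

theorem norm_sub_sub_two_smul_le {g : E → E} (hg : Differentiable ℂ g) {r ε : ℝ} (hr : 0 < r)
    (hε : ∀ u, ‖u‖ ≤ 2 * r → ‖g u - (2 : ℂ) • u‖ ≤ ε) {u v : E} (hu : u ∈ ball (0 : E) r)
    (hv : v ∈ ball (0 : E) r) : ‖g u - g v - (2 : ℂ) • (u - v)‖ ≤ 2 * ε / r * ‖u - v‖ := by
  have hd : Differentiable ℂ fun u => g u - (2 : ℂ) • u := by fun_prop
  have h1 := (convex_ball (0 : E) r).norm_image_sub_le_of_norm_fderiv_le (𝕜 := ℂ)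
    (f := fun u => g u - (2 : ℂ) • u) (fun x _ => hd x) (fun x hx =>
      norm_fderiv_le_of_forall_mem_ball hr hd.differentiableOn fun y hy => hε y (by
        rw [mem_ball_zero_iff] at hx
        rw [mem_ball, dist_eq_norm] at hy
        linarith [norm_le_insert' y x])) hv hu
  rw [smul_sub, sub_sub_sub_comm]
  exact h1

/-- If a fibrewise polynomial separates the origin from `B z`, then there is a holomorphic family
of injective maps of `E` into the complements of `B z`. -/
theorem exists_injective_of_separating [FiniteDimensional ℂ E] (hE : 2 ≤ Module.finrank ℂ E)
    {V : Set Z} (hV : IsOpen V) {h : Z → E → ℂ} (hh : h ∈ fibrePolynomials E V) {C : Set Z}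
    (hC : IsCompact C) (hCV : C ⊆ V) {B : Z → Set E} {r δ D : ℝ} (hr : 0 < r) (hδ : 0 < δ)
    (hD : ∀ z ∈ C, ∀ b ∈ B z, ‖b‖ ≤ D)
    (h1 : ∀ z ∈ C, ∀ w, ‖w‖ ≤ 6 * r → ‖1 - h z w‖ ≤ 1 / 8)
    (h0 : ∀ z ∈ C, ∀ b ∈ B z, ∀ w, ‖w - b‖ ≤ 2 * δ → ‖h z w‖ ≤ 1 / 8) :
    ∃ F : Z × E → E, DifferentiableOn ℂ F (interior C ×ˢ univ) ∧ ∀ z ∈ interior C, F (z, 0) = 0 ∧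
      Function.Injective (fun ζ => F (z, ζ)) ∧ ∀ ζ, F (z, ζ) ∉ B z := by
  have : CompleteSpace E := FiniteDimensional.complete ℂ E
  have hm : 0 < min (r / 8) (δ / 4) := by positivity
  have hm1 := min_le_left (r / 8) (δ / 4)
  have hm2 := min_le_right (r / 8) (δ / 4)
  set ε : ℕ → ℝ := fun k => min (r / 8) (δ / 4) * (1 / 2) ^ (k + 2) with hε
  have hε0 : ∀ k, 0 < ε k := fun k => by positivity
  have hεm : ∀ k, ε k ≤ min (r / 8) (δ / 4) := fun k =>
    mul_le_of_le_one_right hm.le (pow_le_one₀ (by norm_num) (by norm_num))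
  have hstage : ∀ k, ∃ θ Φ : Z → E → E,
      DifferentiableOn ℂ (fun p : Z × E => θ p.1 p.2) (V ×ˢ univ) ∧
      (∀ z ∈ V, (∀ w, Φ z (θ z w) = w) ∧ θ z 0 = 0) ∧
      ∀ z ∈ C, (∀ u, ‖u‖ ≤ 2 * r → ‖θ z u - (2 : ℂ) • u‖ ≤ 4 * ε k) ∧
        ∀ b ∈ B z, ∀ w, ‖w - b‖ ≤ δ → ‖Φ z w - w‖ ≤ 2 * ε k := by
    intro k
    set S := max (6 * r) (D + 2 * δ) with hS
    have hS0 : 0 < S := lt_max_of_lt_left (by positivity)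
    obtain ⟨M, hM⟩ := exists_pow_lt_of_lt_one (div_pos (hε0 k) hS0)
      (by norm_num : (1 / 2 : ℝ) < 1)
    rw [lt_div_iff₀ hS0] at hM
    have hX : Integrates V fun z w => smoothStep^[M] (h z w) • w := by
      simpa using smul_id_mem_integrableFields (hV := hV) hE (smoothStep_iterate_mem hh M) 1
        (differentiableOn_const 1)
    have hsmall : ∀ (y : ℂ) (w : E), ‖y‖ ≤ (1 / 2) ^ M → ‖w‖ ≤ S → ‖y • w‖ ≤ ε k := by
      intro y w hy hw
      rw [norm_smul]
      exact (mul_le_mul hy hw (norm_nonneg _) (by positivity)).trans hM.le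
    refine hX.exists_automorphism hV hC hCV (R := 6 * r) (hε0 k) (by linarith [hεm k])
      (by linarith [hεm k]) hD (fun z hz w hw => ?_) fun z hz b hb w hw => ?_
    · rw [← norm_neg, neg_sub, ← one_smul ℂ w, smul_smul, mul_one, ← sub_smul,
        one_sub_smoothStep_iterate]
      exact hsmall _ _ (norm_smoothStep_iterate_le (by simpa using h1 z hz w hw) M)
        (hw.trans (le_max_left _ _))
    · refine hsmall _ _ (norm_smoothStep_iterate_le (h0 z hz b hb w hw) M)
        (le_trans ?_ (le_max_right _ _))
      linarith [norm_le_insert' w b, hD z hz b hb]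
  choose θ Φ hθ hinv hest using hstage
  have hCV' : interior C ⊆ V := interior_subset.trans hCV
  refine exists_injective_limit (θ := θ) (Φ := Φ) (r := r) (δ := δ) isOpen_interior
    (fun k => (hθ k).mono (prod_mono_left hCV')) (fun k z hz => (hinv k z (hCV' hz)).1)
    (fun k z hz => (hinv k z (hCV' hz)).2) hr hδ.le ?_ ?_ ?_
  · intro k z hz u hu v hv
    have hd : Differentiable ℂ (θ k z) := by
      have : DifferentiableOn ℂ (θ k z) univ := (hθ k).comp (f := fun w : E => (z, w))
        (by fun_prop) fun w _ => ⟨hCV' hz, mem_univ _⟩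
      exact differentiableOn_univ.1 this
    refine (norm_sub_sub_two_smul_le hd hr (hest k z (interior_subset hz)).1 hu hv).trans ?_
    gcongr
    rw [div_le_iff₀ hr]
    have : (0 : ℝ) < (1 / 2) ^ (k + 2) := by positivity
    simp only [hε]
    nlinarith
  · intro k z hz b hb w hw
    refine ((hest k z (interior_subset hz)).2 b hb w hw).trans ?_
    have : (0 : ℝ) < (1 / 2) ^ (k + 1) := by positivity
    simp only [hε]
    rw [pow_succ _ (k + 1)]
    nlinarith
  · intro z hz b hb w hw
    by_contra! hlt
    have h2 := h1 z (interior_subset hz) w (by linarith)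
    have h3 := h0 z (interior_subset hz) b hb w (by linarith)
    have h4 := norm_le_insert' (1 : ℂ) (h z w)
    rw [norm_one] at h4
    linarith

end Assembly

section Euclidean
open Filter Topology

variable {n N : ℕ}

theorem IsPolyConvex.mem_image_ofLp {K : Set (EuclideanSpace ℂ (Fin n))} (hK : IsPolyConvex K)
    (z : Fin n → ℂ) (hz : ∀ p : MvPolynomial (Fin n) ℂ,
      ‖eval z p‖ ≤ sSup ((fun w => ‖eval w p‖) '' (WithLp.ofLp '' K))) :
    z ∈ WithLp.ofLp '' K := by
  refine ⟨WithLp.toLp 2 z, ?_, rfl⟩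
  rw [← show polyHull K = K from hK]
  intro p
  have := hz p
  rwa [image_image] at this

theorem continuous_ofLp_euclideanSpace :
    Continuous (WithLp.ofLp : EuclideanSpace ℂ (Fin n) → Fin n → ℂ) :=
  (EuclideanSpace.equiv (Fin n) ℂ).continuous

theorem eval_add_mem_fibrePolynomials {U : Set (EuclideanSpace ℂ (Fin N))}
    {f : EuclideanSpace ℂ (Fin N) → EuclideanSpace ℂ (Fin n)} (hf : DifferentiableOn ℂ f U)
    (p : MvPolynomial (Fin N ⊕ Fin n) ℂ) :
    (fun z w => eval (Sum.elim (fun i => z i) fun j => (w + f z) j) p) ∈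
      fibrePolynomials (EuclideanSpace ℂ (Fin n)) U := by
  have hbase : ∀ c : EuclideanSpace ℂ (Fin N) → ℂ, DifferentiableOn ℂ c U →
      (fun z _ => c z) ∈ fibrePolynomials (EuclideanSpace ℂ (Fin n)) U := fun c hc =>
    Algebra.subset_adjoin (Or.inl ⟨c, hc, rfl⟩)
  induction p using MvPolynomial.induction_on with
  | C a => simpa using hbase (fun _ => a) (differentiableOn_const a)
  | add p q hp hq =>
    simp only [map_add]
    exact Subalgebra.add_mem _ hp hq
  | mul_X p i hp =>
    simp only [map_mul, eval_X]
    refine Subalgebra.mul_mem _ hp ?_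
    rcases i with i | j
    · exact hbase (fun z => z i) (EuclideanSpace.proj (𝕜 := ℂ) i).differentiable.differentiableOn
    · have hfj : DifferentiableOn ℂ (fun z => f z j) U :=
        (EuclideanSpace.proj (𝕜 := ℂ) j).differentiable.comp_differentiableOn hf
      exact Subalgebra.add_mem _
        (Algebra.subset_adjoin (Or.inr ⟨EuclideanSpace.proj (𝕜 := ℂ) j, rfl⟩)) (hbase _ hfj)

theorem exists_sum_near_one_of_polyConvex {K : Set (EuclideanSpace ℂ (Fin n))} (hKc : IsCompact K)
    (hKpc : IsPolyConvex K) {L : Set (EuclideanSpace ℂ (Fin N))} (hLc : IsCompact L)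
    (hLpc : IsPolyConvex L) {U : Set (EuclideanSpace ℂ (Fin N))} (hU : IsOpen U) (hLU : L ⊆ U)
    {f : EuclideanSpace ℂ (Fin N) → EuclideanSpace ℂ (Fin n)} (hf : DifferentiableOn ℂ f U)
    (hfK : ∀ z ∈ L, f z ∉ K) {ρ : ℝ} (hρ : 0 < ρ) :
    ∃ G : Fin n → MvPolynomial (Fin N ⊕ Fin n) ℂ, ∀ z ∈ L, ∀ w ∈ K,
      ‖1 - ∑ j, eval (Sum.elim (fun i => z i) fun j => w j) (G j) * (w j - f z j)‖ ≤ ρ := by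
  have hfhol : ∀ j, HolNear (fun z : Fin N → ℂ => f (WithLp.toLp 2 z) j) (WithLp.ofLp '' L) := by
    rintro j _ ⟨z, hz, rfl⟩
    have ht : Tendsto (fun y : Fin N → ℂ => WithLp.toLp 2 y) (𝓝 z.ofLp) (𝓝 z) :=
      (EuclideanSpace.equiv (Fin N) ℂ).symm.continuous.tendsto _
    filter_upwards [ht (hU.mem_nhds (hLU hz))] with y hy
    have h1 : DifferentiableAt ℂ f (WithLp.toLp 2 y) := hf.differentiableAt (hU.mem_nhds hy)
    have h2 : DifferentiableAt ℂ (fun y : Fin N → ℂ => f (WithLp.toLp 2 y)) y :=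
      h1.comp y (EuclideanSpace.equiv (Fin N) ℂ).symm.differentiable.differentiableAt
    exact (EuclideanSpace.proj (𝕜 := ℂ) j).differentiableAt.comp y h2
  have hfK₁ : ∀ z ∈ WithLp.ofLp '' L, (fun j => f (WithLp.toLp 2 z) j) ∉ WithLp.ofLp '' K := by
    rintro _ ⟨z, hz, rfl⟩ ⟨w, hw, hwz⟩
    exact hfK z hz (WithLp.ofLp_injective 2 hwz ▸ hw)
  obtain ⟨G, hG⟩ := exists_approx_one (hLc.image continuous_ofLp_euclideanSpace)
    hLpc.mem_image_ofLp (hKc.image continuous_ofLp_euclideanSpace) hKpc.mem_image_ofLp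
    hfhol hfK₁ hρ
  exact ⟨G, fun z hz w hw => hG _ (mem_image_of_mem _ hz) _ (mem_image_of_mem _ hw)⟩

end Euclidean

/-- Main theorem: let `n > 1`, `K ⊆ ℂⁿ` compact polynomially convex, `L ⊆ ℂᴺ` compact
polynomially convex, and `f` holomorphic on a neighbourhood `U` of `L` with `f(L) ∩ K = ∅`.
Then there exist an open neighbourhood `V ⊆ U` of `L` and a holomorphic map
`F : V × ℂⁿ → ℂⁿ` such that for every `z ∈ V`: `F(z, 0) = f(z)`, the map `ζ ↦ F(z, ζ)` is
injective, and `F({z} × ℂⁿ) ∩ K = ∅`. -/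
theorem stmt_9 (n N : ℕ) (hn : 1 < n) (K : Set (EuclideanSpace ℂ (Fin n)))
    (hKc : IsCompact K) (hKpc : IsPolyConvex K)
    (L : Set (EuclideanSpace ℂ (Fin N))) (hLc : IsCompact L) (hLpc : IsPolyConvex L)
    (U : Set (EuclideanSpace ℂ (Fin N))) (hU : IsOpen U) (hLU : L ⊆ U)
    (f : EuclideanSpace ℂ (Fin N) → EuclideanSpace ℂ (Fin n))
    (hf : DifferentiableOn ℂ f U) (hfK : ∀ z ∈ L, f z ∉ K) :
    ∃ V : Set (EuclideanSpace ℂ (Fin N)), IsOpen V ∧ L ⊆ V ∧ V ⊆ U ∧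
      ∃ F : EuclideanSpace ℂ (Fin N) × EuclideanSpace ℂ (Fin n) → EuclideanSpace ℂ (Fin n),
        DifferentiableOn ℂ F (V ×ˢ univ) ∧
        ∀ z ∈ V, F (z, 0) = f z ∧
          Function.Injective (fun ζ => F (z, ζ)) ∧
          ∀ ζ : EuclideanSpace ℂ (Fin n), F (z, ζ) ∉ K := by
  obtain ⟨G, hG⟩ := exists_sum_near_one_of_polyConvex hKc hKpc hLc hLpc hU hLU hf hfK
    (ρ := 1 / 16) (by norm_num)
  set h₀ : EuclideanSpace ℂ (Fin N) × EuclideanSpace ℂ (Fin n) → ℂ := fun p =>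
    1 - ∑ j, eval (Sum.elim (fun i => p.1 i) fun j => p.2 j) (G j) * (p.2 j - f p.1 j) with hh₀
  set h : EuclideanSpace ℂ (Fin N) → EuclideanSpace ℂ (Fin n) → ℂ := fun z w =>
    h₀ (z, w + f z) with hh
  have hfc : ContinuousOn (fun p : EuclideanSpace ℂ (Fin N) × EuclideanSpace ℂ (Fin n) => f p.1)
      (U ×ˢ univ) := hf.continuousOn.comp continuousOn_fst fun p hp => hp.1
  have hh₀c : ContinuousOn h₀ (U ×ˢ univ) := by
    refine continuousOn_const.sub (continuousOn_finsetSum _ fun j _ => ContinuousOn.mul ?_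
      (ContinuousOn.sub ?_ ?_))
    · refine ((MvPolynomial.continuous_eval (G j)).comp
        (continuous_pi fun i => ?_)).continuousOn
      rcases i with i | i
      · exact (EuclideanSpace.proj (𝕜 := ℂ) i).continuous.comp continuous_fst
      · exact (EuclideanSpace.proj (𝕜 := ℂ) i).continuous.comp continuous_snd
    · exact ((EuclideanSpace.proj (𝕜 := ℂ) j).continuous.comp continuous_snd).continuousOn
    · exact (EuclideanSpace.proj (𝕜 := ℂ) j).continuous.comp_continuousOn hfc
  have hhc : ContinuousOn (fun p : EuclideanSpace ℂ (Fin N) × EuclideanSpace ℂ (Fin n) =>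
      h p.1 p.2) (U ×ˢ univ) :=
    hh₀c.comp (continuousOn_fst.prodMk (continuousOn_snd.add hfc)) fun p hp => ⟨hp.1, mem_univ _⟩
  have hUo : IsOpen (U ×ˢ (univ : Set (EuclideanSpace ℂ (Fin n)))) := hU.prod isOpen_univ
  have hhmem : h ∈ fibrePolynomials (EuclideanSpace ℂ (Fin n)) U := by
    have : h = 1 - ∑ j, (fun z w => eval (Sum.elim (fun i => z i) fun j => (w + f z) j) (G j)) *
        (fun _ w => w j) := by
      funext z w
      simp [hh, hh₀]
    rw [this]
    exact Subalgebra.sub_mem _ (Subalgebra.one_mem _) (Subalgebra.sum_mem _ fun j _ =>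
      Subalgebra.mul_mem _ (eval_add_mem_fibrePolynomials hf (G j))
        (Algebra.subset_adjoin (Or.inr ⟨EuclideanSpace.proj (𝕜 := ℂ) j, rfl⟩)))
  obtain ⟨u₁, v₁, hu₁, hv₁, hLu₁, h0v₁, huv₁⟩ := generalized_tube_lemma hLc
    (isCompact_singleton (x := (0 : EuclideanSpace ℂ (Fin n))))
    (((continuousOn_const (c := (1 : ℂ))).sub hhc).norm.isOpen_inter_preimage hUo
      (isOpen_Iio (a := (1 / 8 : ℝ))))
    (by
      rintro ⟨z, w⟩ ⟨hz, rfl : w = 0⟩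
      exact ⟨⟨hLU hz, mem_univ _⟩, by simp [hh, hh₀]⟩)
  obtain ⟨u₀, v₀, hu₀, hv₀, hLu₀, hKv₀, huv₀⟩ := generalized_tube_lemma hLc hKc
    (hh₀c.norm.isOpen_inter_preimage hUo (isOpen_Iio (a := (1 / 8 : ℝ))))
    (by
      rintro ⟨z, w⟩ ⟨hz, hw⟩
      exact ⟨⟨hLU hz, mem_univ _⟩, (hG z hz w hw).trans_lt (by norm_num)⟩)
  obtain ⟨r, hr, hrv⟩ := nhds_basis_closedBall.mem_iff.1 (hv₁.mem_nhds (h0v₁ rfl))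
  obtain ⟨δ, hδ, hδv⟩ := hKc.exists_cthickening_subset_open hv₀ hKv₀
  obtain ⟨C, hC, hLC, hCu⟩ := exists_compact_between hLc ((hu₀.inter hu₁).inter hU)
    fun z hz => ⟨⟨hLu₀ hz, hLu₁ hz⟩, hLU hz⟩
  have hCU : C ⊆ U := fun z hz => (hCu hz).2
  obtain ⟨D₁, hD₁⟩ := hKc.exists_bound_of_continuousOn continuousOn_id
  obtain ⟨D₂, hD₂⟩ := hC.exists_bound_of_continuousOn (hf.continuousOn.mono hCU)
  obtain ⟨F, hF, hFz⟩ := exists_injective_of_separating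
    (by simpa using Nat.succ_le_of_lt hn) hU hhmem hC hCU
    (B := fun z => {b | b + f z ∈ K}) (r := r / 6) (δ := δ / 2) (D := D₁ + D₂) (by positivity)
    (by positivity)
    (fun z hz b hb => by
      have h1 := hD₁ _ hb
      have h2 := norm_sub_le (b + f z) (f z)
      rw [add_sub_cancel_right] at h2
      exact h2.trans (add_le_add h1 (hD₂ z hz)))
    (fun z hz w hw => (huv₁ (show (z, w) ∈ u₁ ×ˢ v₁ from ⟨(hCu hz).1.2, hrv (by
      rw [mem_closedBall_zero_iff]
      linarith)⟩)).2.le)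
    (fun z hz b hb w hw => (huv₀ (show (z, w + f z) ∈ u₀ ×ˢ v₀ from ⟨(hCu hz).1.1,
      hδv (mem_cthickening_of_dist_le _ (b + f z) _ _ hb (by
        rw [dist_eq_norm, add_sub_add_right_eq_sub]
        linarith))⟩)).2.le)
  have hVU : interior C ⊆ U := interior_subset.trans hCU
  refine ⟨interior C, isOpen_interior, hLC, hVU, fun p => F p + f p.1,
    hF.add (hf.comp differentiableOn_fst fun p hp => hVU hp.1), fun z hz => ?_⟩
  obtain ⟨h0, hinj, hB⟩ := hFz z hz
  exact ⟨by simp [h0], fun a b hab => hinj (add_right_cancel hab), fun ζ => hB ζ⟩
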